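/- Let M = {F = 0} be a germ of an irreducible singular real-analytic Levi-flat hypersurface at 0 ∈ ℂⁿ, n ≥ 2. Assume that the algebraic dimension of Sing(M) is at most 2n − 4 (i.e., Sing(M_ℂ) has complex dimension at most 2n − 4), that Sing(L_ℂ) has complex codimension at least 2 in M*_ℂ, and that L_ℂ has a non-constant holomorphic first integral. Then there exists a non-constant germ of holomorphic function f at 0 ∈ ℂⁿ such that M = {Re(f) = 0} as germs of sets at 0. -/

import Mathlib

/-!
Let `G = F_ℂ`. The two dimension hypotheses say that the points of `{G = 0}` at which the
`z`-differential or the `w`-differential of `G` vanishes form a set of complex codimension greater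
than two in `ℂ²ⁿ` (`badSet_dim`). Since divisibility by `G` may be tested off such a set, the first
integral condition becomes: the `2 × 2` minors of `(dh, dG)` in the `z`-directions, and those in
the `w`-directions, are divisible by `G` (`base_minors`).

*Descent of `h` to the two factors.* Where `d_w G ≠ 0`, divisible minors mean
`d_w h = c · d_w G` modulo `G` for a local holomorphic factor `c`. Such factors are unique modulo
`G`, and division with remainder by `G` along discs picks a canonical representative, so they
glue and extend across the bad set by a Hartogs argument (`hartogs_factor`). Subtracting
`c G ^ (N + 1) / (N + 1)` repeatedly, `h` is modified within its class modulo `G` until `d_w h` is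
divisible by `G ^ N` (`iterate_factor`). Hence the class of `h` contains, up to order `N`, a function
of `z` alone; the remainder of the division by `G` respects orders of vanishing up to a constant
factor (`remG_isBigO`), so letting `N → ∞` gives `h ≡ f(z)` modulo `G` (`split_nondeg`, `split_z`).
Symmetrically `h ≡ g(w)` (`split_w`). This needs `G` not to vanish identically on `{z = 0}`,
respectively `{w = 0}`; by Hermitian symmetry of `G` these fail together, and then `h` would be
constant on `{G = 0}` (`const_of_deg`).

*A symmetric primitive integral.* Combining `f(z) ≡ g(w)` with its conjugate gives a nonzero germ `A`
such that `G` divides `A(z) - conj (A (conj w))` (`exists_real_integral`). Taking a maximal root of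
`A`, and correcting it by a constant of modulus one, `A` is replaced by a germ `a` which is not a
proper power (`exists_primitive_integral`).

*Conclusion.* Write `a(z) - conj (a (conj w)) = G Q`. Restricting `w` to a curve on which the second
term is `t ^ K` leads to the germ `a(z) - t ^ K`, which is irreducible because `a` is not a proper
power (`cyc_irreducible`); so `Q` is a unit (`unit_of_primitive`). On the diagonal `w = conj z` this
reads `2 i Im a = F Q`, that is `M = {Im a = 0} = {Re (i a) = 0}`.
-/

open Filter Topology ENNReal

/-- Wirtinger derivative ∂/∂z_j of a (complex-valued) function at `p`:
`(1/2)(∂F/∂x_j − i ∂F/∂y_j)`. -/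
noncomputable def wirtZ {n : ℕ} (F : (Fin n → ℂ) → ℂ) (j : Fin n) (p : Fin n → ℂ) : ℂ :=
  (fderiv ℝ F p (Pi.single j 1) - Complex.I * fderiv ℝ F p (Pi.single j Complex.I)) / 2

/-- Wirtinger derivative ∂/∂z̄_j of a (complex-valued) function at `p`:
`(1/2)(∂F/∂x_j + i ∂F/∂y_j)`. -/
noncomputable def wirtZbar {n : ℕ} (F : (Fin n → ℂ) → ℂ) (j : Fin n) (p : Fin n → ℂ) : ℂ :=
  (fderiv ℝ F p (Pi.single j 1) + Complex.I * fderiv ℝ F p (Pi.single j Complex.I)) / 2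

/-- The germ `M = {F = 0}` at `0` is Levi-flat: for every point `p` of `M* = M \ Sing(M)`
near `0` and every `v` with `Σ_j F_{z_j}(p) v_j = 0` one has
`Σ_{i,j} F_{z_i z̄_j}(p) v_i conj(v_j) = 0`. -/
def LeviFlatGerm {n : ℕ} (F : (Fin n → ℂ) → ℝ) : Prop :=
  ∀ᶠ p in 𝓝 (0 : Fin n → ℂ), F p = 0 → fderiv ℝ F p ≠ 0 →
    ∀ v : Fin n → ℂ,
      (∑ j, wirtZ (fun z => ((F z : ℝ) : ℂ)) j p * v j) = 0 →
      (∑ i, ∑ j, wirtZbar (wirtZ (fun z => ((F z : ℝ) : ℂ)) i) j p * v i * (starRingEnd ℂ) (v j)) = 0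

/-- `F` is irreducible in the ring of germs at `0` of real-valued real-analytic functions:
in any factorization `F = g·h` one of the factors is a unit (i.e. does not vanish at `0`). -/
def IrreducibleRGerm {n : ℕ} (F : (Fin n → ℂ) → ℝ) : Prop :=
  ∀ g h : (Fin n → ℂ) → ℝ, AnalyticAt ℝ g 0 → AnalyticAt ℝ h 0 →
    (∀ᶠ z in 𝓝 (0 : Fin n → ℂ), F z = g z * h z) → g 0 ≠ 0 ∨ h 0 ≠ 0

/-- `φ` is a germ of biholomorphism `(ℂⁿ,0) → (ℂⁿ,0)` with local inverse `ι`. -/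
def IsGermBiholo {n : ℕ} (φ ι : (Fin n → ℂ) → (Fin n → ℂ)) : Prop :=
  AnalyticAt ℂ φ 0 ∧ AnalyticAt ℂ ι 0 ∧ φ 0 = 0 ∧ ι 0 = 0 ∧
  (∀ᶠ z in 𝓝 (0 : Fin n → ℂ), ι (φ z) = z) ∧ (∀ᶠ z in 𝓝 (0 : Fin n → ℂ), φ (ι z) = z)

/-- `φ` is volume-preserving (isochore): the determinant of its complex Jacobian is
identically `1` near `0`. -/
def IsVolumePreserving {n : ℕ} (φ : (Fin n → ℂ) → (Fin n → ℂ)) : Prop :=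
  ∀ᶠ z in 𝓝 (0 : Fin n → ℂ), LinearMap.det ((fderiv ℂ φ z).toLinearMap) = 1

/-- `ψ` is a germ of automorphism of `(ℂ,0)`. -/
def IsGermAuto (ψ : ℂ → ℂ) : Prop :=
  AnalyticAt ℂ ψ 0 ∧ ψ 0 = 0 ∧ deriv ψ 0 ≠ 0

/-- `FC` is the complexification of `F`: the (unique) germ of holomorphic function at
`0 ∈ ℂⁿ × ℂⁿ` such that `FC (z, z̄) = F z` near `0`. -/
def IsComplexification {n : ℕ} (F : (Fin n → ℂ) → ℝ)
    (FC : ((Fin n → ℂ) × (Fin n → ℂ)) → ℂ) : Prop :=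
  AnalyticAt ℂ FC 0 ∧ ∀ᶠ z in 𝓝 (0 : Fin n → ℂ), FC (z, star z) = ((F z : ℝ) : ℂ)

/-- The singular set `Sing(M_ℂ) = {F_ℂ = 0} ∩ {dF_ℂ = 0}` of the complexification. -/
def singMC {n : ℕ} (FC : ((Fin n → ℂ) × (Fin n → ℂ)) → ℂ) :
    Set ((Fin n → ℂ) × (Fin n → ℂ)) :=
  {p | FC p = 0 ∧ fderiv ℂ FC p = 0}

/-- The singular set of the complexified Levi foliation `L_ℂ`: points of
`M*_ℂ` at which `α = Σ_j (∂F_ℂ/∂z_j) dz_j` vanishes on `T_p M_ℂ = ker dF_ℂ(p)`.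
Note that `α(p)(v) = dF_ℂ(p)(v₁, 0)`. -/
def singLC {n : ℕ} (FC : ((Fin n → ℂ) × (Fin n → ℂ)) → ℂ) :
    Set ((Fin n → ℂ) × (Fin n → ℂ)) :=
  {p | FC p = 0 ∧ fderiv ℂ FC p ≠ 0 ∧
    ∀ v : (Fin n → ℂ) × (Fin n → ℂ), fderiv ℂ FC p v = 0 → fderiv ℂ FC p (v.1, 0) = 0}

/-! ### Analytic dependence of circle averages -/

open MeasureTheory in
/-- Analyticity of an integral with respect to a small parameter set: the power series of `φ` is
recentred at `x₀ + d θ` and integrated termwise. -/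
theorem analyticAt_integral_local {E : Type*} [NormedAddCommGroup E] [NormedSpace ℂ E]
    {φ : E → ℂ} {P : FormalMultilinearSeries ℂ E ℂ} {x₀ : E} {r : NNReal} (hr0 : 0 < r)
    {R : ℝ≥0∞} (hP : HasFPowerSeriesOnBall φ P x₀ R) (hr : (r + r : ℝ≥0∞) < R)
    {d : ℝ → E} (hd : Continuous d) {T : Set ℝ} (hT : MeasurableSet T) (hTv : volume T ≠ ∞)
    (hdT : ∀ θ ∈ T, ‖d θ‖₊ ≤ r) :
    AnalyticAt ℂ (fun y => ∫ θ in T, φ (x₀ + d θ + y)) 0 := by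
  have hPr : (r + r : ℝ≥0∞) < P.radius := hr.trans_le hP.r_le
  have hr1 : (r : ℝ≥0∞) < P.radius := lt_of_le_of_lt (by simp) hPr
  set A : ℕ → NNReal := fun k => ∑' s : Σ l : ℕ, { s : Finset (Fin (k + l)) // s.card = l },
    ‖P (k + s.1)‖₊ * r ^ s.1 with hA
  have hAs : Summable fun k => A k * r ^ k := by
    have h1 := (NNReal.summable_sigma.1 (P.changeOriginSeries_summable_aux₁ hPr)).2
    refine h1.congr fun k => ?_
    rw [hA]; dsimp only
    rw [NNReal.tsum_mul_right]
  have hle : ∀ θ ∈ T, ∀ k, ‖P.changeOrigin (d θ) k‖₊ ≤ A k := by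
    intro θ hθ k
    have hx : (‖d θ‖₊ : ℝ≥0∞) < P.radius := lt_of_le_of_lt (by exact_mod_cast hdT θ hθ) hr1
    refine (P.nnnorm_changeOrigin_le k hx).trans ?_
    refine Summable.tsum_le_tsum (fun s => ?_) (P.changeOriginSeries_summable_aux₂ hx k)
      (P.changeOriginSeries_summable_aux₂ hr1 k)
    gcongr
    exact hdT θ hθ
  have hcont : ∀ k, ContinuousOn (fun θ => P.changeOrigin (d θ) k) T := by
    intro k
    have h1 := (P.hasFPowerSeriesOnBall_changeOrigin k (pos_of_gt hr1)).continuousOn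
    refine h1.comp hd.continuousOn ?_
    intro θ hθ
    simp only [Metric.mem_eball, edist_zero_right]
    exact lt_of_le_of_lt (by exact_mod_cast hdT θ hθ) hr1
  have : IsFiniteMeasure (volume.restrict T) := ⟨by simpa [lt_top_iff_ne_top] using hTv⟩
  have hInt : ∀ k, Integrable (fun θ => P.changeOrigin (d θ) k) (volume.restrict T) := by
    intro k
    refine Integrable.of_bound ((hcont k).aestronglyMeasurable hT) (A k) ?_
    filter_upwards [ae_restrict_mem hT] with θ hθ
    exact_mod_cast hle θ hθ k
  let Q : FormalMultilinearSeries ℂ E ℂ := fun k => ∫ θ in T, P.changeOrigin (d θ) k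
  have hAsR : Summable fun k => (A k : ℝ) * (r : ℝ) ^ k := by exact_mod_cast hAs
  have hQ : HasFPowerSeriesOnBall (fun y => ∫ θ in T, φ (x₀ + d θ + y)) Q 0 r := by
    refine ⟨?_, by exact_mod_cast hr0, ?_⟩
    · refine Q.le_radius_of_bound ((∑' k, (A k : ℝ) * (r : ℝ) ^ k) * (volume.restrict T).real Set.univ) ?_
      intro k
      have h1 : ‖Q k‖ ≤ A k * (volume.restrict T).real Set.univ := by
        refine norm_integral_le_of_norm_le_const ?_
        filter_upwards [ae_restrict_mem hT] with θ hθ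
        exact_mod_cast hle θ hθ k
      have h2 := hAsR.le_tsum k (fun j _ => by positivity)
      calc ‖Q k‖ * (r:ℝ) ^ k ≤ (A k * (volume.restrict T).real Set.univ) * (r:ℝ)^k := by gcongr
        _ = (A k * (r:ℝ)^k) * (volume.restrict T).real Set.univ := by ring
        _ ≤ _ := by gcongr
    · intro y hy
      have hy' : ‖y‖₊ < r := by
        simpa only [Metric.mem_eball, edist_zero_right, enorm_eq_nnnorm, ENNReal.coe_lt_coe] using hy
      simp only [zero_add]
      have h3 : ∀ k, Q k (fun _ => y) = ∫ θ in T, P.changeOrigin (d θ) k (fun _ => y) := by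
        intro k
        exact ContinuousMultilinearMap.integral_apply (hInt k) _
      simp_rw [h3]
      refine hasSum_integral_of_dominated_convergence (fun k _ => (A k : ℝ) * (r:ℝ)^k) ?_ ?_ ?_ ?_ ?_
      · intro k
        have : ContinuousOn (fun θ => P.changeOrigin (d θ) k (fun _ => y)) T := by
          refine (ContinuousLinearMap.continuous (ContinuousMultilinearMap.apply ℂ (fun _ : Fin k => E) ℂ (fun _ => y))).comp_continuousOn (hcont k)
        exact this.aestronglyMeasurable hT
      · intro k
        filter_upwards [ae_restrict_mem hT] with θ hθ
        refine (ContinuousMultilinearMap.le_opNorm _ _).trans ?_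
        simp only [Finset.prod_const, Finset.card_univ, Fintype.card_fin]
        gcongr
        · exact_mod_cast hle θ hθ k
        · exact_mod_cast hy'.le
      · exact Eventually.of_forall fun _ => hAsR
      · exact integrable_const _
      · filter_upwards [ae_restrict_mem hT] with θ hθ
        have hx1 : (‖d θ‖₊ : ℝ≥0∞) ≤ r := by exact_mod_cast hdT θ hθ
        have hx : (‖d θ‖₊ : ℝ≥0∞) < R := hx1.trans_lt (lt_of_le_of_lt le_self_add hr)
        have := (hP.changeOrigin hx).hasSum (y := y) ?_
        · exact this
        · simp only [Metric.mem_eball, edist_zero_right, enorm_eq_nnnorm]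
          rw [lt_tsub_iff_right]
          refine lt_of_le_of_lt ?_ hr
          have := hdT θ hθ
          gcongr
  exact hQ.analyticAt

open MeasureTheory in
/-- Integrals over a compact parameter set depend analytically on a translation; the set is covered
by finitely many pieces on which `analyticAt_integral_local` applies. -/
theorem analyticAt_setIntegral {E : Type*} [NormedAddCommGroup E] [NormedSpace ℂ E]
    {φ : E → ℂ} {c : ℝ → E} (hc : Continuous c) {p₀ : E} {K : Set ℝ} (hK : IsCompact K)
    (hφ : ∀ θ ∈ K, AnalyticAt ℂ φ (p₀ + c θ)) :
    AnalyticAt ℂ (fun p => ∫ θ in K, φ (p + c θ)) p₀ := by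
  have hInt : ∀ᶠ p in 𝓝 p₀, ∀ θ ∈ K, ContinuousAt φ (p + c θ) := by
    refine hK.eventually_forall_of_forall_eventually ?_
    intro θ hθ
    have h1 : Tendsto (fun z : E × ℝ => z.1 + c z.2) (𝓝 (p₀, θ)) (𝓝 (p₀ + c θ)) :=
      Continuous.tendsto (by fun_prop) (p₀, θ)
    filter_upwards [h1.eventually (hφ θ hθ).eventually_analyticAt] with z hz using hz.continuousAt
  have hInt2 : ∀ᶠ p in 𝓝 p₀, IntegrableOn (fun θ => φ (p + c θ)) K := by
    filter_upwards [hInt] with p hp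
    refine ContinuousOn.integrableOn_compact hK ?_
    intro θ hθ
    have : ContinuousAt (fun θ => φ (p + c θ)) θ :=
      ContinuousAt.comp' (f := fun θ => p + c θ) (hp θ hθ) (by fun_prop)
    exact this.continuousWithinAt
  have key : ∃ S' : Set ℝ, MeasurableSet S' ∧ K ⊆ S' ∧ ∀ T, MeasurableSet T → T ⊆ S' → T ⊆ K →
      AnalyticAt ℂ (fun p => ∫ θ in T, φ (p + c θ)) p₀ := by
    refine hK.induction_on (p := fun S => ∃ S' : Set ℝ, MeasurableSet S' ∧ S ⊆ S' ∧
      ∀ T, MeasurableSet T → T ⊆ S' → T ⊆ K →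
      AnalyticAt ℂ (fun p => ∫ θ in T, φ (p + c θ)) p₀) ?_ ?_ ?_ ?_
    · refine ⟨∅, MeasurableSet.empty, le_rfl, ?_⟩
      intro T _ hT2 _
      obtain rfl : T = ∅ := Set.subset_eq_empty hT2 rfl
      simpa using analyticAt_const
    · rintro s t hst ⟨S', h1, h2, h3⟩
      exact ⟨S', h1, hst.trans h2, h3⟩
    · rintro s t ⟨S, h1, h2, h3⟩ ⟨S', h1', h2', h3'⟩
      refine ⟨S ∪ S', h1.union h1', Set.union_subset_union h2 h2', ?_⟩
      intro T hT hTS hTK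
      have e1 := h3 (T ∩ S) (hT.inter h1) Set.inter_subset_right (Set.inter_subset_left.trans hTK)
      have e2 := h3' (T \ S) (hT.diff h1) (by rw [Set.sdiff_subset_iff]; exact hTS)
        (Set.sdiff_subset.trans hTK)
      refine (e1.add e2).congr ?_
      filter_upwards [hInt2] with p hp
      have hp' := hp.mono_set hTK
      exact (integral_inter_add_sdiff h1 hp')
    · intro θ₀ hθ₀
      obtain ⟨P, R, hP⟩ := hφ θ₀ hθ₀
      obtain ⟨r, hr0, hr⟩ : ∃ r : NNReal, 0 < r ∧ (r + r : ℝ≥0∞) < R := by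
        obtain ⟨s, hs0, hs⟩ := ENNReal.lt_iff_exists_nnreal_btwn.1 hP.r_pos
        refine ⟨s / 2, by have : 0 < s := by exact_mod_cast hs0
                          positivity, ?_⟩
        rw [← ENNReal.coe_add, add_halves]; exact hs
      have hd : Continuous (fun θ => c θ - c θ₀) := by fun_prop
      have hop : {θ | ‖c θ - c θ₀‖₊ < r} ∈ 𝓝 θ₀ := by
        refine (isOpen_lt (by fun_prop) continuous_const).mem_nhds ?_
        simpa using hr0
      refine ⟨_, mem_nhdsWithin_of_mem_nhds hop, {θ | ‖c θ - c θ₀‖₊ < r},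
        (isOpen_lt (by fun_prop) continuous_const).measurableSet, le_rfl, ?_⟩
      intro T hT hTS hTK
      have hv : volume T ≠ ∞ := ((measure_mono hTK).trans_lt hK.measure_lt_top).ne
      have := analyticAt_integral_local hr0 hP hr hd hT hv (fun θ hθ => (hTS hθ).le)
      have h2 : AnalyticAt ℂ (fun p : E => p - p₀) p₀ := by fun_prop
      have h3 := AnalyticAt.fun_comp (f := fun p : E => p - p₀) (x := p₀) (by simpa using this) h2
      refine h3.congr (Eventually.of_forall fun p => ?_)
      simp only
      congr 1; ext θ; congr 1; abel
  obtain ⟨S', -, h2, h3⟩ := key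
  exact h3 K hK.measurableSet h2 le_rfl

open Real in
/-- Circle averages of an analytic function depend analytically on a translation parameter. -/
theorem analyticAt_circleAverage {E : Type*} [NormedAddCommGroup E] [NormedSpace ℂ E]
    {φ : E → ℂ} {b : E} {δ : ℝ} {p₀ : E}
    (hφ : ∀ ξ : ℂ, ‖ξ‖ = |δ| → AnalyticAt ℂ φ (p₀ + ξ • b)) :
    AnalyticAt ℂ (fun p => circleAverage (fun ξ => φ (p + ξ • b)) 0 δ) p₀ := by
  have h := analyticAt_setIntegral (φ := φ) (c := fun θ => circleMap 0 δ θ • b) (by fun_prop) (p₀ := p₀)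
    (K := Set.Icc 0 (2 * π)) isCompact_Icc (fun θ _ => hφ _ (by simp))
  have h2 := h.const_smul (c := ((2 * π)⁻¹ : ℂ))
  refine h2.congr (Eventually.of_forall fun p => ?_)
  simp only [circleAverage_def, Pi.smul_apply]
  rw [intervalIntegral.integral_of_le (by positivity), MeasureTheory.integral_Icc_eq_integral_Ioc]
  rw [Complex.real_smul, smul_eq_mul]; push_cast; rfl

/-! ### Divisibility of germs of holomorphic functions -/

section Division
variable {E : Type*} [NormedAddCommGroup E] [NormedSpace ℂ E]

/-- `LDvd N T q`: the germ of `T` at `q` is a multiple of the germ of `N` in the ring of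
germs of holomorphic functions at `q`. -/
def LDvd (N T : E → ℂ) (q : E) : Prop :=
  ∃ v : E → ℂ, AnalyticAt ℂ v q ∧ ∀ᶠ p in 𝓝 q, T p = N p * v p

theorem LDvd.congr {N T T' : E → ℂ} {q : E} (h : LDvd N T q) (hT : ∀ᶠ p in 𝓝 q, T' p = T p) :
    LDvd N T' q := by
  obtain ⟨v, hv, h⟩ := h
  exact ⟨v, hv, by filter_upwards [h, hT] with p h1 h2; rw [h2, h1]⟩

theorem LDvd.add {N T T' : E → ℂ} {q : E} (h : LDvd N T q) (h' : LDvd N T' q) :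
    LDvd N (fun p => T p + T' p) q := by
  obtain ⟨v, hv, h⟩ := h
  obtain ⟨v', hv', h'⟩ := h'
  exact ⟨fun p => v p + v' p, hv.fun_add hv', by
    filter_upwards [h, h'] with p h1 h2; rw [h2, h1]; ring⟩

theorem LDvd.sub {N T T' : E → ℂ} {q : E} (h : LDvd N T q) (h' : LDvd N T' q) :
    LDvd N (fun p => T p - T' p) q := by
  obtain ⟨v, hv, h⟩ := h
  obtain ⟨v', hv', h'⟩ := h'
  exact ⟨fun p => v p - v' p, hv.fun_sub hv', by
    filter_upwards [h, h'] with p h1 h2; rw [h2, h1]; ring⟩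

theorem LDvd.mul_left {N T S : E → ℂ} {q : E} (h : LDvd N T q) (hS : AnalyticAt ℂ S q) :
    LDvd N (fun p => S p * T p) q := by
  obtain ⟨v, hv, h⟩ := h
  exact ⟨fun p => S p * v p, hS.fun_mul hv, by
    filter_upwards [h] with p h1; rw [h1]; ring⟩

theorem LDvd.trans {N T S : E → ℂ} {q : E} (h : LDvd N T q) (h' : LDvd T S q) :
    LDvd N S q := by
  obtain ⟨v, hv, h⟩ := h
  obtain ⟨v', hv', h'⟩ := h'
  exact ⟨fun p => v p * v' p, hv.fun_mul hv', by
    filter_upwards [h, h'] with p h1 h2; rw [h2, h1]; ring⟩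

theorem LDvd.of_ne {N T : E → ℂ} {q : E} (hN : AnalyticAt ℂ N q) (hT : AnalyticAt ℂ T q)
    (h : N q ≠ 0) : LDvd N T q :=
  ⟨fun p => T p / N p, hT.fun_div hN h, by
    filter_upwards [hN.continuousAt.eventually_ne h] with p hp; field_simp⟩

theorem LDvd.self_mul {N S : E → ℂ} {q : E} (hS : AnalyticAt ℂ S q) :
    LDvd N (fun p => N p * S p) q := ⟨S, hS, Eventually.of_forall fun _ => rfl⟩

theorem LDvd.comp {E' : Type*} [NormedAddCommGroup E'] [NormedSpace ℂ E']
    {N T : E → ℂ} {g : E' → E} {q : E'} (hg : AnalyticAt ℂ g q) (h : LDvd N T (g q)) :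
    LDvd (fun p => N (g p)) (fun p => T (g p)) q := by
  obtain ⟨v, hv, h⟩ := h
  exact ⟨fun p => v (g p), hv.fun_comp hg, hg.continuousAt.eventually h⟩

theorem LDvd.eventually {N T : E → ℂ} {q : E} (h : LDvd N T q) :
    ∀ᶠ p in 𝓝 q, LDvd N T p := by
  obtain ⟨v, hv, h⟩ := h
  filter_upwards [hv.eventually_analyticAt, eventually_eventually_nhds.2 h] with p h1 h2
  exact ⟨v, h1, h2⟩

theorem LDvd.analyticAt {N T : E → ℂ} {q : E} (h : LDvd N T q) (hN : AnalyticAt ℂ N q) :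
    AnalyticAt ℂ T q := by
  obtain ⟨v, hv, h⟩ := h
  exact (hN.fun_mul hv).congr (h.mono fun p hp => hp.symm)

theorem eventually_eq_of_dense {E : Type*} [NormedAddCommGroup E] {u v : E → ℂ} {q : E} {A : Set E} (hA : Dense A)
    (hu : ∀ᶠ p in 𝓝 q, ContinuousAt u p) (hv : ∀ᶠ p in 𝓝 q, ContinuousAt v p)
    (h : ∀ᶠ p in 𝓝 q, p ∈ A → u p = v p) : ∀ᶠ p in 𝓝 q, u p = v p := by
  obtain ⟨O, hO, hOo, hq⟩ := eventually_nhds_iff.1 (hu.and (hv.and h))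
  filter_upwards [hOo.mem_nhds hq] with p hp
  by_contra hne
  have h1 : ContinuousAt (fun p => u p - v p) p := (hO p hp).1.sub (hO p hp).2.1
  have h2 : ∀ᶠ p' in 𝓝 p, u p' - v p' ≠ 0 := h1.eventually_ne (sub_ne_zero.2 hne)
  obtain ⟨W, hW, hWo, hpW⟩ := eventually_nhds_iff.1 (h2.and (hOo.mem_nhds hp))
  obtain ⟨a, haW, haA⟩ := hA.inter_open_nonempty W hWo ⟨p, hpW⟩
  exact (hW a haW).1 (sub_eq_zero.2 ((hO a (hW a haW).2).2.2 haA))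

theorem dense_ne_zero {N : ℂ → ℂ} {ξ : ℂ} (hN : AnalyticAt ℂ N ξ) (h : ¬ ∀ᶠ z in 𝓝 ξ, N z = 0)
    {u v : ℂ → ℂ} (hu : ContinuousAt u ξ) (hv : ContinuousAt v ξ)
    (huv : ∀ᶠ z in 𝓝 ξ, N z * u z = N z * v z) : u ξ = v ξ := by
  have h1 := (hN.eventually_eq_zero_or_eventually_ne_zero).resolve_left h
  have h2 : (fun z => u z) =ᶠ[𝓝[≠] ξ] v := by
    filter_upwards [h1, huv.filter_mono nhdsWithin_le_nhds] with z hz1 hz2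
    exact mul_left_cancel₀ hz1 hz2
  exact tendsto_nhds_unique ((hu.tendsto.mono_left nhdsWithin_le_nhds).congr' h2)
    (hv.tendsto.mono_left nhdsWithin_le_nhds)

open Real in
/-- If `T` is locally divisible by `N` on a closed disc, its value at the centre is recovered
from the average of `T / N` on the boundary circle. -/
theorem eq_mul_circleAverage_of_LDvd {T N : ℂ → ℂ} {δ : ℝ} (hδ : 0 < δ)
    (hN : ∀ ξ : ℂ, ‖ξ‖ ≤ δ → AnalyticAt ℂ N ξ) (hNs : ∀ ξ : ℂ, ‖ξ‖ = δ → N ξ ≠ 0)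
    (hd : ∀ ξ : ℂ, ‖ξ‖ ≤ δ → LDvd N T ξ) :
    T 0 = N 0 * circleAverage (fun ξ => T ξ / N ξ) 0 δ := by
  have hNan : AnalyticOnNhd ℂ N (Metric.closedBall 0 δ) := fun ξ hξ => hN ξ (by simpa using hξ)
  have hnz : ∀ ξ : ℂ, ‖ξ‖ ≤ δ → ¬ ∀ᶠ z in 𝓝 ξ, N z = 0 := by
    intro ξ hξ h
    have := hNan.eqOn_zero_of_preconnected_of_eventuallyEq_zero
      (convex_closedBall (0:ℂ) δ).isPreconnected (by simpa using hξ) h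
    refine hNs δ (by simp [hδ.le]) (this (by simp [abs_of_pos hδ]))
  choose! q hq1 hq2 using hd
  have hloc : ∀ ξ : ℂ, ‖ξ‖ ≤ δ → ∀ᶠ z in 𝓝 ξ, ‖z‖ ≤ δ → q z z = q ξ z := by
    intro ξ hξ
    filter_upwards [(hq1 ξ hξ).eventually_analyticAt, eventually_eventually_nhds.2 (hq2 ξ hξ)]
      with z h1 h2 hz
    refine dense_ne_zero (hN z hz) (hnz z hz) (hq1 z hz).continuousAt h1.continuousAt ?_
    filter_upwards [h2, hq2 z hz] with y h3 h4
    rw [← h3, ← h4]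
  have hdc : DiffContOnCl ℂ (fun z => q z z) (Metric.ball 0 |δ|) := by
    rw [abs_of_pos hδ]
    refine ⟨?_, ?_⟩
    · intro z hz
      have hz' : ‖z‖ < δ := by simpa using hz
      have h1 : ∀ᶠ y in 𝓝 z, ‖y‖ ≤ δ := by
        filter_upwards [(continuous_norm.tendsto z).eventually (gt_mem_nhds hz')] with y hy
        exact hy.le
      have : DifferentiableAt ℂ (fun z => q z z) z := by
        refine (hq1 z hz'.le).differentiableAt.congr_of_eventuallyEq ?_
        filter_upwards [h1, hloc z hz'.le] with y h2 h3 using h3 h2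
      exact this.differentiableWithinAt
    · rw [closure_ball _ hδ.ne']
      intro z hz
      have hz' : ‖z‖ ≤ δ := by simpa using hz
      refine ((hq1 z hz').continuousAt.continuousWithinAt).congr_of_eventuallyEq ?_ rfl
      filter_upwards [self_mem_nhdsWithin, mem_nhdsWithin_of_mem_nhds (hloc z hz')] with y h2 h3
      exact h3 (by simpa using h2)
  have hav := hdc.circleAverage
  have h0 := (hq2 0 (by simpa using hδ.le)).self_of_nhds
  rw [h0, ← hav]
  congr 1
  apply circleAverage_congr_sphere
  intro ξ hξ
  have hξ' : ‖ξ‖ = δ := by simpa [abs_of_pos hδ] using hξ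
  have := (hq2 ξ hξ'.le).self_of_nhds
  have h2 := hNs ξ hξ'
  simp only
  rw [this]; field_simp

/-- Zeros of a germ on a line on which it does not vanish identically are isolated, here with
uniform smallness of the radius. -/
theorem exists_radius {N : E → ℂ} {q b : E} (hN : AnalyticAt ℂ N q)
    (hb : ¬ ∀ᶠ ξ in 𝓝 (0:ℂ), N (q + ξ • b) = 0) {ε : ℝ} (hε : 0 < ε) :
    ∃ δ : ℝ, 0 < δ ∧ δ < ε ∧ δ * ‖b‖ < ε ∧ ∀ ξ : ℂ, ξ ≠ 0 → ‖ξ‖ ≤ δ → N (q + ξ • b) ≠ 0 := by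
  have h1 : AnalyticAt ℂ (fun ξ : ℂ => N (q + ξ • b)) 0 :=
    AnalyticAt.fun_comp (by simpa using hN) (by fun_prop)
  have h2 := h1.eventually_eq_zero_or_eventually_ne_zero.resolve_left hb
  rw [eventually_nhdsWithin_iff, Metric.eventually_nhds_iff] at h2
  obtain ⟨η, hη, h3⟩ := h2
  refine ⟨min (η / 2) (min (ε / 2) (ε / (2 * (‖b‖ + 1)))), by positivity, ?_, ?_, ?_⟩
  · exact lt_of_le_of_lt ((min_le_right _ _).trans (min_le_left _ _)) (by linarith)
  · calc _ ≤ ε / (2 * (‖b‖ + 1)) * ‖b‖ := by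
          gcongr; exact (min_le_right _ _).trans (min_le_right _ _)
      _ < ε := by
          rw [div_mul_eq_mul_div, div_lt_iff₀ (by positivity)]
          nlinarith [norm_nonneg b]
  · intro ξ hξ0 hξ
    refine h3 ?_ hξ0
    rw [dist_zero_right]
    exact lt_of_le_of_lt (hξ.trans (min_le_left _ _)) (by linarith)

/-- For `p` near `q`, everything happening near the closed disc `q + ξ b`, `‖ξ‖ ≤ δ`,
also happens near `p + ξ b`. -/
theorem eventually_forall_circle {S : Set ℂ} (hS : IsCompact S) {q b : E} {p : E → Prop}
    (h : ∀ ξ ∈ S, ∀ᶠ x in 𝓝 (q + ξ • b), p x) :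
    ∀ᶠ x in 𝓝 q, ∀ ξ ∈ S, p (x + ξ • b) := by
  refine hS.eventually_forall_of_forall_eventually ?_
  intro ξ hξ
  have h1 : Tendsto (fun z : E × ℂ => z.1 + z.2 • b) (𝓝 (q, ξ)) (𝓝 (q + ξ • b)) :=
    Continuous.tendsto (by fun_prop) (q, ξ)
  exact h1.eventually (h ξ hξ)

theorem isCompact_normEq (δ : ℝ) : IsCompact {ξ : ℂ | ‖ξ‖ = δ} := by
  have : {ξ : ℂ | ‖ξ‖ = δ} = Metric.sphere 0 δ := by ext; simp
  rw [this]; exact isCompact_sphere _ _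

theorem isCompact_normLe (δ : ℝ) : IsCompact {ξ : ℂ | ‖ξ‖ ≤ δ} := by
  have : {ξ : ℂ | ‖ξ‖ ≤ δ} = Metric.closedBall 0 δ := by ext; simp
  rw [this]; exact isCompact_closedBall _ _

open Real in
/-- Divisibility of germs can be tested on the lines in direction `b` through a dense set of
base points. -/
theorem LDvd.of_dense {T N : E → ℂ} {q b : E} (hT : AnalyticAt ℂ T q) (hN : AnalyticAt ℂ N q)
    (hb : ¬ ∀ᶠ ξ in 𝓝 (0:ℂ), N (q + ξ • b) = 0) {A : Set E} (hA : Dense A) {U : Set E}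
    (hU : U ∈ 𝓝 q)
    (hd : ∀ p ∈ A, p ∈ U → ∀ ξ : ℂ, p + ξ • b ∈ U →
      LDvd (fun ζ : ℂ => N (p + ζ • b)) (fun ζ : ℂ => T (p + ζ • b)) ξ) : LDvd N T q := by
  have hev : ∀ᶠ p in 𝓝 q, AnalyticAt ℂ T p ∧ AnalyticAt ℂ N p ∧ p ∈ U :=
    hT.eventually_analyticAt.and (hN.eventually_analyticAt.and hU)
  obtain ⟨ε, hε, hball⟩ := Metric.eventually_nhds_iff.1 hev
  obtain ⟨δ, hδ, -, hδb, hne⟩ := exists_radius hN hb hε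
  have hin : ∀ ξ : ℂ, ‖ξ‖ ≤ δ → dist (q + ξ • b) q < ε := by
    intro ξ hξ
    simp only [dist_self_add_left, norm_smul]
    exact lt_of_le_of_lt (by gcongr) hδb
  have hgood : ∀ᶠ p in 𝓝 q, ∀ ξ ∈ {ξ : ℂ | ‖ξ‖ ≤ δ}, dist (p + ξ • b) q < ε := by
    apply eventually_forall_circle (isCompact_normLe δ) (p := fun x => dist x q < ε)
    intro ξ hξ
    exact Metric.isOpen_ball.mem_nhds (hin ξ hξ)
  have hnes : ∀ᶠ p in 𝓝 q, ∀ ξ ∈ {ξ : ℂ | ‖ξ‖ = δ}, N (p + ξ • b) ≠ 0 := by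
    apply eventually_forall_circle (isCompact_normEq δ) (p := fun x => N x ≠ 0)
    intro ξ hξ
    have hξ' : ‖ξ‖ = δ := hξ
    refine (hball (hin ξ hξ'.le)).2.1.continuousAt.eventually_ne (hne ξ ?_ hξ'.le)
    rintro rfl; simp at hξ'; exact hδ.ne hξ'
  set C : E → ℂ := fun p => circleAverage (fun ξ => T (p + ξ • b) / N (p + ξ • b)) 0 δ with hC
  have hCan : AnalyticAt ℂ C q := by
    apply analyticAt_circleAverage (φ := fun p => T p / N p)
    intro ξ hξ
    rw [abs_of_pos hδ] at hξ
    obtain ⟨h1, h2, -⟩ := hball (hin ξ hξ.le)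
    refine h1.fun_div h2 (hne ξ ?_ hξ.le)
    rintro rfl; simp at hξ; exact hδ.ne hξ
  refine ⟨C, hCan, ?_⟩
  refine eventually_eq_of_dense hA (hT.eventually_analyticAt.mono fun p h => h.continuousAt)
    ((hN.fun_mul hCan).eventually_analyticAt.mono fun p h => h.continuousAt) ?_
  filter_upwards [hgood, hnes] with p h1 h2 hpA
  have := eq_mul_circleAverage_of_LDvd (T := fun ζ : ℂ => T (p + ζ • b))
    (N := fun ζ : ℂ => N (p + ζ • b)) hδ ?_ h2 ?_
  · simpa using this
  · intro ξ hξ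
    exact (hball (h1 ξ hξ)).2.1.fun_comp (f := fun ζ : ℂ => p + ζ • b) (by fun_prop)
  · intro ξ hξ
    have h0 := h1 0 (by simpa using hδ.le)
    simp only [zero_smul, add_zero] at h0
    exact hd p hpA (hball h0).2.2 ξ (hball (h1 ξ hξ)).2.2

end Division

section Division2
variable {E : Type*} [NormedAddCommGroup E] [NormedSpace ℂ E]

theorem AnalyticAt.line {f : E → ℂ} {p b : E} {ξ : ℂ} (hf : AnalyticAt ℂ f (p + ξ • b)) :
    AnalyticAt ℂ (fun ζ : ℂ => f (p + ζ • b)) ξ :=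
  AnalyticAt.fun_comp (f := fun ζ : ℂ => p + ζ • b) hf (by fun_prop)

theorem LDvd.line {N T : E → ℂ} {p b : E} {ξ : ℂ} (h : LDvd N T (p + ξ • b)) :
    LDvd (fun ζ : ℂ => N (p + ζ • b)) (fun ζ : ℂ => T (p + ζ • b)) ξ :=
  LDvd.comp (g := fun ζ : ℂ => p + ζ • b) (by fun_prop) h

/-- The zero set of a nonzero germ is nowhere dense. -/
theorem exists_dense_ne_zero {f : E → ℂ} {q : E} (hf : AnalyticAt ℂ f q)
    (h : ¬ ∀ᶠ p in 𝓝 q, f p = 0) : ∃ A : Set E, Dense A ∧ ∀ᶠ p in 𝓝 q, p ∈ A → f p ≠ 0 := by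
  obtain ⟨ε, hε, hball⟩ := hf.exists_ball_analyticOnNhd
  refine ⟨{p | f p ≠ 0} ∪ (Metric.ball q ε)ᶜ, ?_, ?_⟩
  · rw [dense_iff_inter_open]
    intro O hO ⟨x, hx⟩
    by_cases hxb : x ∈ Metric.ball q ε
    · by_contra hne
      rw [Set.not_nonempty_iff_eq_empty] at hne
      have h0 : ∀ᶠ p in 𝓝 x, f p = 0 := by
        filter_upwards [hO.mem_nhds hx, Metric.isOpen_ball.mem_nhds hxb] with p hp1 hp2
        by_contra hp
        have : p ∈ O ∩ ({p | f p ≠ 0} ∪ (Metric.ball q ε)ᶜ) := ⟨hp1, Or.inl hp⟩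
        rw [hne] at this; exact this
      have := hball.eqOn_zero_of_preconnected_of_eventuallyEq_zero
        (convex_ball q ε).isPreconnected hxb h0
      exact h (Filter.eventually_of_mem (Metric.ball_mem_nhds q hε) fun p hp => this hp)
    · exact ⟨x, hx, Or.inr hxb⟩
  · filter_upwards [Metric.ball_mem_nhds q hε] with p hp hpA
    rcases hpA with h1 | h1
    · exact h1
    · exact absurd hp h1

/-- Germs of holomorphic functions form a domain. -/
theorem germ_mul_cancel {N u v : E → ℂ} {q : E} (hN : AnalyticAt ℂ N q)
    (h : ¬ ∀ᶠ p in 𝓝 q, N p = 0) (hu : AnalyticAt ℂ u q) (hv : AnalyticAt ℂ v q)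
    (huv : ∀ᶠ p in 𝓝 q, N p * u p = N p * v p) : ∀ᶠ p in 𝓝 q, u p = v p := by
  obtain ⟨A, hA, hne⟩ := exists_dense_ne_zero hN h
  refine eventually_eq_of_dense hA hu.eventually_continuousAt hv.eventually_continuousAt ?_
  filter_upwards [hne, huv] with p h1 h2 hpA using mul_left_cancel₀ (h1 hpA) h2

theorem germ_mul_ne {N u : E → ℂ} {q : E} (hN : AnalyticAt ℂ N q)
    (h : ¬ ∀ᶠ p in 𝓝 q, N p = 0) (hu : AnalyticAt ℂ u q) (h' : ¬ ∀ᶠ p in 𝓝 q, u p = 0) :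
    ¬ ∀ᶠ p in 𝓝 q, N p * u p = 0 := by
  intro h2
  refine h' (germ_mul_cancel hN h hu (v := fun _ => 0) analyticAt_const ?_)
  filter_upwards [h2] with p hp; simpa using hp

theorem germ_pow_ne {E : Type*} [NormedAddCommGroup E] {N : E → ℂ} {q : E}
    (h : ¬ ∀ᶠ p in 𝓝 q, N p = 0) (k : ℕ) : ¬ ∀ᶠ p in 𝓝 q, N p ^ k = 0 := by
  intro h2
  exact h (h2.mono fun p hp => eq_zero_of_pow_eq_zero hp)

/-- Multiples of `N` can be cancelled in divisibility relations. -/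
theorem LDvd.cancel_left {N u G : E → ℂ} {q : E} (hN : AnalyticAt ℂ N q)
    (h : ¬ ∀ᶠ p in 𝓝 q, N p = 0) (hu : AnalyticAt ℂ u q) (hG : AnalyticAt ℂ G q)
    (hd : LDvd (fun p => N p * G p) (fun p => N p * u p) q) : LDvd G u q := by
  obtain ⟨v, hv, hd⟩ := hd
  refine ⟨v, hv, germ_mul_cancel hN h hu (hG.fun_mul hv) ?_⟩
  filter_upwards [hd] with p hp; rw [hp]; ring

/-- A nonzero germ does not vanish identically on some line. -/
theorem exists_line_ne_zero {f : E → ℂ} {q : E} (hf : AnalyticAt ℂ f q)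
    (h : ¬ ∀ᶠ p in 𝓝 q, f p = 0) : ∃ e : E, ¬ ∀ᶠ τ in 𝓝 (0:ℂ), f (q + τ • e) = 0 := by
  by_contra hcon
  push Not at hcon
  obtain ⟨ε, hε, hball⟩ := hf.exists_ball_analyticOnNhd
  apply h
  filter_upwards [Metric.ball_mem_nhds q hε] with p hp
  have hs : IsPreconnected {τ : ℂ | q + τ • (p - q) ∈ Metric.ball q ε} := by
    apply Convex.isPreconnected
    intro x hx y hy a b ha hb hab
    have := convex_ball q ε hx hy ha hb hab
    have e : a • (q + x • (p - q)) + b • (q + y • (p - q)) = q + (a • x + b • y) • (p - q) := by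
      obtain rfl : b = 1 - a := by linarith
      rw [Complex.real_smul, Complex.real_smul, ← Complex.coe_smul, ← Complex.coe_smul]
      push_cast
      module
    rw [Set.mem_ofPred_eq, ← e]; exact this
  have han : AnalyticOnNhd ℂ (fun τ : ℂ => f (q + τ • (p - q)))
      {τ : ℂ | q + τ • (p - q) ∈ Metric.ball q ε} := by
    intro τ hτ
    exact (hball _ hτ).line
  have := han.eqOn_zero_of_preconnected_of_eventuallyEq_zero hs (z₀ := 0) (by simpa using hε)
    (hcon (p - q))
  have h1 := this (x := (1:ℂ)) (by simpa [← dist_eq_norm] using hp)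
  simpa using h1

theorem LDvd.of_simple_zero {N T : ℂ → ℂ} {ξ : ℂ} (hN : AnalyticAt ℂ N ξ) (hT : AnalyticAt ℂ T ξ)
    (hN' : deriv N ξ ≠ 0) (hN0 : N ξ = 0) (hT0 : T ξ = 0) : LDvd N T ξ := by
  have h1 : analyticOrderAt N ξ = 1 := hN.analyticOrderAt_eq_one_of_zero_deriv_ne_zero hN0 hN'
  obtain ⟨g, hg, hg0, hg1⟩ := (hN.analyticOrderAt_eq_natCast (n := 1)).1 (by simpa using h1)
  have h2 : ((1 : ℕ) : ℕ∞) ≤ analyticOrderAt T ξ := by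
    rw [Nat.cast_one, Order.one_le_iff_ne_zero]
    exact hT.analyticOrderAt_ne_zero.2 hT0
  obtain ⟨t, ht, ht1⟩ := (natCast_le_analyticOrderAt hT).1 h2
  refine ⟨fun z => t z / g z, ht.fun_div hg hg0, ?_⟩
  filter_upwards [hg1, ht1, hg.continuousAt.eventually_ne hg0] with z e1 e2 e3
  rw [e1, e2]; simp only [smul_eq_mul]; field_simp

/-- A function vanishing on the smooth zero set of `G` is locally divisible by `G`. -/
theorem LDvd.of_smooth [CompleteSpace E] {G u : E → ℂ} {q : E} (hG : AnalyticAt ℂ G q) (hu : AnalyticAt ℂ u q)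
    (hdG : fderiv ℂ G q ≠ 0) (h : ∀ᶠ p in 𝓝 q, G p = 0 → u p = 0) : LDvd G u q := by
  obtain ⟨v, hv⟩ : ∃ v, fderiv ℂ G q v ≠ 0 := by
    by_contra hcon; push Not at hcon
    exact hdG (ContinuousLinearMap.ext hcon)
  have hder : ∀ p ξ, AnalyticAt ℂ G (p + ξ • v) → deriv (fun ζ : ℂ => G (p + ζ • v)) ξ =
      fderiv ℂ G (p + ξ • v) v := by
    intro p ξ hp
    have h1 : HasDerivAt (fun ζ : ℂ => p + ζ • v) v ξ := by
      simpa using ((hasDerivAt_id ξ).smul_const v).const_add p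
    exact (hp.differentiableAt.hasFDerivAt.comp_hasDerivAt ξ h1).deriv
  have hev : ∀ᶠ p in 𝓝 q, fderiv ℂ G p v ≠ 0 := by
    have : ContinuousAt (fun p => fderiv ℂ G p v) q :=
      (hG.fderiv.continuousAt).clm_apply continuousAt_const
    exact this.eventually_ne hv
  refine LDvd.of_dense hu hG (b := v) ?_ dense_univ
    (hev.and (hG.eventually_analyticAt.and (hu.eventually_analyticAt.and h))) ?_
  · intro hz
    have : deriv (fun ζ : ℂ => G (q + ζ • v)) 0 = 0 := by
      have : (fun ζ : ℂ => G (q + ζ • v)) =ᶠ[𝓝 0] fun _ => 0 := hz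
      rw [this.deriv_eq]; simp
    rw [hder q 0 (by simpa using hG)] at this
    simp at this; exact hv this
  · rintro p - - ξ ⟨h1, h2, h3, h4⟩
    by_cases h5 : G (p + ξ • v) = 0
    · refine LDvd.of_simple_zero h2.line h3.line ?_ h5 (h4 h5)
      rw [hder p ξ h2]; exact h1
    · exact LDvd.of_ne h2.line h3.line h5

/-- Cancellation of a factor constant along a direction in which `G` is not identically zero. -/
theorem LDvd.cancel_invariant {N u G : E → ℂ} {q e : E} (hN : AnalyticAt ℂ N q)
    (h : ¬ ∀ᶠ p in 𝓝 q, N p = 0) (hinv : ∀ p (τ : ℂ), N (p + τ • e) = N p)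
    (hu : AnalyticAt ℂ u q) (hG : AnalyticAt ℂ G q)
    (he : ¬ ∀ᶠ τ in 𝓝 (0:ℂ), G (q + τ • e) = 0)
    (hd : LDvd G (fun p => N p * u p) q) : LDvd G u q := by
  obtain ⟨A, hA, hne⟩ := exists_dense_ne_zero hN h
  refine LDvd.of_dense hu hG he hA (hd.eventually.and hne) ?_
  · rintro p hp ⟨-, h2⟩ ξ ⟨h1, -⟩
    have hNp : N p ≠ 0 := h2 hp
    have h3 := h1.line.mul_left (S := fun _ => (N p)⁻¹) analyticAt_const
    refine h3.congr (Eventually.of_forall fun ζ => ?_)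
    simp only [hinv]; field_simp

end Division2

/-! ### Division with remainder along discs -/

section Remainder
variable {E : Type*} [NormedAddCommGroup E] [NormedSpace ℂ E]

/-- Remainder of the division of `T` by `G` along discs of radius `r` in direction `e`; the
quotient is given by a Cauchy average. -/
noncomputable def remG (G : E → ℂ) (e : E) (r : ℝ) (T : E → ℂ) (p : E) : ℂ :=
  T p - G p * Real.circleAverage (fun τ => T (p + τ • e) / G (p + τ • e)) 0 r

/-- The closed disc `q + τ e`, `‖τ‖ ≤ r` lies in the domain of holomorphy of `G` and its boundary
circle avoids the zeros of `G`. -/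
structure GoodDisc (G : E → ℂ) (e : E) (r : ℝ) (q : E) : Prop where
  pos : 0 < r
  an : ∀ τ : ℂ, ‖τ‖ ≤ r → AnalyticAt ℂ G (q + τ • e)
  ne : ∀ τ : ℂ, ‖τ‖ = r → G (q + τ • e) ≠ 0

/-- `T` is holomorphic near the closed disc `q + τ e`, `‖τ‖ ≤ r`. -/
def AnDisc (e : E) (r : ℝ) (q : E) (T : E → ℂ) : Prop :=
  ∀ τ : ℂ, ‖τ‖ ≤ r → AnalyticAt ℂ T (q + τ • e)

theorem AnDisc.eventually {e : E} {r : ℝ} {q : E} {T : E → ℂ} (h : AnDisc e r q T) :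
    ∀ᶠ p in 𝓝 q, AnDisc e r p T := by
  refine eventually_forall_circle (isCompact_normLe r) (p := fun x => AnalyticAt ℂ T x) ?_
  intro ξ hξ
  exact (h ξ hξ).eventually_analyticAt

theorem GoodDisc.eventually {G : E → ℂ} {e : E} {r : ℝ} {q : E} (h : GoodDisc G e r q) :
    ∀ᶠ p in 𝓝 q, GoodDisc G e r p := by
  have h1 : ∀ᶠ p in 𝓝 q, AnDisc e r p G := AnDisc.eventually h.an
  have h2 := eventually_forall_circle (isCompact_normEq r) (p := fun x => G x ≠ 0) (q := q) (b := e)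
    (fun ξ hξ => (h.an ξ (le_of_eq hξ)).continuousAt.eventually_ne (h.ne ξ hξ))
  filter_upwards [h1, h2] with p h3 h4 using ⟨h.pos, h3, h4⟩

theorem AnDisc.self {e : E} {r : ℝ} {q : E} {T : E → ℂ} (h : AnDisc e r q T) (hr : 0 < r) :
    AnalyticAt ℂ T q := by simpa using h 0 (by simpa using hr.le)

theorem GoodDisc.anQuot {G T : E → ℂ} {e : E} {r : ℝ} {q : E} (h : GoodDisc G e r q)
    (hT : AnDisc e r q T) : AnalyticAt ℂ
      (fun p => Real.circleAverage (fun τ => T (p + τ • e) / G (p + τ • e)) 0 r) q := by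
  apply analyticAt_circleAverage (φ := fun p => T p / G p)
  intro ξ hξ
  rw [abs_of_pos h.pos] at hξ
  exact (hT ξ hξ.le).fun_div (h.an ξ hξ.le) (h.ne ξ hξ)

theorem GoodDisc.an_remG {G T : E → ℂ} {e : E} {r : ℝ} {q : E} (h : GoodDisc G e r q)
    (hT : AnDisc e r q T) : AnalyticAt ℂ (remG G e r T) q :=
  (hT.self h.pos).fun_sub ((AnDisc.self h.an h.pos).fun_mul (h.anQuot hT))

theorem GoodDisc.circleIntegrable {G T : E → ℂ} {e : E} {r : ℝ} {q : E} (h : GoodDisc G e r q)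
    (hT : AnDisc e r q T) : CircleIntegrable (fun τ => T (q + τ • e) / G (q + τ • e)) 0 r := by
  refine ContinuousOn.circleIntegrable h.pos.le ?_
  intro ξ hξ
  have hξ' : ‖ξ‖ = r := by simpa using hξ
  have := ((hT ξ hξ'.le).line.fun_div (h.an ξ hξ'.le).line (h.ne ξ hξ'))
  exact this.continuousAt.continuousWithinAt

theorem GoodDisc.remG_sub {G T T' : E → ℂ} {e : E} {r : ℝ} {q : E} (h : GoodDisc G e r q)
    (hT : AnDisc e r q T) (hT' : AnDisc e r q T') :
    remG G e r (fun p => T p - T' p) q = remG G e r T q - remG G e r T' q := by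
  simp only [remG, sub_div]
  rw [Real.circleAverage_fun_sub (h.circleIntegrable hT) (h.circleIntegrable hT')]
  ring

/-- The remainder is linear over functions constant in the direction of the discs. -/
theorem remG_invariant {G T N : E → ℂ} {e : E} {r : ℝ} {q : E}
    (hinv : ∀ τ : ℂ, N (q + τ • e) = N q) :
    remG G e r (fun p => N p * T p) q = N q * remG G e r T q := by
  simp only [remG, hinv, mul_div_assoc]
  have := Real.circleAverage_fun_smul (a := N q) (f := fun τ => T (q + τ • e) / G (q + τ • e))
    (c := 0) (R := r)
  simp only [smul_eq_mul] at this
  rw [this]; ring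

/-- A function divisible by `G` at each point of the disc has zero remainder at the centre. -/
theorem GoodDisc.remG_eq_zero {G T : E → ℂ} {e : E} {r : ℝ} {q : E} (h : GoodDisc G e r q)
    (hd : ∀ τ : ℂ, ‖τ‖ ≤ r →
      LDvd (fun τ : ℂ => G (q + τ • e)) (fun τ : ℂ => T (q + τ • e)) τ) :
    remG G e r T q = 0 := by
  have := eq_mul_circleAverage_of_LDvd (T := fun ζ : ℂ => T (q + ζ • e))
    (N := fun ζ : ℂ => G (q + ζ • e)) h.pos (fun ξ hξ => (h.an ξ hξ).line) h.ne hd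
  simp only [zero_smul, add_zero] at this
  rw [remG, ← this, sub_self]

theorem GoodDisc.LDvd_of_remG {G T : E → ℂ} {e : E} {r : ℝ} {q : E} (h : GoodDisc G e r q)
    (hT : AnDisc e r q T) (hz : ∀ᶠ p in 𝓝 q, remG G e r T p = 0) : LDvd G T q :=
  ⟨_, h.anQuot hT, hz.mono fun _ hp => sub_eq_zero.1 hp⟩

theorem exists_goodDisc {G : E → ℂ} {q e : E} (hG : AnalyticAt ℂ G q)
    (he : ¬ ∀ᶠ τ in 𝓝 (0:ℂ), G (q + τ • e) = 0) {p : E → Prop} (hp : ∀ᶠ x in 𝓝 q, p x) :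
    ∃ r : ℝ, GoodDisc G e r q ∧ (∀ τ : ℂ, τ ≠ 0 → ‖τ‖ ≤ r → G (q + τ • e) ≠ 0) ∧
      ∀ τ : ℂ, ‖τ‖ ≤ r → p (q + τ • e) := by
  obtain ⟨ε, hε, hball⟩ := Metric.eventually_nhds_iff.1 (hG.eventually_analyticAt.and hp)
  obtain ⟨δ, hδ, -, hδb, hne⟩ := exists_radius hG he hε
  have hin : ∀ ξ : ℂ, ‖ξ‖ ≤ δ → dist (q + ξ • e) q < ε := by
    intro ξ hξ
    simp only [dist_self_add_left, norm_smul]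
    exact lt_of_le_of_lt (by gcongr) hδb
  refine ⟨δ, ⟨hδ, fun τ hτ => (hball (hin τ hτ)).1, ?_⟩, hne, fun τ hτ => (hball (hin τ hτ)).2⟩
  intro τ hτ
  refine hne τ ?_ hτ.le
  rintro rfl; simp at hτ; exact hδ.ne hτ

/-- A germ constant along a direction in which `G` is not identically zero is divisible by the
non-unit `G` only if it vanishes. -/
theorem LDvd.eq_zero_of_invariant {G N : E → ℂ} {q e : E} (hG : AnalyticAt ℂ G q) (hG0 : G q = 0)
    (he : ¬ ∀ᶠ τ in 𝓝 (0:ℂ), G (q + τ • e) = 0)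
    (hinv : ∀ p (τ : ℂ), N (p + τ • e) = N p) (hd : LDvd G N q) : ∀ᶠ p in 𝓝 q, N p = 0 := by
  obtain ⟨r, hgood, -, hr⟩ := exists_goodDisc hG he hd.eventually
  have h1 : AnDisc e r q (fun _ => (1:ℂ)) := fun τ _ => analyticAt_const
  have h2 : ∀ᶠ p in 𝓝 q, remG G e r (fun _ => (1:ℂ)) p ≠ 0 := by
    refine (hgood.an_remG h1).continuousAt.eventually_ne ?_
    simp [remG, hG0]
  have h3 := eventually_forall_circle (isCompact_normLe r) (p := fun x => LDvd G N x) (q := q) (b := e)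
    (fun ξ hξ => (hr ξ hξ).eventually)
  filter_upwards [h2, h3, hgood.eventually] with p h4 h5 h6
  have h7 := h6.remG_eq_zero (T := N) (fun τ hτ => (h5 τ hτ).line)
  have h8 := remG_invariant (G := G) (T := fun _ => (1:ℂ)) (r := r) (fun τ => hinv p τ)
  simp only [mul_one] at h8
  rw [h8] at h7
  exact (mul_eq_zero.1 h7).resolve_right h4
end Remainder

/-! ### Planes avoiding sets of small dimension -/

section Avoid
variable {E : Type*} [NormedAddCommGroup E] [NormedSpace ℂ E] [FiniteDimensional ℂ E]

/-- A linear projection with fibres of dimension at most two, parallel to `e` and `b`. -/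
theorem exists_proj (e b : E) : ∃ (k : ℕ) (π : E →L[ℂ] (Fin k → ℂ)), Module.finrank ℂ E ≤ k + 2 ∧
    Function.Surjective π ∧ π e = 0 ∧ π b = 0 := by
  set W : Submodule ℂ E := Submodule.span ℂ {e, b} with hW
  have h1 : Module.finrank ℂ W ≤ 2 := by
    classical
    have := finrank_span_finset_le_card (R := ℂ) ({e, b} : Finset E)
    rw [Set.finrank, Finset.coe_pair] at this
    exact this.trans Finset.card_le_two
  have h2 := W.finrank_quotient_add_finrank
  refine ⟨Module.finrank ℂ (E ⧸ W), LinearMap.toContinuousLinearMap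
    ((Module.finBasis ℂ (E ⧸ W)).equivFun.toLinearMap ∘ₗ W.mkQ), by omega, ?_, ?_, ?_⟩
  · simp only [LinearMap.coe_toContinuousLinearMap', LinearMap.coe_comp]
    exact (LinearEquiv.surjective _).comp W.mkQ_surjective
  · have : W.mkQ e = 0 := by
      rw [Submodule.mkQ_apply, Submodule.Quotient.mk_eq_zero]
      exact Submodule.subset_span (by simp)
    rw [LinearMap.coe_toContinuousLinearMap', LinearMap.comp_apply, this, map_zero]
  · have : W.mkQ b = 0 := by
      rw [Submodule.mkQ_apply, Submodule.Quotient.mk_eq_zero]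
      exact Submodule.subset_span (by simp)
    rw [LinearMap.coe_toContinuousLinearMap', LinearMap.comp_apply, this, map_zero]

theorem finrank_real_fin (k : ℕ) : Module.finrank ℝ (Fin k → ℂ) = 2 * k := by
  rw [finrank_real_of_complex]; simp

/-- A set of complex codimension more than two is avoided by a generic plane of given direction. -/
theorem dense_avoid {S : Set E} {d : ℕ} (hS : dimH S < d) (hd : d + 4 ≤ 2 * Module.finrank ℂ E)
    (e b : E) : Dense {p : E | ∀ ξ τ : ℂ, p + ξ • b + τ • e ∉ S} := by
  obtain ⟨k, π, hk, hsurj, he, hb⟩ := exists_proj e b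
  have : CompleteSpace E := FiniteDimensional.complete ℂ E
  have h1 : dimH (π '' S) < Module.finrank ℝ (Fin k → ℂ) := by
    refine (π.lipschitz.dimH_image_le S).trans_lt (hS.trans_le ?_)
    rw [finrank_real_fin]
    exact_mod_cast (by omega : d ≤ 2 * k)
  have h2 := (dense_compl_of_dimH_lt_finrank h1).preimage (π.isOpenMap hsurj)
  refine h2.mono ?_
  intro p hp ξ τ hmem
  exact hp ⟨_, hmem, by simp [he, hb]⟩

/-- A set of complex codimension more than two is avoided, away from the line `ℂ e`, by some plane
containing that line. -/
theorem exists_avoid {S : Set E} {d : ℕ} (hS : dimH S < d) (hd : d + 4 ≤ 2 * Module.finrank ℂ E)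
    (e : E) : ∃ b : E, ∀ ξ τ : ℂ, ξ ≠ 0 → ξ • b + τ • e ∉ S := by
  obtain ⟨e', he'⟩ : ∃ e', e' ∉ Submodule.span ℂ {e} := by
    by_contra hcon
    push Not at hcon
    have h1 : Submodule.span ℂ {e} = ⊤ := by
      rw [eq_top_iff]; exact fun x _ => hcon x
    have h2 := finrank_span_le_card (R := ℂ) ({e} : Set E)
    rw [h1, finrank_top] at h2
    simp at h2; omega
  obtain ⟨ℓ₀, hℓe', hℓe⟩ := Submodule.exists_le_ker_of_notMem he'
  set ℓ : E →L[ℂ] ℂ := LinearMap.toContinuousLinearMap ((ℓ₀ e')⁻¹ • ℓ₀) with hℓ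
  have hℓ1 : ℓ e' = 1 := by simp [hℓ, hℓe']
  have hℓ0 : ℓ e = 0 := by
    have : ℓ₀ e = 0 := hℓe (Submodule.subset_span rfl)
    simp [hℓ, this]
  obtain ⟨k, π, hk, hsurj, he, hb⟩ := exists_proj e e'
  have : CompleteSpace E := FiniteDimensional.complete ℂ E
  have : FiniteDimensional ℝ E := FiniteDimensional.complexToReal E
  set f : E → (Fin k → ℂ) := fun q => (ℓ q)⁻¹ • π q with hf
  have h1 : dimH (f '' (S ∩ {q | ℓ q ≠ 0})) < Module.finrank ℝ (Fin k → ℂ) := by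
    have : dimH (f '' (S ∩ {q | ℓ q ≠ 0})) ≤ dimH (S ∩ {q | ℓ q ≠ 0}) := by
      refine dimH_image_le_of_locally_lipschitzOn ?_
      rintro x ⟨-, hx⟩
      have hx' : ℓ x ≠ 0 := hx
      have hc : ContDiffAt ℂ 1 f x := by
        refine ContDiffAt.smul (ContDiffAt.inv ?_ hx') ?_
        · exact ℓ.contDiff.contDiffAt
        · exact π.contDiff.contDiffAt
      obtain ⟨K, t, ht, hL⟩ := hc.exists_lipschitzOnWith
      exact ⟨K, t, mem_nhdsWithin_of_mem_nhds ht, hL⟩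
    refine this.trans_lt ((dimH_mono Set.inter_subset_left).trans_lt (hS.trans_le ?_))
    rw [finrank_real_fin]
    exact_mod_cast (by omega : d ≤ 2 * k)
  obtain ⟨β, hβ⟩ := (dense_compl_of_dimH_lt_finrank h1).nonempty
  obtain ⟨b₀, hb₀⟩ := hsurj β
  refine ⟨b₀ + (1 - ℓ b₀) • e', ?_⟩
  intro ξ τ hξ hmem
  have hℓq : ℓ (ξ • (b₀ + (1 - ℓ b₀) • e') + τ • e) = ξ := by
    simp only [map_add, map_smul, hℓ1, hℓ0, smul_eq_mul]; ring
  apply hβ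
  refine ⟨_, ⟨hmem, ?_⟩, ?_⟩
  · rw [Set.mem_ofPred_eq, hℓq]; exact hξ
  · rw [hf]; dsimp only
    rw [hℓq]; simp [he, hb, hb₀, hξ]
end Avoid

/-! ### Bezout identity on a disc -/

section Bezout

theorem analyticAt_dslope {f : ℂ → ℂ} {t x : ℂ} (ht : AnalyticAt ℂ f t) (hx : AnalyticAt ℂ f x) :
    AnalyticAt ℂ (dslope f t) x := by
  rcases eq_or_ne x t with rfl | hne
  · obtain ⟨p, hp⟩ := hx
    exact hp.has_fpower_series_dslope_fslope.analyticAt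
  · have : AnalyticAt ℂ (fun z => (z - t)⁻¹ * (f z - f t)) x := by
      have h1 : x - t ≠ 0 := sub_ne_zero.2 hne
      have h2 : AnalyticAt ℂ (fun z : ℂ => z - t) x := by fun_prop
      exact (h2.inv h1).fun_mul (hx.fun_sub analyticAt_const)
    refine this.congr ?_
    filter_upwards [isOpen_ne.mem_nhds hne] with z hz
    rw [dslope_of_ne _ hz, slope_def_module, smul_eq_mul]

/-- Bezout identity between the `g i` and a polynomial with prescribed roots, by induction on the
number of roots. -/
theorem bezout_multiset {ι : Type*} [Fintype ι] {g : ι → ℂ → ℂ} {r : ℝ}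
    (hg : ∀ i, ∀ τ : ℂ, ‖τ‖ ≤ r → AnalyticAt ℂ (g i) τ) (s : Multiset ℂ) :
    (∀ t ∈ s, ‖t‖ ≤ r ∧ ∃ i, g i t ≠ 0) →
    ∃ (α : ι → ℂ → ℂ) (β : ℂ → ℂ), (∀ i, ∀ τ : ℂ, ‖τ‖ ≤ r → AnalyticAt ℂ (α i) τ) ∧
      (∀ τ : ℂ, ‖τ‖ ≤ r → AnalyticAt ℂ β τ) ∧
      ∀ τ : ℂ, ‖τ‖ ≤ r → ∑ i, α i τ * g i τ + β τ * (s.map (fun t => τ - t)).prod = 1 := by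
  classical
  induction s using Multiset.induction_on with
  | empty =>
    intro _
    exact ⟨fun _ _ => 0, fun _ => 1, fun _ _ _ => analyticAt_const, fun _ _ => analyticAt_const,
      by simp⟩
  | cons t s ih =>
    intro hs
    obtain ⟨α, β, hα, hβ, h1⟩ := ih (fun t' ht' => hs t' (Multiset.mem_cons_of_mem ht'))
    obtain ⟨htr, i₀, hi₀⟩ := hs t (Multiset.mem_cons_self t s)
    set P : ℂ → ℂ := fun τ => (s.map (fun t => τ - t)).prod with hP
    have hPan : ∀ τ, AnalyticAt ℂ P τ := by
      intro τ
      rw [hP]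
      clear * -
      induction s using Multiset.induction_on with
      | empty => simpa using analyticAt_const
      | cons t s ih =>
        simp only [Multiset.map_cons, Multiset.prod_cons]
        exact AnalyticAt.fun_mul (by fun_prop) ih
    set x : ℂ := β t / g i₀ t with hx
    have han : ∀ τ : ℂ, ‖τ‖ ≤ r → AnalyticAt ℂ (fun τ => β τ - x * g i₀ τ) τ := fun τ hτ =>
      (hβ τ hτ).fun_sub (analyticAt_const.fun_mul (hg i₀ τ hτ))
    refine ⟨fun i τ => α i τ + if i = i₀ then x * P τ else 0,
      dslope (fun τ => β τ - x * g i₀ τ) t, ?_, ?_, ?_⟩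
    · intro i τ hτ
      refine (hα i τ hτ).fun_add ?_
      split_ifs
      · exact analyticAt_const.fun_mul (hPan τ)
      · exact analyticAt_const
    · intro τ hτ
      exact analyticAt_dslope (han t htr) (han τ hτ)
    · intro τ hτ
      have h2 : (τ - t) * dslope (fun τ => β τ - x * g i₀ τ) t τ = β τ - x * g i₀ τ := by
        have := sub_smul_dslope (fun τ => β τ - x * g i₀ τ) t τ
        rw [smul_eq_mul] at this
        rw [this, hx]
        field_simp
        ring
      simp only [add_mul, Finset.sum_add_distrib, ite_mul, zero_mul, Finset.sum_ite_eq',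
        Finset.mem_univ, if_true, Multiset.map_cons, Multiset.prod_cons]
      have h3 := h1 τ hτ
      rw [← h3]
      linear_combination P τ * h2

/-- Bezout identity on a closed disc for holomorphic functions without common zero. -/
theorem bezout_disc {ι : Type*} [Fintype ι] {N : ℂ → ℂ} {g : ι → ℂ → ℂ} {r : ℝ}
    (hN : ∀ τ : ℂ, ‖τ‖ ≤ r → AnalyticAt ℂ N τ)
    (hNne : ∀ τ : ℂ, ‖τ‖ ≤ r → ¬ ∀ᶠ z in 𝓝 τ, N z = 0)
    (hg : ∀ i, ∀ τ : ℂ, ‖τ‖ ≤ r → AnalyticAt ℂ (g i) τ)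
    (hno : ∀ τ : ℂ, ‖τ‖ ≤ r → N τ = 0 → ∃ i, g i τ ≠ 0) :
    ∃ (α : ι → ℂ → ℂ) (β : ℂ → ℂ), (∀ i, ∀ τ : ℂ, ‖τ‖ ≤ r → AnalyticAt ℂ (α i) τ) ∧
      (∀ τ : ℂ, ‖τ‖ ≤ r → AnalyticAt ℂ β τ) ∧
      ∀ τ : ℂ, ‖τ‖ ≤ r → ∑ i, α i τ * g i τ + β τ * N τ = 1 := by
  have key : ∃ s : Multiset ℂ, (∀ t ∈ s, ‖t‖ ≤ r ∧ N t = 0) ∧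
      ∀ ξ ∈ {ξ : ℂ | ‖ξ‖ ≤ r}, LDvd N (fun τ => (s.map (fun t => τ - t)).prod) ξ := by
    refine (isCompact_normLe r).induction_on (p := fun S => ∃ s : Multiset ℂ,
      (∀ t ∈ s, ‖t‖ ≤ r ∧ N t = 0) ∧
      ∀ ξ ∈ S, LDvd N (fun τ => (s.map (fun t => τ - t)).prod) ξ) ?_ ?_ ?_ ?_
    · exact ⟨0, by simp, by simp⟩
    · rintro S T hST ⟨s, h1, h2⟩
      exact ⟨s, h1, fun ξ hξ => h2 ξ (hST hξ)⟩
    · rintro S T ⟨s, h1, h2⟩ ⟨t, h3, h4⟩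
      refine ⟨s + t, ?_, ?_⟩
      · intro x hx
        rcases Multiset.mem_add.1 hx with h | h
        · exact h1 x h
        · exact h3 x h
      · have hPan : ∀ (s : Multiset ℂ) τ, AnalyticAt ℂ (fun τ => (s.map (fun t => τ - t)).prod) τ := by
          intro s τ
          clear * -
          induction s using Multiset.induction_on with
          | empty => simpa using analyticAt_const
          | cons t s ih =>
            simp only [Multiset.map_cons, Multiset.prod_cons]
            exact AnalyticAt.fun_mul (by fun_prop) ih
        rintro ξ (hξ | hξ)
        · refine ((h2 ξ hξ).mul_left (hPan t ξ)).congr (Eventually.of_forall fun z => ?_)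
          simp [mul_comm]
        · refine ((h4 ξ hξ).mul_left (hPan s ξ)).congr (Eventually.of_forall fun z => ?_)
          simp
    · intro ξ hξ
      have hξ' : ‖ξ‖ ≤ r := hξ
      obtain ⟨k, gg, hgg, hgg0, hgg1⟩ : ∃ (k : ℕ) (gg : ℂ → ℂ), AnalyticAt ℂ gg ξ ∧ gg ξ ≠ 0 ∧
          ∀ᶠ z in 𝓝 ξ, N z = (z - ξ) ^ k • gg z := by
        have := (hN ξ hξ').exists_eventuallyEq_pow_smul_nonzero_iff.2 (hNne ξ hξ')
        exact this
      refine ⟨{z | LDvd N (fun τ => ((Multiset.replicate k ξ).map (fun t => τ - t)).prod) z},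
        ?_, Multiset.replicate k ξ, ?_, fun z hz => hz⟩
      · apply mem_nhdsWithin_of_mem_nhds
        refine LDvd.eventually ⟨fun z => (gg z)⁻¹, hgg.inv hgg0, ?_⟩
        filter_upwards [hgg1, hgg.continuousAt.eventually_ne hgg0] with z h1 h2
        rw [h1, Multiset.map_replicate, Multiset.prod_replicate, smul_eq_mul]
        field_simp
      · intro t ht
        obtain ⟨hk, rfl⟩ := Multiset.mem_replicate.1 ht
        refine ⟨hξ', ?_⟩
        rw [hgg1.self_of_nhds]; simp [hk]
  obtain ⟨s, hs1, hs2⟩ := key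
  obtain ⟨α, β, hα, hβ, h1⟩ := bezout_multiset hg s
    (fun t ht => ⟨(hs1 t ht).1, hno t (hs1 t ht).1 (hs1 t ht).2⟩)
  choose! w hw1 hw2 using hs2
  classical
  set W : ℂ → ℂ := fun z => if N z = 0 then w z z else (s.map (fun t => z - t)).prod / N z with hW
  have hWw : ∀ ξ : ℂ, ‖ξ‖ ≤ r → ∀ᶠ z in 𝓝 ξ, W z = w ξ z := by
    intro ξ hξ
    have h3 := ((hN ξ hξ).eventually_eq_zero_or_eventually_ne_zero).resolve_left (hNne ξ hξ)
    rw [eventually_nhdsWithin_iff] at h3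
    filter_upwards [h3, hw2 ξ hξ] with z h4 h5
    rw [hW]; dsimp only
    split_ifs with h6
    · have : z = ξ := by by_contra hne; exact h4 hne h6
      rw [this]
    · rw [h5]; field_simp
  refine ⟨α, fun z => β z * W z, hα, ?_, ?_⟩
  · intro τ hτ
    exact (hβ τ hτ).fun_mul ((hw1 τ hτ).congr ((hWw τ hτ).mono fun z hz => hz.symm))
  · intro τ hτ
    have h2 := (hw2 τ hτ).self_of_nhds
    dsimp only at h2 ⊢
    rw [← h1 τ hτ, h2, (hWw τ hτ).self_of_nhds]
    ring

end Bezout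

/-! ### Extension of the proportionality factor across codimension three -/

section Hartogs
variable {E : Type*} [NormedAddCommGroup E] [NormedSpace ℂ E] {ι : Type*}

/-- The data `G, g, κ` are holomorphic at `x`, the `2 × 2` minors of `(κ, g)` are divisible by `G`,
and `G, g` have no common zero at `x`. -/
structure HNice (G : E → ℂ) (g κ : ι → E → ℂ) (x : E) : Prop where
  anG : AnalyticAt ℂ G x
  ang : ∀ i, AnalyticAt ℂ (g i) x
  anκ : ∀ i, AnalyticAt ℂ (κ i) x
  dvd : ∀ i j, LDvd G (fun p => κ i p * g j p - κ j p * g i p) x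
  nz : G x = 0 → ∃ i, g i x ≠ 0

theorem HNice.eventually [Fintype ι] {G : E → ℂ} {g κ : ι → E → ℂ} {x : E} (h : HNice G g κ x) :
    ∀ᶠ y in 𝓝 x, HNice G g κ y := by
  have h1 : ∀ᶠ y in 𝓝 x, G y = 0 → ∃ i, g i y ≠ 0 := by
    by_cases hG : G x = 0
    · obtain ⟨i, hi⟩ := h.nz hG
      filter_upwards [(h.ang i).continuousAt.eventually_ne hi] with y hy _ using ⟨i, hy⟩
    · filter_upwards [h.anG.continuousAt.eventually_ne hG] with y hy h' using absurd h' hy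
  filter_upwards [h.anG.eventually_analyticAt,
    eventually_all.2 fun i => (h.ang i).eventually_analyticAt,
    eventually_all.2 fun i => (h.anκ i).eventually_analyticAt,
    eventually_all.2 fun i => eventually_all.2 fun j => (h.dvd i j).eventually, h1]
    with y h1 h2 h3 h4 h5 using ⟨h1, h2, h3, h4, h5⟩

/-- A disc in direction `e` along which everything is nice. -/
structure HDisc (G : E → ℂ) (g κ : ι → E → ℂ) (e : E) (r : ℝ) (q : E) : Prop where
  good : GoodDisc G e r q
  nice : ∀ τ : ℂ, ‖τ‖ ≤ r → HNice G g κ (q + τ • e)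

theorem HDisc.eventually [Fintype ι] {G : E → ℂ} {g κ : ι → E → ℂ} {e : E} {r : ℝ} {q : E}
    (h : HDisc G g κ e r q) : ∀ᶠ p in 𝓝 q, HDisc G g κ e r p := by
  have h2 := eventually_forall_circle (isCompact_normLe r) (p := fun x => HNice G g κ x) (q := q)
    (b := e) (fun ξ hξ => (h.nice ξ hξ).eventually)
  filter_upwards [h.good.eventually, h2] with p h3 h4 using ⟨h3, h4⟩

theorem GoodDisc.not_eventually_zero {G : E → ℂ} {e : E} {r : ℝ} {q : E} (h : GoodDisc G e r q)
    {τ : ℂ} (hτ : ‖τ‖ ≤ r) : ¬ ∀ᶠ z in 𝓝 τ, G (q + z • e) = 0 := by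
  intro hcon
  have hNan : AnalyticOnNhd ℂ (fun z : ℂ => G (q + z • e)) (Metric.closedBall 0 r) :=
    fun ξ hξ => (h.an ξ (by simpa using hξ)).line
  have := hNan.eqOn_zero_of_preconnected_of_eventuallyEq_zero
    (convex_closedBall (0:ℂ) r).isPreconnected (by simpa using hτ) hcon
  have hr : ‖(r:ℂ)‖ = r := by simp [abs_of_pos h.pos]
  exact h.ne r hr (this (by simp [abs_of_pos h.pos]))

/-- On a nice disc the proportionality factor `κ = c g` modulo `G` exists. -/
theorem HDisc.exists_factor [Fintype ι] {G : E → ℂ} {g κ : ι → E → ℂ} {e : E} {r : ℝ} {q : E}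
    (h : HDisc G g κ e r q) (he : e ≠ 0) : ∃ c : E → ℂ, AnDisc e r q c ∧
      ∀ τ : ℂ, ‖τ‖ ≤ r → ∀ j, LDvd G (fun p => κ j p - c p * g j p) (q + τ • e) := by
  obtain ⟨l, hl⟩ := SeparatingDual.exists_eq_one (R := ℂ) he
  obtain ⟨α, β, hα, hβ, hab⟩ := bezout_disc (N := fun τ : ℂ => G (q + τ • e))
    (g := fun i τ => g i (q + τ • e)) (r := r) (fun τ hτ => (h.good.an τ hτ).line)
    (fun τ hτ => h.good.not_eventually_zero hτ) (fun i τ hτ => ((h.nice τ hτ).ang i).line)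
    (fun τ hτ h0 => (h.nice τ hτ).nz h0)
  have ht : ∀ τ : ℂ, l (q + τ • e - q) = τ := by intro τ; simp [hl]
  have hl' : ∀ x, AnalyticAt ℂ (fun x => l (x - q)) x := fun x => (l.analyticAt _).fun_comp (by fun_prop)
  have hα' : ∀ i, ∀ τ : ℂ, ‖τ‖ ≤ r → AnalyticAt ℂ (fun x => α i (l (x - q))) (q + τ • e) :=
    fun i τ hτ => AnalyticAt.fun_comp (by rw [ht]; exact hα i τ hτ) (hl' _)
  have hβ' : ∀ τ : ℂ, ‖τ‖ ≤ r → AnalyticAt ℂ (fun x => β (l (x - q))) (q + τ • e) :=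
    fun τ hτ => AnalyticAt.fun_comp (by rw [ht]; exact hβ τ hτ) (hl' _)
  set D : E → ℂ := fun x => ∑ i, α i (l (x - q)) * g i x + β (l (x - q)) * G x with hD
  have hDan : ∀ τ : ℂ, ‖τ‖ ≤ r → AnalyticAt ℂ D (q + τ • e) := by
    intro τ hτ
    refine AnalyticAt.fun_add (Finset.analyticAt_fun_sum _ fun i _ => ?_) ?_
    · exact (hα' i τ hτ).fun_mul ((h.nice τ hτ).ang i)
    · exact (hβ' τ hτ).fun_mul (h.nice τ hτ).anG
  have hD1 : ∀ τ : ℂ, ‖τ‖ ≤ r → D (q + τ • e) ≠ 0 := by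
    intro τ hτ
    have := hab τ hτ
    simp only [hD, ht]
    rw [this]; exact one_ne_zero
  have hnum : ∀ τ : ℂ, ‖τ‖ ≤ r →
      AnalyticAt ℂ (fun x => ∑ i, α i (l (x - q)) * κ i x) (q + τ • e) := by
    intro τ hτ
    exact Finset.analyticAt_fun_sum _ fun i _ => (hα' i τ hτ).fun_mul ((h.nice τ hτ).anκ i)
  refine ⟨fun x => (∑ i, α i (l (x - q)) * κ i x) / D x,
    fun τ hτ => (hnum τ hτ).fun_div (hDan τ hτ) (hD1 τ hτ), ?_⟩
  intro τ hτ j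
  have h1 : LDvd G (fun x => (∑ i, α i (l (x - q)) * (κ j x * g i x - κ i x * g j x)) +
      G x * (β (l (x - q)) * κ j x)) (q + τ • e) := by
    refine LDvd.add ?_ (LDvd.self_mul ((hβ' τ hτ).fun_mul ((h.nice τ hτ).anκ j)))
    have : ∀ s : Finset ι, LDvd G (fun x => ∑ i ∈ s, α i (l (x - q)) *
        (κ j x * g i x - κ i x * g j x)) (q + τ • e) := by
      intro s
      classical
      induction s using Finset.induction_on with
      | empty => exact ⟨fun _ => 0, analyticAt_const, by simp⟩
      | insert a s ha ih =>
        simp only [Finset.sum_insert ha]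
        exact (((h.nice τ hτ).dvd j a).mul_left (hα' a τ hτ)).add ih
    exact this _
  refine (h1.mul_left ((hDan τ hτ).inv (hD1 τ hτ))).congr ?_
  filter_upwards [(hDan τ hτ).continuousAt.eventually_ne (hD1 τ hτ)] with x hx
  have : (∑ i, α i (l (x - q)) * (κ j x * g i x - κ i x * g j x)) +
      G x * (β (l (x - q)) * κ j x) = κ j x * D x - (∑ i, α i (l (x - q)) * κ i x) * g j x := by
    simp only [hD, mul_add, Finset.mul_sum, Finset.sum_mul, mul_sub, Finset.sum_sub_distrib]
    have e1 : ∑ i, α i (l (x - q)) * (κ j x * g i x) = ∑ i, κ j x * (α i (l (x - q)) * g i x) :=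
      Finset.sum_congr rfl fun i _ => by ring
    have e2 : ∑ i, α i (l (x - q)) * (κ i x * g j x) = ∑ i, α i (l (x - q)) * κ i x * g j x :=
      Finset.sum_congr rfl fun i _ => by ring
    rw [e1, e2]; ring
  rw [this, Pi.inv_apply]
  field_simp

/-- Two proportionality factors differ by a multiple of `G`, so they have the same remainder; the
remainder is thus a canonical choice of factor. -/
theorem HDisc.remG_factor_unique {G : E → ℂ} {g κ : ι → E → ℂ} {e : E} {r : ℝ} {q : E}
    (h : HDisc G g κ e r q) {c c' : E → ℂ} (hc : AnDisc e r q c) (hc' : AnDisc e r q c')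
    (h1 : ∀ τ : ℂ, ‖τ‖ ≤ r → ∀ j, LDvd G (fun p => κ j p - c p * g j p) (q + τ • e))
    (h2 : ∀ τ : ℂ, ‖τ‖ ≤ r → ∀ j, LDvd G (fun p => κ j p - c' p * g j p) (q + τ • e)) :
    remG G e r c q = remG G e r c' q := by
  rw [← sub_eq_zero, ← h.good.remG_sub hc hc']
  refine h.good.remG_eq_zero fun τ hτ => LDvd.line (T := fun p => c p - c' p) ?_
  by_cases hG : G (q + τ • e) = 0
  · obtain ⟨j, hj⟩ := (h.nice τ hτ).nz hG
    have han := (h.nice τ hτ).ang j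
    refine (((h2 τ hτ j).sub (h1 τ hτ j)).mul_left (han.inv hj)).congr ?_
    filter_upwards [han.continuousAt.eventually_ne hj] with x hx
    rw [Pi.inv_apply]
    field_simp
    ring
  · exact LDvd.of_ne (h.nice τ hτ).anG ((hc τ hτ).fun_sub (hc' τ hτ)) hG

/-- The normalised local factors glue to a holomorphic factor on the set of nice discs. -/
theorem exists_glued_factor [Fintype ι] (G : E → ℂ) (g κ : ι → E → ℂ) {e : E} (he : e ≠ 0) (r : ℝ) :
    ∃ ρ : E → ℂ, ∀ q, HDisc G g κ e r q → AnalyticAt ℂ ρ q ∧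
      ∀ j, LDvd G (fun p => κ j p - ρ p * g j p) q := by
  have hex : ∀ q, ∃ c : E → ℂ, HDisc G g κ e r q → AnDisc e r q c ∧
      ∀ τ : ℂ, ‖τ‖ ≤ r → ∀ j, LDvd G (fun p => κ j p - c p * g j p) (q + τ • e) := by
    intro q
    by_cases h : HDisc G g κ e r q
    · obtain ⟨c, hc⟩ := h.exists_factor he
      exact ⟨c, fun _ => hc⟩
    · exact ⟨0, fun h' => absurd h' h⟩
  choose c hc using hex
  refine ⟨fun q => remG G e r (c q) q, fun q hq => ?_⟩
  obtain ⟨h1, h2⟩ := hc q hq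
  have hev : ∀ᶠ p in 𝓝 q, remG G e r (c p) p = remG G e r (c q) p := by
    have h3 := eventually_forall_circle (isCompact_normLe r)
      (p := fun x => ∀ j, LDvd G (fun p => κ j p - c q p * g j p) x) (q := q)
      (b := e) (fun ξ hξ => eventually_all.2 fun j => (h2 ξ hξ j).eventually)
    filter_upwards [hq.eventually, h1.eventually, h3] with p h4 h5 h6
    exact h4.remG_factor_unique (hc p h4).1 h5 (hc p h4).2 h6
  have han := hq.good.an_remG h1
  refine ⟨han.congr (hev.mono fun p hp => hp.symm), fun j => ?_⟩
  have h0 : ‖(0:ℂ)‖ ≤ r := by simpa using hq.good.pos.le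
  have h4 := h2 0 h0 j
  have h5 := (hq.nice 0 h0).ang j
  rw [zero_smul, add_zero] at h4 h5
  refine (h4.add (LDvd.self_mul ((hq.good.anQuot h1).fun_mul h5))).congr ?_
  filter_upwards [hev] with p hp
  rw [hp, remG]; ring

/-- If the minors of `(κ, g)` are divisible by `G` and `G, g` have common zeros only in complex
codimension at least three, then `κ` is a multiple of `g` modulo `G`. -/
theorem hartogs_factor [Fintype ι] [FiniteDimensional ℂ E] {G : E → ℂ} {g κ : ι → E → ℂ}
    (hG : AnalyticAt ℂ G 0) (hG0 : G 0 = 0) (hGne : ¬ ∀ᶠ p in 𝓝 0, G p = 0)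
    (hg : ∀ i, AnalyticAt ℂ (g i) 0) (hκ : ∀ i, AnalyticAt ℂ (κ i) 0)
    (hd : ∀ i j, LDvd G (fun p => κ i p * g j p - κ j p * g i p) 0)
    {U : Set E} (hU : U ∈ 𝓝 0) {d : ℕ} (hdim : dimH ({p | G p = 0 ∧ ∀ i, g i p = 0} ∩ U) < d)
    (hd4 : d + 4 ≤ 2 * Module.finrank ℂ E) :
    ∃ c : E → ℂ, AnalyticAt ℂ c 0 ∧ ∀ i, LDvd G (fun p => κ i p - c p * g i p) 0 := by
  obtain ⟨e, he⟩ := exists_line_ne_zero hG hGne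
  have he0 : e ≠ 0 := by
    rintro rfl
    exact he (by simp [hG0])
  set S := {p | G p = 0 ∧ ∀ i, g i p = 0} ∩ U with hS
  have hN : ∀ᶠ y in 𝓝 (0:E), y ∈ U ∧ (y ∉ S → HNice G g κ y) := by
    filter_upwards [hG.eventually_analyticAt,
      eventually_all.2 fun i => (hg i).eventually_analyticAt,
      eventually_all.2 fun i => (hκ i).eventually_analyticAt,
      eventually_all.2 fun i => eventually_all.2 fun j => (hd i j).eventually, hU]
      with y h1 h2 h3 h4 h5
    refine ⟨h5, fun hy => ⟨h1, h2, h3, h4, fun h0 => ?_⟩⟩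
    by_contra hcon
    push Not at hcon
    exact hy ⟨⟨h0, hcon⟩, h5⟩
  obtain ⟨r, hgood, -, hr⟩ := exists_goodDisc hG he (eventually_eventually_nhds.2 hN)
  obtain ⟨b, hb⟩ := exists_avoid hdim hd4 e
  have h2 := eventually_forall_circle (isCompact_normLe r)
    (p := fun y => y ∈ U ∧ (y ∉ S → HNice G g κ y)) (q := 0) (b := e) hr
  obtain ⟨ε, hε, hball⟩ := Metric.eventually_nhds_iff.1 (hgood.eventually.and h2)
  have hOm : ∀ p : E, ‖p‖ < ε → (∀ τ : ℂ, p + τ • e ∉ S) → HDisc G g κ e r p := by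
    intro p hp hpS
    obtain ⟨h3, h4⟩ := hball (y := p) (by simpa using hp)
    exact ⟨h3, fun τ hτ => (h4 τ hτ).2 (hpS τ)⟩
  obtain ⟨ρ, hρ⟩ := exists_glued_factor G g κ he0 r
  set δ : ℝ := ε / (2 * (‖b‖ + 1)) with hδ
  have hδ0 : 0 < δ := by positivity
  have hδb : δ * ‖b‖ < ε / 2 := by
    have hb0 := norm_nonneg b
    rw [hδ, div_mul_eq_mul_div, div_lt_div_iff₀ (by positivity) two_pos]
    nlinarith
  have hsm : ∀ (p : E) (ξ : ℂ), ‖p‖ < ε / 2 → ‖ξ‖ ≤ δ → ‖p + ξ • b‖ < ε := by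
    intro p ξ hp hξ
    have h3 : ‖ξ • b‖ ≤ δ * ‖b‖ := by rw [norm_smul]; gcongr
    linarith [norm_add_le p (ξ • b)]
  set C : E → ℂ := fun p => Real.circleAverage (fun ξ => ρ (p + ξ • b)) 0 δ with hC
  have hCan : AnalyticAt ℂ C 0 := by
    apply analyticAt_circleAverage
    intro ξ hξ
    rw [abs_of_pos hδ0] at hξ
    refine (hρ _ (hOm _ (hsm 0 ξ (by simpa using hε) hξ.le) ?_)).1
    intro τ
    rw [zero_add]
    refine hb ξ τ ?_
    rintro rfl
    simp at hξ; linarith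
  refine ⟨C, hCan, fun i => ?_⟩
  refine LDvd.of_dense ((hκ i).fun_sub (hCan.fun_mul (hg i))) hG he (dense_avoid hdim hd4 e b)
    (Metric.ball_mem_nhds 0 (half_pos hε)) ?_
  intro p hp _ τ' hτ'
  apply LDvd.line (T := fun p => κ i p - C p * g i p)
  have hτ'' : ‖p + τ' • e‖ < ε / 2 := by simpa using hτ'
  have hall : ∀ ξ : ℂ, ‖ξ‖ ≤ δ → HDisc G g κ e r (p + τ' • e + ξ • b) := by
    intro ξ hξ
    refine hOm _ (hsm _ ξ hτ'' hξ) fun τ => ?_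
    have := hp ξ (τ' + τ)
    rwa [show p + τ' • e + ξ • b + τ • e = p + ξ • b + (τ' + τ) • e by module]
  have hCρ : ∀ᶠ q in 𝓝 (p + τ' • e), C q = ρ q := by
    have h3 := eventually_forall_circle (isCompact_normLe δ)
      (p := fun x => HDisc G g κ e r x) (q := p + τ' • e) (b := b)
      (fun ξ hξ => (hall ξ hξ).eventually)
    filter_upwards [h3] with q hq
    have hdc : DiffContOnCl ℂ (fun ξ : ℂ => ρ (q + ξ • b)) (Metric.ball 0 |δ|) := by
      refine DifferentiableOn.diffContOnCl fun ξ hξ => ?_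
      rw [abs_of_pos hδ0, closure_ball _ hδ0.ne'] at hξ
      exact (hρ _ (hq ξ (by simpa using hξ))).1.line.differentiableAt.differentiableWithinAt
    rw [hC]
    simpa using hdc.circleAverage
  have h0 := (hρ _ (by simpa using hall 0 (by simpa using hδ0.le))).2 i
  refine h0.congr ?_
  filter_upwards [hCρ] with q hq
  rw [hq]

end Hartogs

/-! ### Improving a first integral to high order -/

section Iterate
variable {E : Type*} [NormedAddCommGroup E] [NormedSpace ℂ E] [FiniteDimensional ℂ E]

theorem AnalyticAt.dirDeriv {u : E → ℂ} {q : E} (hu : AnalyticAt ℂ u q) (w : E) :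
    AnalyticAt ℂ (fun p => fderiv ℂ u p w) q := by
  have : CompleteSpace E := FiniteDimensional.complete ℂ E
  exact ((ContinuousLinearMap.apply ℂ ℂ w).analyticAt _).fun_comp hu.fderiv

theorem dirDeriv_comm {u : E → ℂ} {q : E} (hu : AnalyticAt ℂ u q) (w w' : E) :
    fderiv ℂ (fun p => fderiv ℂ u p w) q w' = fderiv ℂ (fun p => fderiv ℂ u p w') q w := by
  have : CompleteSpace E := FiniteDimensional.complete ℂ E
  have h1 : ∀ w w' : E, fderiv ℂ (fun p => fderiv ℂ u p w) q w' =
      fderiv ℂ (fderiv ℂ u) q w' w := by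
    intro w w'
    have h2 : HasFDerivAt (fun p => fderiv ℂ u p w)
      ((ContinuousLinearMap.apply ℂ ℂ w).comp (fderiv ℂ (fderiv ℂ u) q)) q :=
      (ContinuousLinearMap.apply ℂ ℂ w).hasFDerivAt.comp q hu.fderiv.differentiableAt.hasFDerivAt
    rw [h2.fderiv]; rfl
  rw [h1, h1]
  exact ContDiffAt.isSymmSndFDerivAt_of_omega hu.contDiffAt w' w

theorem hasFDerivAt_pow_succ {E : Type*} [NormedAddCommGroup E] [NormedSpace ℂ E] {G : E → ℂ} {G' : E →L[ℂ] ℂ} {p : E} (h : HasFDerivAt G G' p) (N : ℕ) :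
    HasFDerivAt (fun x => G x ^ (N + 1)) ((((N:ℂ) + 1) * G p ^ N) • G') p := by
  have := (hasDerivAt_pow (N + 1) (G p)).comp_hasFDerivAt p h
  simpa [Function.comp_def] using this

/-- Modulo `G`, a function whose differential is proportional to `dG` along `G = 0` in the
directions `v j` can be modified to have derivatives in these directions divisible by `G ^ N`. -/
theorem iterate_factor {ι : Type*} [Fintype ι] {G h : E → ℂ} {v : ι → E}
    (hG : AnalyticAt ℂ G 0) (hG0 : G 0 = 0) (hGne : ¬ ∀ᶠ p in 𝓝 0, G p = 0)
    (hh : AnalyticAt ℂ h 0)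
    (hd : ∀ i j, LDvd G (fun p => fderiv ℂ h p (v i) * fderiv ℂ G p (v j) -
      fderiv ℂ h p (v j) * fderiv ℂ G p (v i)) 0)
    {U : Set E} (hU : U ∈ 𝓝 0) {d : ℕ}
    (hdim : dimH ({p | G p = 0 ∧ ∀ i, fderiv ℂ G p (v i) = 0} ∩ U) < d)
    (hd4 : d + 4 ≤ 2 * Module.finrank ℂ E) (N : ℕ) :
    ∃ (h' : E → ℂ) (κ : ι → E → ℂ), AnalyticAt ℂ h' 0 ∧ LDvd G (fun p => h p - h' p) 0 ∧
      (∀ j, AnalyticAt ℂ (κ j) 0) ∧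
      (∀ j, ∀ᶠ p in 𝓝 0, fderiv ℂ h' p (v j) = G p ^ N * κ j p) ∧
      ∀ i j, LDvd G (fun p => κ i p * fderiv ℂ G p (v j) - κ j p * fderiv ℂ G p (v i)) 0 := by
  induction N with
  | zero =>
    refine ⟨h, fun j p => fderiv ℂ h p (v j), hh, ⟨fun _ => 0, analyticAt_const, by simp⟩,
      fun j => hh.dirDeriv _, by simp, hd⟩
  | succ N ih =>
    obtain ⟨h', κ, hh', hhh', hκ, hder, hmin⟩ := ih
    obtain ⟨c, hc, hcd⟩ := hartogs_factor hG hG0 hGne (fun i => hG.dirDeriv (v i)) hκ hmin hU hdim hd4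
    choose κ' hκ' hκ'e using hcd
    have hNz : ((N:ℂ) + 1) ≠ 0 := by exact_mod_cast Nat.succ_ne_zero N
    -- the derivative of `c G ^ (N + 1) / (N + 1)` is `c G ^ N dG` modulo `G ^ (N + 1)`
    set h'' : E → ℂ := fun p => h' p - c p * G p ^ (N + 1) / (N + 1) with hh''
    set κ'' : ι → E → ℂ := fun j p => κ' j p - fderiv ℂ c p (v j) / (N + 1) with hκ''
    have hh''an : AnalyticAt ℂ h'' 0 :=
      hh'.fun_sub ((hc.fun_mul (hG.fun_pow _)).fun_div analyticAt_const hNz)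
    have hκ''an : ∀ j, AnalyticAt ℂ (κ'' j) 0 := fun j =>
      (hκ' j).fun_sub ((hc.dirDeriv _).fun_div analyticAt_const hNz)
    have hder'' : ∀ j, ∀ᶠ p in 𝓝 0, fderiv ℂ h'' p (v j) = G p ^ (N + 1) * κ'' j p := by
      intro j
      filter_upwards [hder j, hκ'e j, hh'.eventually_analyticAt, hc.eventually_analyticAt,
        hG.eventually_analyticAt] with p h1 h2 h3 h4 h5
      have d1 := h3.differentiableAt.hasFDerivAt
      have d2 := h4.differentiableAt.hasFDerivAt
      have d3 := h5.differentiableAt.hasFDerivAt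
      have d4 := d1.fun_sub ((HasFDerivAt.fun_mul d2 (hasFDerivAt_pow_succ d3 N)).mul_const ((N:ℂ) + 1)⁻¹)
      have d5 : HasFDerivAt h'' _ p := d4
      rw [d5.fderiv]
      simp only [hκ'', sub_apply, add_apply,
        smul_apply, smul_eq_mul, h1]
      have h6 : κ j p = c p * fderiv ℂ G p (v j) + G p * κ' j p := by linear_combination h2
      rw [h6]
      field_simp
      ring
    refine ⟨h'', κ'', hh''an, ?_, hκ''an, hder'', ?_⟩
    · refine (hhh'.add (LDvd.self_mul (S := fun p => c p * G p ^ N / (N + 1))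
        ((hc.fun_mul (hG.fun_pow _)).fun_div analyticAt_const hNz))).congr
        (Eventually.of_forall fun p => ?_)
      simp only [hh'', pow_succ]; ring
    · intro i j
      have hm : AnalyticAt ℂ (fun p => κ'' i p * fderiv ℂ G p (v j) - κ'' j p * fderiv ℂ G p (v i)) 0 :=
        ((hκ''an i).fun_mul (hG.dirDeriv _)).fun_sub ((hκ''an j).fun_mul (hG.dirDeriv _))
      set w : E → ℂ := fun p => (fderiv ℂ (κ'' j) p (v i) - fderiv ℂ (κ'' i) p (v j)) / (N + 1) with hw
      have hwan : AnalyticAt ℂ w 0 :=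
        (((hκ''an j).dirDeriv _).fun_sub ((hκ''an i).dirDeriv _)).fun_div analyticAt_const hNz
      refine ⟨w, hwan, germ_mul_cancel (N := fun p => G p ^ N) (hG.fun_pow _) (germ_pow_ne hGne N)
        hm (hG.fun_mul hwan) ?_⟩
      -- symmetry of the second derivatives of `h''` yields the minors of the new `κ''`
      have hval : ∀ i j, ∀ᶠ p in 𝓝 0, fderiv ℂ (fun p => fderiv ℂ h'' p (v j)) p (v i) =
          (N + 1) * G p ^ N * fderiv ℂ G p (v i) * κ'' j p +
            G p ^ (N + 1) * fderiv ℂ (κ'' j) p (v i) := by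
        intro i j
        filter_upwards [eventually_eventually_nhds.2 (hder'' j), hG.eventually_analyticAt,
          (hκ''an j).eventually_analyticAt] with p h1 h5 h6
        have h1' : (fun p => fderiv ℂ h'' p (v j)) =ᶠ[𝓝 p] fun p => G p ^ (N + 1) * κ'' j p := h1
        rw [h1'.fderiv_eq]
        have d3 := h5.differentiableAt.hasFDerivAt
        have d4 := (hasFDerivAt_pow_succ d3 N).fun_mul h6.differentiableAt.hasFDerivAt
        rw [d4.fderiv]
        simp only [add_apply,
          smul_apply, smul_eq_mul]
        ring
      filter_upwards [hval i j, hval j i, hh''an.eventually_analyticAt] with p h1 h2 h3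
      have h4 := dirDeriv_comm h3 (v j) (v i)
      rw [h1, h2] at h4
      simp only [hw]
      field_simp
      linear_combination (-1) * h4

end Iterate

/-! ### Flat germs and the size of remainders -/

section Flat
open Asymptotics
variable {E : Type*} [NormedAddCommGroup E] [NormedSpace ℂ E]

/-- A holomorphic germ vanishing to infinite order is zero. -/
theorem eventually_zero_of_flat {φ : E → ℂ} (hφ : AnalyticAt ℂ φ 0)
    (h : ∀ M : ℕ, φ =O[𝓝 0] fun p => ‖p‖ ^ M) : ∀ᶠ p in 𝓝 0, φ p = 0 := by
  by_contra hcon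
  obtain ⟨e, he⟩ := exists_line_ne_zero hφ hcon
  simp only [zero_add] at he
  have han : AnalyticAt ℂ (fun τ : ℂ => φ (τ • e)) 0 :=
    AnalyticAt.fun_comp (by simpa using hφ) (by fun_prop)
  obtain ⟨k, g, hg, hg0, hge⟩ := han.exists_eventuallyEq_pow_smul_nonzero_iff.2 he
  have ht : Tendsto (fun τ : ℂ => τ • e) (𝓝 0) (𝓝 0) := by
    have : Continuous (fun τ : ℂ => τ • e) := by fun_prop
    simpa using this.tendsto 0
  obtain ⟨C, hC⟩ := ((h (k + 1)).comp_tendsto ht).bound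
  have hlim : Tendsto (fun τ : ℂ => C * ‖e‖ ^ (k + 1) * ‖τ‖) (𝓝[≠] 0) (𝓝 0) := by
    have : Continuous (fun τ : ℂ => C * ‖e‖ ^ (k + 1) * ‖τ‖) := by fun_prop
    simpa using (this.tendsto 0).mono_left nhdsWithin_le_nhds
  have hle : ∀ᶠ τ in 𝓝[≠] (0:ℂ), ‖g τ‖ ≤ C * ‖e‖ ^ (k + 1) * ‖τ‖ := by
    filter_upwards [hC.filter_mono nhdsWithin_le_nhds, hge.filter_mono nhdsWithin_le_nhds,
      self_mem_nhdsWithin] with τ h1 h2 h3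
    simp only [Function.comp_apply, h2, sub_zero, smul_eq_mul, norm_mul, norm_pow, norm_smul,
      norm_norm] at h1
    have h4 : 0 < ‖τ‖ ^ k := by
      have : 0 < ‖τ‖ := norm_pos_iff.2 h3
      positivity
    have h5 : ‖τ‖ ^ k * ‖g τ‖ ≤ ‖τ‖ ^ k * (C * ‖e‖ ^ (k + 1) * ‖τ‖) := by
      refine h1.trans (le_of_eq ?_); ring
    exact le_of_mul_le_mul_left h5 h4
  have h6 : Tendsto (fun τ => ‖g τ‖) (𝓝[≠] 0) (𝓝 ‖g 0‖) :=
    hg.continuousAt.norm.tendsto.mono_left nhdsWithin_le_nhds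
  have := le_of_tendsto_of_tendsto h6 hlim hle
  exact hg0 (norm_le_zero_iff.1 this)

theorem circleAverage_annulus {f : ℂ → ℂ} {ρ r : ℝ} (hρ : 0 < ρ) (hr : ρ ≤ r)
    (hf : ∀ τ : ℂ, ρ ≤ ‖τ‖ → ‖τ‖ ≤ r → AnalyticAt ℂ f τ) :
    Real.circleAverage f 0 r = Real.circleAverage f 0 ρ := by
  rw [Real.circleAverage_eq_circleIntegral hρ.ne', Real.circleAverage_eq_circleIntegral
    (hρ.trans_le hr).ne']
  congr 1
  refine Complex.circleIntegral_sub_center_inv_smul_eq_of_differentiable_on_annulus_off_countable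
    hρ hr Set.countable_empty ?_ ?_
  · rintro z ⟨h1, h2⟩
    refine (hf z ?_ (by simpa using h1)).continuousAt.continuousWithinAt
    simpa using h2
  · rintro z ⟨⟨h1, h2⟩, -⟩
    refine (hf z ?_ ?_).differentiableAt
    · have : ρ < ‖z‖ := by simpa using h2
      exact this.le
    · have : ‖z‖ < r := by simpa using h1
      exact this.le

theorem norm_circleAverage_le_aux {f : ℂ → ℂ} {ρ X : ℝ} (hρ : 0 < ρ)
    (h : ∀ τ : ℂ, ‖τ‖ = ρ → ‖f τ‖ ≤ X) : ‖Real.circleAverage f 0 ρ‖ ≤ X := by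
  rw [Real.circleAverage, norm_smul]
  have h1 := intervalIntegral.norm_integral_le_of_norm_le_const (a := 0) (b := 2 * Real.pi)
    (f := fun θ => f (circleMap 0 ρ θ)) (C := X)
    (fun θ _ => h _ (by simp [abs_of_pos hρ]))
  rw [sub_zero, abs_of_pos (by positivity)] at h1
  rw [norm_inv, Real.norm_of_nonneg (by positivity), inv_mul_le_iff₀ (by positivity)]
  linarith

theorem exists_lip {G : E → ℂ} (hG : AnalyticAt ℂ G 0) : ∃ L : ℝ, 0 < L ∧
    ∃ s > 0, ∀ x y : E, ‖x‖ < s → ‖y‖ < s → ‖G x - G y‖ ≤ L * ‖x - y‖ := by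
  obtain ⟨p, hp⟩ := hG
  obtain ⟨K, t, ht, hK⟩ := hp.hasStrictFDerivAt.exists_lipschitzOnWith
  obtain ⟨s, hs, hst⟩ := Metric.mem_nhds_iff.1 ht
  refine ⟨K + 1, by positivity, s, hs, fun x y hx hy => ?_⟩
  have := hK.dist_le_mul x (hst (by simpa using hx)) y (hst (by simpa using hy))
  rw [dist_eq_norm, dist_eq_norm] at this
  nlinarith [norm_nonneg (x - y)]

/-- The remainder of `u` modulo `G` is small if `u` is congruent modulo `G` to a germ of high
order; here `k` is the order of `G` in direction `e`. -/
theorem remG_isBigO {G : E → ℂ} {e : E} {r : ℝ} (hgood : GoodDisc G e r 0) (hG0 : G 0 = 0)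
    (hne : ∀ τ : ℂ, τ ≠ 0 → ‖τ‖ ≤ r → G (τ • e) ≠ 0) :
    ∃ k : ℕ, ∀ (u u' : E → ℂ) (M : ℕ), AnDisc e r 0 u → AnalyticAt ℂ u' 0 →
      LDvd G (fun p => u p - u' p) 0 → (u' =O[𝓝 0] fun p => ‖p‖ ^ (k * M)) →
      remG G e r u =O[𝓝 0] fun p => ‖p‖ ^ M := by
  have hG : AnalyticAt ℂ G 0 := AnDisc.self hgood.an hgood.pos
  have han : AnalyticAt ℂ (fun τ : ℂ => G (τ • e)) 0 :=
    AnalyticAt.fun_comp (by simpa using hG) (by fun_prop)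
  have h0 : ¬ ∀ᶠ τ in 𝓝 (0:ℂ), G (τ • e) = 0 := by
    have := hgood.not_eventually_zero (τ := 0) (by simpa using hgood.pos.le)
    simpa using this
  obtain ⟨k, g, hg, hg0, hge⟩ := han.exists_eventuallyEq_pow_smul_nonzero_iff.2 h0
  have hk : k ≠ 0 := by
    rintro rfl
    have := hge.self_of_nhds
    simp [hG0] at this
    exact hg0 this.symm
  refine ⟨k, fun u u' M hu hu' hd hO => ?_⟩
  set c : ℝ := ‖g 0‖ / 2 with hc
  have hc0 : 0 < c := by have := norm_pos_iff.2 hg0; positivity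
  have hclow : ∀ᶠ τ in 𝓝 (0:ℂ), c * ‖τ‖ ^ k ≤ ‖G (τ • e)‖ := by
    have h1 : ∀ᶠ τ in 𝓝 (0:ℂ), c < ‖g τ‖ :=
      hg.continuousAt.norm.eventually (lt_mem_nhds (by rw [hc]; linarith [norm_pos_iff.2 hg0]))
    filter_upwards [h1, hge] with τ h1 h2
    rw [h2, sub_zero, norm_smul, norm_pow, mul_comm]
    gcongr
  obtain ⟨s₁, hs₁, hlow⟩ := Metric.eventually_nhds_iff.1 hclow
  obtain ⟨L, hL, s₂, hs₂, hlip⟩ := exists_lip hG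
  obtain ⟨K, hK0, hK⟩ := hO.exists_pos
  obtain ⟨s₃, hs₃, hin⟩ := Metric.eventually_nhds_iff.1 (hd.eventually.and
    (hu'.eventually_analyticAt.and hK.bound))
  set B : ℝ := c / (2 * L) with hB
  have hB0 : 0 < B := by positivity
  set s : ℝ := min s₁ (min s₂ s₃) with hs
  have hs0 : 0 < s := by positivity
  set r₀ : ℝ := min (min 1 r) (s / (2 * (1 + B + ‖e‖))) with hr₀
  have hr₀0 : 0 < r₀ := by have := hgood.pos; positivity
  have hr₀s : r₀ * (1 + B + ‖e‖) < s := by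
    have h1 : r₀ ≤ s / (2 * (1 + B + ‖e‖)) := min_le_right _ _
    have h2 : 0 < 1 + B + ‖e‖ := by positivity
    calc r₀ * (1 + B + ‖e‖) ≤ s / (2 * (1 + B + ‖e‖)) * (1 + B + ‖e‖) := by gcongr
      _ = s / 2 := by field_simp
      _ < s := by linarith
  have hr₀1 : r₀ ≤ 1 := (min_le_left _ _).trans (min_le_left _ _)
  have hr₀r : r₀ ≤ r := (min_le_left _ _).trans (min_le_right _ _)
  have hcpt : IsCompact {τ : ℂ | r₀ ≤ ‖τ‖ ∧ ‖τ‖ ≤ r} :=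
    (isCompact_normLe r).of_isClosed_subset
      ((isClosed_le continuous_const continuous_norm).inter
        (isClosed_le continuous_norm continuous_const)) (fun τ h => h.2)
  have houter := eventually_forall_circle hcpt (q := 0) (b := e) (p := fun x => G x ≠ 0)
    (fun τ hτ => (hgood.an τ hτ.2).continuousAt.eventually_ne (by
      rw [zero_add]
      refine hne τ ?_ hτ.2
      rintro rfl
      have := hτ.1
      simp at this; linarith))
  rw [isBigO_iff]
  refine ⟨2 * K * ((B + ‖e‖) ^ k / B) ^ M, ?_⟩
  have hsmall : ∀ᶠ p in 𝓝 (0:E), ‖p‖ < B * r₀ ^ k := by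
    have : ContinuousAt (fun p : E => ‖p‖) 0 := by fun_prop
    refine this.eventually (gt_mem_nhds ?_)
    simp only [norm_zero]; positivity
  have hsmall2 : ∀ᶠ p in 𝓝 (0:E), p = 0 → ‖remG G e r u p‖ ≤
      2 * K * ((B + ‖e‖) ^ k / B) ^ M * ‖‖p‖ ^ M‖ := by
    refine Eventually.of_forall ?_
    rintro p rfl
    have h1 : remG G e r u 0 = u 0 := by simp [remG, hG0]
    have h2 : u 0 = u' 0 := by
      obtain ⟨w, -, hw⟩ := hd
      have := hw.self_of_nhds
      rw [hG0, zero_mul] at this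
      exact sub_eq_zero.1 this
    rw [h1, h2]
    have h3 := (hin (y := 0) (by simpa using hs₃)).2.2
    refine h3.trans ?_
    rcases Nat.eq_zero_or_pos M with rfl | hM
    · simp; linarith
    · simp [hk, hM.ne']
  filter_upwards [hgood.eventually, hu.eventually, houter, hsmall, hsmall2] with p hgp hup hout hp hp0
  by_cases hpz : p = 0
  · exact hp0 hpz
  have hpn : 0 < ‖p‖ := norm_pos_iff.2 hpz
  -- the radius adapted to `p`
  set ρ : ℝ := (‖p‖ / B) ^ ((k:ℝ)⁻¹) with hρ
  have hρ0 : 0 < ρ := by positivity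
  have hρk : ρ ^ k = ‖p‖ / B := Real.rpow_inv_natCast_pow (by positivity) hk
  have hpρ : ‖p‖ = B * ρ ^ k := by rw [hρk]; field_simp
  have hρr₀ : ρ < r₀ := by
    rw [hpρ] at hp
    exact lt_of_pow_lt_pow_left₀ k hr₀0.le (lt_of_mul_lt_mul_left hp hB0.le)
  have hρ1 : ρ ≤ 1 := hρr₀.le.trans hr₀1
  have hpρ1 : ‖p‖ ≤ B * ρ := by
    rw [hpρ]
    gcongr
    exact pow_le_of_le_one hρ0.le hρ1 hk
  -- points `p + τ e` with `‖τ‖ ≤ r₀` are in the small ball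
  have hball : ∀ τ : ℂ, ‖τ‖ ≤ r₀ → ‖p + τ • e‖ < s ∧ ‖τ • e‖ < s ∧ ‖τ‖ < s := by
    intro τ hτ
    have h1 : ‖τ • e‖ ≤ r₀ * ‖e‖ := by rw [norm_smul]; gcongr
    have h2 : ‖p‖ ≤ B * r₀ := hpρ1.trans (by gcongr)
    have h3 := norm_add_le p (τ • e)
    have h4 : r₀ * (1 + B + ‖e‖) = r₀ + B * r₀ + r₀ * ‖e‖ := by ring
    have h5 : 0 < B * r₀ := by positivity
    have h6 : 0 ≤ r₀ * ‖e‖ := by positivity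
    refine ⟨by linarith, by linarith, by linarith⟩
  have hlowp : ∀ τ : ℂ, ρ ≤ ‖τ‖ → ‖τ‖ ≤ r₀ → L * ‖p‖ ≤ ‖G (p + τ • e)‖ := by
    intro τ h1 h2
    obtain ⟨b1, b2, b3⟩ := hball τ h2
    have h3 : c * ‖τ‖ ^ k ≤ ‖G (τ • e)‖ :=
      hlow (by simpa using b3.trans_le (min_le_left _ _))
    have h4 := hlip (p + τ • e) (τ • e) (b1.trans_le ((min_le_right _ _).trans (min_le_left _ _)))
      (b2.trans_le ((min_le_right _ _).trans (min_le_left _ _)))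
    rw [add_sub_cancel_right] at h4
    have h5 : c * ρ ^ k = 2 * L * ‖p‖ := by rw [hρk, hB]; field_simp
    have h6 : c * ρ ^ k ≤ c * ‖τ‖ ^ k := by gcongr
    have h7 := norm_sub_norm_le (G (τ • e)) (G (p + τ • e))
    rw [norm_sub_rev] at h7
    linarith
  have hnz : ∀ τ : ℂ, ρ ≤ ‖τ‖ → ‖τ‖ ≤ r → G (p + τ • e) ≠ 0 := by
    intro τ h1 h2
    rcases le_total ‖τ‖ r₀ with h3 | h3
    · have := hlowp τ h1 h3
      have h4 : 0 < L * ‖p‖ := by positivity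
      exact norm_pos_iff.1 (h4.trans_le this)
    · exact hout τ ⟨h3, h2⟩
  have hρr : ρ ≤ r := hρr₀.le.trans hr₀r
  have hgρ : GoodDisc G e ρ p := ⟨hρ0, fun τ hτ => hgp.an τ (hτ.trans hρr),
    fun τ hτ => hnz τ hτ.ge (hτ.le.trans hρr)⟩
  have huρ : AnDisc e ρ p u := fun τ hτ => hup τ (hτ.trans hρr)
  have hin' : ∀ τ : ℂ, ‖τ‖ ≤ ρ → LDvd G (fun p => u p - u' p) (p + τ • e) ∧
      AnalyticAt ℂ u' (p + τ • e) ∧ ‖u' (p + τ • e)‖ ≤ K * (((B + ‖e‖) * ρ) ^ k) ^ M := by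
    intro τ hτ
    obtain ⟨b1, b2, b3⟩ := hball τ (hτ.trans hρr₀.le)
    obtain ⟨h1, h2, h3⟩ := hin (y := p + τ • e)
      (by simpa using b1.trans_le ((min_le_right _ _).trans (min_le_right _ _)))
    refine ⟨h1, h2, h3.trans ?_⟩
    rw [norm_pow, norm_norm, pow_mul]
    gcongr
    calc ‖p + τ • e‖ ≤ ‖p‖ + ‖τ • e‖ := norm_add_le _ _
      _ ≤ B * ρ + ρ * ‖e‖ := by rw [norm_smul]; gcongr
      _ = _ := by ring
  have hu'ρ : AnDisc e ρ p u' := fun τ hτ => (hin' τ hτ).2.1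
  have hRr : remG G e r u p = remG G e ρ u p := by
    rw [remG, remG, circleAverage_annulus hρ0 hρr]
    intro τ h1 h2
    exact (hup τ h2).line.fun_div (hgp.an τ h2).line (hnz τ h1 h2)
  have hRR : remG G e ρ u p = remG G e ρ u' p := by
    rw [← sub_eq_zero, ← hgρ.remG_sub huρ hu'ρ]
    exact hgρ.remG_eq_zero fun τ hτ => LDvd.line (T := fun p => u p - u' p) (hin' τ hτ).1
  rw [hRr, hRR, remG]
  set X : ℝ := K * (((B + ‖e‖) * ρ) ^ k) ^ M with hX
  have hX0 : 0 ≤ X := by positivity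
  have hGp : ‖G p‖ ≤ L * ‖p‖ := by
    have hps : ‖p‖ < s := by simpa using (hball 0 (by simpa using hr₀0.le)).1
    have := hlip p 0 (hps.trans_le ((min_le_right _ _).trans (min_le_left _ _)))
      (by simpa using hs₂)
    simpa [hG0] using this
  have havg : ‖Real.circleAverage (fun τ => u' (p + τ • e) / G (p + τ • e)) 0 ρ‖ ≤ X / (L * ‖p‖) := by
    refine norm_circleAverage_le_aux hρ0 ?_
    intro τ hτ
    rw [norm_div]
    gcongr
    · exact (hin' τ hτ.le).2.2
    · exact hlowp τ hτ.ge (hτ.le.trans hρr₀.le)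
  have h1 : ‖u' p‖ ≤ X := by simpa using (hin' 0 (by simpa using hρ0.le)).2.2
  have h2 : ‖G p * Real.circleAverage (fun τ => u' (p + τ • e) / G (p + τ • e)) 0 ρ‖ ≤ X := by
    rw [norm_mul]
    calc _ ≤ L * ‖p‖ * (X / (L * ‖p‖)) := by gcongr
      _ = X := by field_simp
  refine (norm_sub_le _ _).trans ((add_le_add h1 h2).trans (le_of_eq ?_))
  rw [hX, norm_pow, norm_norm, mul_pow, hρk, hpρ]
  simp only [div_pow, mul_pow]
  field_simp
  ring

end Flat

/-! ### First integrals depending on fewer variables -/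

section Split
open Asymptotics
variable {E : Type*} [NormedAddCommGroup E] [NormedSpace ℂ E] [FiniteDimensional ℂ E]
  {ι : Type*} [Fintype ι]

theorem AnalyticAt.isBigO_norm {E : Type*} [NormedAddCommGroup E] [NormedSpace ℂ E] {G : E → ℂ} (hG : AnalyticAt ℂ G 0) (hG0 : G 0 = 0) :
    G =O[𝓝 0] fun p => ‖p‖ := by
  have := hG.differentiableAt.isBigO_sub
  simpa [hG0] using this.norm_right

/-- A germ whose derivatives in the directions `v j` are divisible by `G ^ N` differs from its
restriction to the image of the projection along these directions by a germ of order `N`. -/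
theorem split_isBigO {P : E →L[ℂ] E} {v : ι → E} {l : ι → E →L[ℂ] ℂ}
    (hP : ∀ p, p = P p + ∑ j, l j p • v j) {G h' : E → ℂ} {κ : ι → E → ℂ} {N : ℕ}
    (hG : AnalyticAt ℂ G 0) (hG0 : G 0 = 0) (hh' : AnalyticAt ℂ h' 0)
    (hκ : ∀ j, AnalyticAt ℂ (κ j) 0)
    (hder : ∀ j, ∀ᶠ p in 𝓝 0, fderiv ℂ h' p (v j) = G p ^ N * κ j p) :
    (fun p => h' p - h' (P p)) =O[𝓝 0] fun p => ‖p‖ ^ N := by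
  have h1 : ∀ j, (fun p => fderiv ℂ h' p (v j)) =O[𝓝 0] fun p => ‖p‖ ^ N := by
    intro j
    have h2 := ((hG.isBigO_norm hG0).pow N).mul ((hκ j).continuousAt.isBigO_one ℝ)
    simp only [mul_one] at h2
    exact h2.congr' ((hder j).mono fun p hp => hp.symm) (Eventually.of_forall fun _ => rfl)
  choose C hC hCb using fun j => (h1 j).exists_pos
  obtain ⟨s, hs, hball⟩ := Metric.eventually_nhds_iff.1
    ((eventually_all.2 fun j => (hCb j).bound).and hh'.eventually_analyticAt)
  set A : ℝ := 2 * ‖P‖ + 1 with hA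
  have hA0 : 0 < A := by positivity
  have hsm : ∀ᶠ p in 𝓝 (0:E), ‖p‖ < min 1 (s / A) := by
    have : ContinuousAt (fun p : E => ‖p‖) 0 := by fun_prop
    refine this.eventually (gt_mem_nhds ?_)
    simp only [norm_zero]; positivity
  rw [isBigO_iff]
  refine ⟨∑ j, ‖l j‖ * (C j * A ^ N), ?_⟩
  filter_upwards [hsm] with p hp
  have hp1 : ‖p‖ < 1 := hp.trans_le (min_le_left _ _)
  have hp2 : A * ‖p‖ < s := by
    have := hp.trans_le (min_le_right _ _)
    rwa [lt_div_iff₀ hA0, mul_comm] at this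
  have hx : ∀ t ∈ Set.Icc (0:ℝ) 1, ‖P p + (t:ℂ) • (p - P p)‖ ≤ A * ‖p‖ := by
    intro t ht
    have h3 : ‖P p‖ ≤ ‖P‖ * ‖p‖ := P.le_opNorm p
    have h4 : ‖(t:ℂ) • (p - P p)‖ ≤ 1 * (‖p‖ + ‖P p‖) := by
      rw [norm_smul, Complex.norm_real, Real.norm_of_nonneg ht.1]
      gcongr
      · exact ht.2
      · exact norm_sub_le _ _
    have := norm_add_le (P p) ((t:ℂ) • (p - P p))
    have h5 : A * ‖p‖ = 2 * (‖P‖ * ‖p‖) + ‖p‖ := by rw [hA]; ring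
    linarith
  have hx' : ∀ t ∈ Set.Icc (0:ℝ) 1, dist (P p + (t:ℂ) • (p - P p)) 0 < s := by
    intro t ht
    rw [dist_zero_right]; exact (hx t ht).trans_lt hp2
  have key := norm_image_sub_le_of_norm_deriv_le_segment_01'
    (f := fun t : ℝ => h' (P p + (t:ℂ) • (p - P p)))
    (f' := fun t : ℝ => fderiv ℂ h' (P p + (t:ℂ) • (p - P p)) (p - P p))
    (C := (∑ j, ‖l j‖ * (C j * A ^ N)) * ‖‖p‖ ^ N‖) ?_ ?_
  · simpa using key
  · intro t ht
    have h6 := (hball (hx' t ht)).2.differentiableAt.hasFDerivAt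
    have h7 : HasDerivAt (fun t : ℝ => P p + (t:ℂ) • (p - P p)) (p - P p) t := by
      have h8 : HasDerivAt (fun t : ℝ => (t:ℂ)) 1 t := Complex.ofRealCLM.hasDerivAt
      simpa using (h8.smul_const (p - P p)).const_add (P p)
    exact ((h6.restrictScalars ℝ).comp_hasDerivAt t h7).hasDerivWithinAt
  · intro t ht
    have ht' : t ∈ Set.Icc (0:ℝ) 1 := ⟨ht.1, ht.2.le⟩
    set x := P p + (t:ℂ) • (p - P p) with hxd
    have h8 : p - P p = ∑ j, l j p • v j := by
      rw [sub_eq_iff_eq_add]; conv_lhs => rw [hP p]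
      rw [add_comm]
    rw [h8, map_sum, Finset.sum_mul]
    refine (norm_sum_le _ _).trans (Finset.sum_le_sum fun j _ => ?_)
    rw [map_smul, norm_smul]
    have h9 := (hball (hx' t ht')).1 j
    rw [norm_pow, norm_norm] at h9 ⊢
    have h10 : ‖l j p‖ ≤ ‖l j‖ * 1 := (l j).le_opNorm_of_le hp1.le
    calc ‖l j p‖ * ‖fderiv ℂ h' x (v j)‖ ≤ ‖l j‖ * 1 * (C j * ‖x‖ ^ N) := by gcongr
      _ ≤ ‖l j‖ * 1 * (C j * (A * ‖p‖) ^ N) := by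
        have := (hC j).le
        have := hx t ht'
        gcongr
      _ = _ := by rw [mul_pow]; ring

/-- Nondegenerate case: if `G` does not vanish identically on the kernel of `P`, a first integral
along the kernel agrees modulo `G` with a function factoring through `P`. -/
theorem split_nondeg {P : E →L[ℂ] E} {v : ι → E} {l : ι → E →L[ℂ] ℂ}
    (hP : ∀ p, p = P p + ∑ j, l j p • v j) (hPv : ∀ j, P (v j) = 0) {G h : E → ℂ}
    (hG : AnalyticAt ℂ G 0) (hG0 : G 0 = 0) (hh : AnalyticAt ℂ h 0)
    (hd : ∀ i j, LDvd G (fun p => fderiv ℂ h p (v i) * fderiv ℂ G p (v j) -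
      fderiv ℂ h p (v j) * fderiv ℂ G p (v i)) 0)
    {U : Set E} (hU : U ∈ 𝓝 0) {d : ℕ}
    (hdim : dimH ({p | G p = 0 ∧ ∀ i, fderiv ℂ G p (v i) = 0} ∩ U) < d)
    (hd4 : d + 4 ≤ 2 * Module.finrank ℂ E)
    {e : E} (hPe : P e = 0) (he : ¬ ∀ᶠ τ in 𝓝 (0:ℂ), G (τ • e) = 0) :
    ∃ f : E → ℂ, AnalyticAt ℂ f 0 ∧ LDvd G (fun p => h p - f (P p)) 0 := by
  have hPP : ∀ p, P (P p) = P p := by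
    intro p
    conv_rhs => rw [hP p]
    rw [map_add, map_sum]
    simp [hPv]
  have hGne : ¬ ∀ᶠ p in 𝓝 0, G p = 0 := by
    intro hc
    have ht : Tendsto (fun τ : ℂ => τ • e) (𝓝 0) (𝓝 0) := by
      have : Continuous (fun τ : ℂ => τ • e) := by fun_prop
      simpa using this.tendsto 0
    exact he (ht.eventually hc)
  obtain ⟨r, hgood, hne, hhr⟩ := exists_goodDisc (q := 0) (e := e) hG (by simpa using he)
    hh.eventually_analyticAt
  have hhd : AnDisc e r 0 h := hhr
  have h1d : AnDisc e r 0 (fun _ => (1:ℂ)) := fun _ _ => analyticAt_const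
  simp only [zero_add] at hne
  have hPan : ∀ {φ : E → ℂ}, AnalyticAt ℂ φ 0 → AnDisc e r 0 (fun p => φ (P p)) := by
    intro φ hφ τ _
    refine AnalyticAt.fun_comp ?_ (P.analyticAt _)
    simpa [hPe] using hφ
  have hPinv : ∀ (φ : E → ℂ) (p : E) (τ : ℂ), φ (P (p + τ • e)) = φ (P p) := by
    intro φ p τ; simp [hPe]
  have hsub : ∀ {φ : E → ℂ}, AnalyticAt ℂ φ 0 → ∀ᶠ p in 𝓝 0,
      remG G e r (fun p => h p - φ (P p)) p =
        remG G e r h p - φ (P p) * remG G e r (fun _ => (1:ℂ)) p := by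
    intro φ hφ
    filter_upwards [hgood.eventually, hhd.eventually, (hPan hφ).eventually] with p h1 h2 h3
    rw [h1.remG_sub h2 h3, ← remG_invariant (N := fun p => φ (P p)) (hPinv φ p)]
    simp
  set R1 := remG G e r (fun _ => (1:ℂ)) with hR1
  have hR1an : AnalyticAt ℂ R1 0 := hgood.an_remG h1d
  have hR10 : R1 0 ≠ 0 := by simp [hR1, remG, hG0]
  set f : E → ℂ := fun p => remG G e r h p / R1 p with hf
  have hfan : AnalyticAt ℂ f 0 := (hgood.an_remG hhd).fun_div hR1an hR10
  have hPt : Tendsto P (𝓝 0) (𝓝 0) := by simpa using P.continuous.tendsto 0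
  have hflat : ∀ᶠ p in 𝓝 0, f p - f (P p) = 0 := by
    refine eventually_zero_of_flat (hfan.fun_sub ((hPan hfan).self hgood.pos)) ?_
    intro M
    obtain ⟨k, hk⟩ := remG_isBigO hgood hG0 hne
    obtain ⟨h', κ, hh', hhh', hκ, hder, -⟩ :=
      iterate_factor hG hG0 hGne hh hd hU hdim hd4 (k * M)
    have hO := split_isBigO hP hG hG0 hh' hκ hder
    have hh'P : AnalyticAt ℂ (fun p => h' (P p)) 0 := (hPan hh').self hgood.pos
    have h1 := hk (fun p => h p - h' (P p)) (fun p => h' p - h' (P p)) M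
      (fun τ hτ => (hhd τ hτ).fun_sub (hPan hh' τ hτ)) (hh'.fun_sub hh'P)
      (hhh'.congr (Eventually.of_forall fun p => by ring)) hO
    have h2 : (fun p => f p - h' (P p)) =O[𝓝 0] fun p => ‖p‖ ^ M := by
      have h3 := h1.mul ((hR1an.inv hR10).continuousAt.isBigO_one ℝ)
      simp only [mul_one] at h3
      refine h3.congr' ?_ (Eventually.of_forall fun _ => rfl)
      filter_upwards [hsub hh', hR1an.continuousAt.eventually_ne hR10] with p h4 h5
      rw [h4, hf, Pi.inv_apply]
      field_simp
    have h3 : (fun p => f (P p) - h' (P p)) =O[𝓝 0] fun p => ‖p‖ ^ M := by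
      have h4 := h2.comp_tendsto hPt
      have h5 : (fun p => ‖P p‖ ^ M) =O[𝓝 0] fun p => ‖p‖ ^ M :=
        ((P.isBigO_id (𝓝 0)).norm_norm).pow M
      refine (h4.trans h5).congr' (Eventually.of_forall fun p => ?_) (Eventually.of_forall fun _ => rfl)
      simp only [Function.comp_apply, hPP]
    refine (h2.sub h3).congr' (Eventually.of_forall fun p => ?_) (Eventually.of_forall fun _ => rfl)
    ring
  refine ⟨f, hfan, hgood.LDvd_of_remG (fun τ hτ => (hhd τ hτ).fun_sub (hPan hfan τ hτ)) ?_⟩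
  filter_upwards [hsub hfan, hflat, hR1an.continuousAt.eventually_ne hR10] with p h1 h2 h3
  rw [h1, ← sub_eq_zero.1 h2, hf]
  field_simp
  ring

/-- Degenerate case: if `G` vanishes on the image of `P`, a first integral along the kernel agrees
modulo `G` with its restriction to this image. -/
theorem split_deg {P : E →L[ℂ] E} {v : ι → E} {l : ι → E →L[ℂ] ℂ}
    (hP : ∀ p, p = P p + ∑ j, l j p • v j) {G h : E → ℂ}
    (hG : AnalyticAt ℂ G 0) (hG0 : G 0 = 0) (hGne : ¬ ∀ᶠ p in 𝓝 0, G p = 0) (hh : AnalyticAt ℂ h 0)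
    (hd : ∀ i j, LDvd G (fun p => fderiv ℂ h p (v i) * fderiv ℂ G p (v j) -
      fderiv ℂ h p (v j) * fderiv ℂ G p (v i)) 0)
    {U : Set E} (hU : U ∈ 𝓝 0) {d : ℕ}
    (hdim : dimH ({p | G p = 0 ∧ ∀ i, fderiv ℂ G p (v i) = 0} ∩ U) < d)
    (hd4 : d + 4 ≤ 2 * Module.finrank ℂ E)
    (hPG : ∀ᶠ p in 𝓝 0, G (P p) = 0) :
    LDvd G (fun p => h p - h (P p)) 0 := by
  obtain ⟨e, he⟩ := exists_line_ne_zero hG hGne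
  have hPan : ∀ {φ : E → ℂ}, AnalyticAt ℂ φ 0 → AnalyticAt ℂ (fun p => φ (P p)) 0 := by
    intro φ hφ
    exact AnalyticAt.fun_comp (by simpa using hφ) (P.analyticAt _)
  have hPt : Tendsto P (𝓝 0) (𝓝 0) := by simpa using P.continuous.tendsto 0
  obtain ⟨r, hgood, hne, hhr⟩ := exists_goodDisc (q := 0) (e := e) hG he
    (hh.fun_sub (hPan hh)).eventually_analyticAt
  simp only [zero_add] at hne
  refine hgood.LDvd_of_remG hhr (eventually_zero_of_flat (hgood.an_remG hhr) ?_)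
  intro M
  obtain ⟨k, hk⟩ := remG_isBigO hgood hG0 hne
  obtain ⟨h', κ, hh', hhh', hκ, hder, -⟩ :=
    iterate_factor hG hG0 hGne hh hd hU hdim hd4 (k * M)
  have hO := split_isBigO hP hG hG0 hh' hκ hder
  refine hk (fun p => h p - h (P p)) (fun p => h' p - h' (P p)) M hhr (hh'.fun_sub (hPan hh')) ?_ hO
  refine hhh'.congr ?_
  obtain ⟨w, -, hw⟩ := hhh'
  filter_upwards [hPt.eventually hw, hPG] with p h1 h2
  rw [h2, zero_mul] at h1
  linear_combination -h1

end Split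

/-! ### The complexified Levi foliation -/

/-- Divisibility by `G` may be tested at the regular points of `{G = 0}` outside a set of
real codimension greater than `4`. -/
theorem LDvd.of_regular {E : Type*} [NormedAddCommGroup E] [NormedSpace ℂ E]
    [FiniteDimensional ℂ E] {G T : E → ℂ} (hG : AnalyticAt ℂ G 0)
    (hGne : ¬ ∀ᶠ p in 𝓝 0, G p = 0) (hT : AnalyticAt ℂ T 0) {S U : Set E} (hU : U ∈ 𝓝 0) {d : ℕ}
    (hdim : dimH (S ∩ U) < d) (hd4 : d + 4 ≤ 2 * Module.finrank ℂ E)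
    (hS : ∀ᶠ p in 𝓝 0, G p = 0 → p ∉ S → fderiv ℂ G p ≠ 0 ∧ ∀ᶠ p' in 𝓝 p, G p' = 0 → T p' = 0) :
    LDvd G T 0 := by
  have : CompleteSpace E := FiniteDimensional.complete ℂ E
  obtain ⟨e, he⟩ := exists_line_ne_zero hG hGne
  refine LDvd.of_dense hT hG he (dense_avoid hdim hd4 e 0)
    (inter_mem hU (inter_mem hS (inter_mem hG.eventually_analyticAt hT.eventually_analyticAt))) ?_
  rintro p hpA - ξ ⟨hξU, hξS, hξG, hξT⟩
  refine LDvd.line (N := G) (T := T) ?_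
  have hn : p + ξ • e ∉ S := fun hc => hpA 0 ξ (by simpa using ⟨hc, hξU⟩)
  by_cases h0 : G (p + ξ • e) = 0
  · obtain ⟨h1, h2⟩ := hξS h0 hn
    exact LDvd.of_smooth hξG hξT h1 h2
  · exact LDvd.of_ne hξG hξT h0

section Base
variable {n : ℕ}

/-- The `w`-coordinate directions of `ℂⁿ × ℂⁿ`. -/
def dirW (j : Fin n) : (Fin n → ℂ) × (Fin n → ℂ) := (0, Pi.single j 1)

/-- The `z`-coordinate directions of `ℂⁿ × ℂⁿ`. -/
def dirZ (j : Fin n) : (Fin n → ℂ) × (Fin n → ℂ) := (Pi.single j 1, 0)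

/-- The points of `{G = 0}` at which one of the two partial differentials of `G` vanishes. -/
def badSet (G : ((Fin n → ℂ) × (Fin n → ℂ)) → ℂ) : Set ((Fin n → ℂ) × (Fin n → ℂ)) :=
  {p | G p = 0 ∧ ((∀ i, fderiv ℂ G p (dirW i) = 0) ∨ ∀ i, fderiv ℂ G p (dirZ i) = 0)}

/-- Vanishing along `{G = 0}`, in divisibility form, of the `2 × 2` minors of `(dh, dG)` in the
directions `v`. -/
def Minors (v : Fin n → (Fin n → ℂ) × (Fin n → ℂ)) (G h : ((Fin n → ℂ) × (Fin n → ℂ)) → ℂ) : Prop :=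
  ∀ i j, LDvd G (fun p => fderiv ℂ h p (v i) * fderiv ℂ G p (v j) -
      fderiv ℂ h p (v j) * fderiv ℂ G p (v i)) 0

theorem prod_eq_sum (p : (Fin n → ℂ) × (Fin n → ℂ)) :
    p = ∑ j, p.1 j • dirZ j + ∑ j, p.2 j • dirW j := by
  ext j
  · simp [dirZ, dirW, Prod.fst_sum, Finset.sum_apply, Pi.single_apply]
  · simp [dirZ, dirW, Prod.snd_sum, Finset.sum_apply, Pi.single_apply]

theorem badSet_subset (G : ((Fin n → ℂ) × (Fin n → ℂ)) → ℂ) : badSet G ⊆ singMC G ∪ singLC G := by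
  rintro p ⟨h0, h⟩
  by_cases hd : fderiv ℂ G p = 0
  · exact Or.inl ⟨h0, hd⟩
  refine Or.inr ⟨h0, hd, fun v hv => ?_⟩
  rcases h with h | h
  · rw [← hv]
    conv_rhs => rw [prod_eq_sum v, map_add, map_sum, map_sum]
    conv_lhs => rw [prod_eq_sum (v.1, 0), map_add, map_sum, map_sum]
    simp [h]
  · rw [prod_eq_sum (v.1, 0), map_add, map_sum, map_sum]
    simp [h]

/-- By the dimension hypotheses the bad set has real codimension greater than four in `ℂⁿ × ℂⁿ`. -/
theorem badSet_dim (hn : 2 ≤ n) {G : ((Fin n → ℂ) × (Fin n → ℂ)) → ℂ}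
    (hdim : ∃ U ∈ 𝓝 (0 : (Fin n → ℂ) × (Fin n → ℂ)),
      dimH (singMC G ∩ U) ≤ ((4 * n - 8 : ℕ) : ℝ≥0∞))
    (hcodim : ∃ U ∈ 𝓝 (0 : (Fin n → ℂ) × (Fin n → ℂ)),
      dimH (singLC G ∩ U) ≤ ((4 * n - 6 : ℕ) : ℝ≥0∞)) :
    ∃ U ∈ 𝓝 (0 : (Fin n → ℂ) × (Fin n → ℂ)), dimH (badSet G ∩ U) < ((4 * n - 4 : ℕ) : ℝ≥0∞) := by
  obtain ⟨U, hU, h1⟩ := hdim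
  obtain ⟨W, hW, h2⟩ := hcodim
  refine ⟨U ∩ W, inter_mem hU hW, ?_⟩
  have hsub : badSet G ∩ (U ∩ W) ⊆ (singMC G ∩ U) ∪ (singLC G ∩ W) := by
    rintro p ⟨hp, hpU, hpW⟩
    rcases badSet_subset G hp with h | h
    · exact Or.inl ⟨h, hpU⟩
    · exact Or.inr ⟨h, hpW⟩
  refine (dimH_mono hsub).trans_lt ?_
  rw [dimH_union]
  refine max_lt (h1.trans_lt ?_) (h2.trans_lt ?_)
  · exact_mod_cast (by omega : 4 * n - 8 < 4 * n - 4)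
  · exact_mod_cast (by omega : 4 * n - 6 < 4 * n - 4)

theorem finrank_prod_pi : Module.finrank ℂ ((Fin n → ℂ) × (Fin n → ℂ)) = 2 * n := by
  simp [two_mul]

/-- The first integral condition, at the regular points of `{G = 0}`, as a divisibility statement
for germs at the origin. -/
theorem base_minors (hn : 2 ≤ n) {G h : ((Fin n → ℂ) × (Fin n → ℂ)) → ℂ}
    (hG : AnalyticAt ℂ G 0) (hGne : ¬ ∀ᶠ p in 𝓝 0, G p = 0) (hh : AnalyticAt ℂ h 0)
    {U : Set ((Fin n → ℂ) × (Fin n → ℂ))} (hU : U ∈ 𝓝 0)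
    (hdim : dimH (badSet G ∩ U) < ((4 * n - 4 : ℕ) : ℝ≥0∞))
    (hfi : ∀ᶠ p in 𝓝 (0 : (Fin n → ℂ) × (Fin n → ℂ)), G p = 0 → fderiv ℂ G p ≠ 0 →
        ∀ u v : (Fin n → ℂ) × (Fin n → ℂ),
          fderiv ℂ G p u = 0 → fderiv ℂ G p v = 0 →
          fderiv ℂ h p u * fderiv ℂ G p (v.1, 0) -
            fderiv ℂ h p v * fderiv ℂ G p (u.1, 0) = 0) :
    Minors dirW G h ∧ Minors dirZ G h := by
  have hd4 : (4 * n - 4) + 4 ≤ 2 * Module.finrank ℂ ((Fin n → ℂ) × (Fin n → ℂ)) := by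
    rw [finrank_prod_pi]; omega
  -- a tangent vector on which the form `α` does not vanish, paired with tangent vectors in its kernel
  have key : ∀ p, G p = 0 → p ∉ badSet G → (fderiv ℂ G p ≠ 0 ∧
      ((∀ u v : (Fin n → ℂ) × (Fin n → ℂ), fderiv ℂ G p u = 0 → fderiv ℂ G p v = 0 →
          fderiv ℂ h p u * fderiv ℂ G p (v.1, 0) -
            fderiv ℂ h p v * fderiv ℂ G p (u.1, 0) = 0) →
        ∀ u, fderiv ℂ G p u = 0 → fderiv ℂ G p (u.1, 0) = 0 → fderiv ℂ h p u = 0)) := by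
    intro p h0 hb
    simp only [badSet, Set.mem_ofPred_eq, h0, true_and, not_or, not_forall] at hb
    obtain ⟨⟨i, hi⟩, j, hj⟩ := hb
    refine ⟨fun hc => hi (by rw [hc]; rfl), fun hf u hu hu1 => ?_⟩
    have h3 := hf u (fderiv ℂ G p (dirW i) • dirZ j - fderiv ℂ G p (dirZ j) • dirW i) hu
      (by simp only [map_sub, map_smul, smul_eq_mul]; ring)
    have h4 : (((fderiv ℂ G p (dirW i) • dirZ j - fderiv ℂ G p (dirZ j) • dirW i).1, 0) :
        (Fin n → ℂ) × (Fin n → ℂ)) = fderiv ℂ G p (dirW i) • dirZ j := by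
      simp [dirW, dirZ]
    rw [h4, hu1, map_smul, smul_eq_mul, mul_zero, sub_zero] at h3
    simpa [hi, hj] using h3
  have hcont : ∀ᶠ p in 𝓝 0, G p = 0 → p ∉ badSet G → ∀ᶠ p' in 𝓝 p, G p' = 0 → p' ∉ badSet G := by
    filter_upwards [hG.eventually_analyticAt] with p hp h0 hb
    simp only [badSet, Set.mem_ofPred_eq, h0, true_and, not_or, not_forall] at hb
    obtain ⟨⟨i, hi⟩, j, hj⟩ := hb
    filter_upwards [(hp.dirDeriv (dirW i)).continuousAt.eventually_ne hi,
      (hp.dirDeriv (dirZ j)).continuousAt.eventually_ne hj] with p' h1 h2 _ hb'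
    rcases hb'.2 with h | h
    · exact h1 (h i)
    · exact h2 (h j)
  have main : ∀ v : Fin n → (Fin n → ℂ) × (Fin n → ℂ),
      (∀ p i j, fderiv ℂ G p (((fderiv ℂ G p (v j) • v i - fderiv ℂ G p (v i) • v j) :
        (Fin n → ℂ) × (Fin n → ℂ)).1, 0) = 0) → Minors v G h := by
    intro v hv i j
    refine LDvd.of_regular hG hGne ?_ hU hdim hd4 ?_
    · exact ((hh.dirDeriv _).fun_mul (hG.dirDeriv _)).fun_sub ((hh.dirDeriv _).fun_mul (hG.dirDeriv _))
    filter_upwards [hcont, hfi.eventually_nhds] with p hc hf h0 hb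
    refine ⟨(key p h0 hb).1, ?_⟩
    filter_upwards [hc h0 hb, hf] with p' hb' hf' h0'
    obtain ⟨h1, h2⟩ := key p' h0' (hb' h0')
    have h3 := h2 (hf' h0' h1) _ (by
      rw [map_sub, map_smul, map_smul, smul_eq_mul, smul_eq_mul]; ring) (hv p' i j)
    rw [map_sub, map_smul, map_smul, smul_eq_mul, smul_eq_mul] at h3
    rw [← h3]; ring
  constructor
  · refine main _ fun p i j => ?_
    have : ((fderiv ℂ G p (dirW j) • dirW i - fderiv ℂ G p (dirW i) • dirW j).1, (0 : Fin n → ℂ)) = 0 := by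
      simp [dirW]
    rw [this, map_zero]
  · refine main _ fun p i j => ?_
    have : ((fderiv ℂ G p (dirZ j) • dirZ i - fderiv ℂ G p (dirZ i) • dirZ j).1, (0 : Fin n → ℂ)) =
        fderiv ℂ G p (dirZ j) • dirZ i - fderiv ℂ G p (dirZ i) • dirZ j := by
      simp [dirZ]
    rw [this, map_sub, map_smul, map_smul, smul_eq_mul, smul_eq_mul]; ring

/-- `(z, w) ↦ (z, 0)`. -/
noncomputable def projZ : ((Fin n → ℂ) × (Fin n → ℂ)) →L[ℂ] (Fin n → ℂ) × (Fin n → ℂ) :=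
  (ContinuousLinearMap.inl ℂ _ _).comp (ContinuousLinearMap.fst ℂ _ _)

/-- `(z, w) ↦ (0, w)`. -/
noncomputable def projW : ((Fin n → ℂ) × (Fin n → ℂ)) →L[ℂ] (Fin n → ℂ) × (Fin n → ℂ) :=
  (ContinuousLinearMap.inr ℂ _ _).comp (ContinuousLinearMap.snd ℂ _ _)

theorem projZ_apply (p : (Fin n → ℂ) × (Fin n → ℂ)) : projZ p = (p.1, 0) := rfl
theorem projW_apply (p : (Fin n → ℂ) × (Fin n → ℂ)) : projW p = (0, p.2) := rfl

/-- The coordinate `z_j` on `ℂⁿ × ℂⁿ`. -/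
noncomputable def coordZ (j : Fin n) : ((Fin n → ℂ) × (Fin n → ℂ)) →L[ℂ] ℂ :=
  (ContinuousLinearMap.proj j).comp (ContinuousLinearMap.fst ℂ (Fin n → ℂ) (Fin n → ℂ))

/-- The coordinate `w_j` on `ℂⁿ × ℂⁿ`. -/
noncomputable def coordW (j : Fin n) : ((Fin n → ℂ) × (Fin n → ℂ)) →L[ℂ] ℂ :=
  (ContinuousLinearMap.proj j).comp (ContinuousLinearMap.snd ℂ (Fin n → ℂ) (Fin n → ℂ))

theorem projZ_decomp (p : (Fin n → ℂ) × (Fin n → ℂ)) :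
    p = projZ p + ∑ j, coordW j p • dirW j := by
  conv_lhs => rw [prod_eq_sum p]
  rw [projZ_apply, prod_eq_sum (p.1, 0)]
  simp [coordW]

theorem projW_decomp (p : (Fin n → ℂ) × (Fin n → ℂ)) :
    p = projW p + ∑ j, coordZ j p • dirZ j := by
  conv_lhs => rw [prod_eq_sum p]
  rw [projW_apply, prod_eq_sum (0, p.2)]
  simp [coordZ, add_comm]

variable {G h : ((Fin n → ℂ) × (Fin n → ℂ)) → ℂ}

theorem dim_w {U : Set ((Fin n → ℂ) × (Fin n → ℂ))} {d : ℕ} (hdim : dimH (badSet G ∩ U) < d) :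
    dimH ({p | G p = 0 ∧ ∀ i, fderiv ℂ G p (dirW i) = 0} ∩ U) < d :=
  (dimH_mono (Set.inter_subset_inter_left U (t := badSet G) fun _ hp =>
    show _ ∧ _ from ⟨hp.1, Or.inl hp.2⟩)).trans_lt hdim

theorem dim_z {U : Set ((Fin n → ℂ) × (Fin n → ℂ))} {d : ℕ} (hdim : dimH (badSet G ∩ U) < d) :
    dimH ({p | G p = 0 ∧ ∀ i, fderiv ℂ G p (dirZ i) = 0} ∩ U) < d :=
  (dimH_mono (Set.inter_subset_inter_left U (t := badSet G) fun _ hp =>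
    show _ ∧ _ from ⟨hp.1, Or.inr hp.2⟩)).trans_lt hdim

/-- A first integral agrees on `{G = 0}` with a function of `z` alone. -/
theorem split_z (hn : 2 ≤ n) (hG : AnalyticAt ℂ G 0) (hG0 : G 0 = 0) (hh : AnalyticAt ℂ h 0)
    {U : Set ((Fin n → ℂ) × (Fin n → ℂ))} (hU : U ∈ 𝓝 0)
    (hdim : dimH (badSet G ∩ U) < ((4 * n - 4 : ℕ) : ℝ≥0∞)) (hm : Minors dirW G h)
    {e : Fin n → ℂ} (he : ¬ ∀ᶠ τ in 𝓝 (0:ℂ), G (0, τ • e) = 0) :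
    ∃ f : (Fin n → ℂ) → ℂ, AnalyticAt ℂ f 0 ∧ LDvd G (fun p => h p - f p.1) 0 := by
  have hd4 : (4 * n - 4) + 4 ≤ 2 * Module.finrank ℂ ((Fin n → ℂ) × (Fin n → ℂ)) := by
    rw [finrank_prod_pi]; omega
  obtain ⟨f, hf, h1⟩ := split_nondeg projZ_decomp (fun j => by simp [projZ_apply, dirW]) hG hG0 hh hm
    hU (dim_w hdim)
    hd4 (e := (0, e)) (by simp [projZ_apply]) (by simpa using he)
  refine ⟨fun z => f (z, 0), ?_, h1⟩
  exact AnalyticAt.fun_comp (g := f) (f := fun z : Fin n → ℂ => (z, 0)) hf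
    (AnalyticAt.prod analyticAt_id analyticAt_const)

/-- A first integral agrees on `{G = 0}` with a function of `w` alone. -/
theorem split_w (hn : 2 ≤ n) (hG : AnalyticAt ℂ G 0) (hG0 : G 0 = 0) (hh : AnalyticAt ℂ h 0)
    {U : Set ((Fin n → ℂ) × (Fin n → ℂ))} (hU : U ∈ 𝓝 0)
    (hdim : dimH (badSet G ∩ U) < ((4 * n - 4 : ℕ) : ℝ≥0∞)) (hm : Minors dirZ G h)
    {e : Fin n → ℂ} (he : ¬ ∀ᶠ τ in 𝓝 (0:ℂ), G (τ • e, 0) = 0) :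
    ∃ f : (Fin n → ℂ) → ℂ, AnalyticAt ℂ f 0 ∧ LDvd G (fun p => h p - f p.2) 0 := by
  have hd4 : (4 * n - 4) + 4 ≤ 2 * Module.finrank ℂ ((Fin n → ℂ) × (Fin n → ℂ)) := by
    rw [finrank_prod_pi]; omega
  obtain ⟨f, hf, h1⟩ := split_nondeg projW_decomp (fun j => by simp [projW_apply, dirZ]) hG hG0 hh hm
    hU (dim_z hdim)
    hd4 (e := (e, 0)) (by simp [projW_apply]) (by simpa using he)
  refine ⟨fun z => f (0, z), ?_, h1⟩
  exact AnalyticAt.fun_comp (g := f) (f := fun z : Fin n → ℂ => (0, z)) hf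
    (AnalyticAt.prod analyticAt_const analyticAt_id)

/-- If `{G = 0}` contains both coordinate `n`-planes, every first integral is constant on it. -/
theorem const_of_deg (hn : 2 ≤ n) (hG : AnalyticAt ℂ G 0) (hG0 : G 0 = 0)
    (hGne : ¬ ∀ᶠ p in 𝓝 0, G p = 0) (hh : AnalyticAt ℂ h 0)
    {U : Set ((Fin n → ℂ) × (Fin n → ℂ))} (hU : U ∈ 𝓝 0)
    (hdim : dimH (badSet G ∩ U) < ((4 * n - 4 : ℕ) : ℝ≥0∞)) (hmw : Minors dirW G h)
    (hmz : Minors dirZ G h) (hz : ∀ᶠ z in 𝓝 (0 : Fin n → ℂ), G (z, 0) = 0)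
    (hw : ∀ᶠ w in 𝓝 (0 : Fin n → ℂ), G (0, w) = 0) :
    ∀ᶠ p in 𝓝 0, G p = 0 → h p = h 0 := by
  have hd4 : (4 * n - 4) + 4 ≤ 2 * Module.finrank ℂ ((Fin n → ℂ) × (Fin n → ℂ)) := by
    rw [finrank_prod_pi]; omega
  have h1 := split_deg projZ_decomp hG hG0 hGne hh hmw
    hU (dim_w hdim)
    hd4 (continuous_fst.tendsto' 0 0 rfl |>.eventually hz)
  have h2 := split_deg projW_decomp hG hG0 hGne hh hmz
    hU (dim_z hdim)
    hd4 (continuous_snd.tendsto' 0 0 rfl |>.eventually hw)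
  obtain ⟨v1, -, h1⟩ := h1
  obtain ⟨v2, -, h2⟩ := h2
  have ht : Tendsto (projZ : ((Fin n → ℂ) × (Fin n → ℂ)) → _) (𝓝 0) (𝓝 0) :=
    projZ.continuous.tendsto' 0 0 (map_zero _)
  filter_upwards [h1, ht.eventually h2, continuous_fst.tendsto' 0 0 rfl |>.eventually hz]
    with p a1 a2 a3 h0
  rw [h0, zero_mul, sub_eq_zero] at a1
  rw [projZ_apply, a3, zero_mul, sub_eq_zero, projW_apply] at a2
  rw [a1, projZ_apply, a2]; rfl

end Base

/-! ### Conjugation and Hermitian symmetry -/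

/-- The conjugate `w ↦ conj (φ (conj w))` of a function. -/
def cj {E : Type*} [Star E] (φ : E → ℂ) (w : E) : ℂ := star (φ (star w))

theorem cj_cj {E : Type*} [InvolutiveStar E] (φ : E → ℂ) : cj (cj φ) = φ := by
  funext w; simp [cj]

section Conj
variable {E : Type*} [NormedAddCommGroup E] [NormedSpace ℂ E] [StarAddMonoid E] [NormedStarGroup E]
  [StarModule ℂ E]

/-- The conjugate of a holomorphic germ is holomorphic. -/
theorem AnalyticAt.cj {f : E → ℂ} (hf : AnalyticAt ℂ f 0) : AnalyticAt ℂ (cj f) 0 := by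
  obtain ⟨p, r, hp⟩ := hf
  let Q : ∀ n, MultilinearMap ℂ (fun _ : Fin n => E) ℂ := fun n =>
    { toFun := fun m => star (p n (fun i => star (m i)))
      map_update_add' := by
        intro _ m i x y
        have h : ∀ z, (fun k => star (Function.update m i z k)) =
            Function.update (fun k => star (m k)) i (star z) := by
          intro z; funext k
          rcases eq_or_ne k i with rfl | hk
          · simp
          · simp [hk]
        simp only [h, star_add, (p n).map_update_add]
      map_update_smul' := by
        intro _ m i c x
        have h : ∀ z, (fun k => star (Function.update m i z k)) =
            Function.update (fun k => star (m k)) i (star z) := by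
          intro z; funext k
          rcases eq_or_ne k i with rfl | hk
          · simp
          · simp [hk]
        simp only [h, star_smul, (p n).map_update_smul, smul_eq_mul, star_mul', star_star] }
  have hQ : ∀ n m, ‖Q n m‖ ≤ ‖p n‖ * ∏ i, ‖m i‖ := by
    intro n m
    have := (p n).le_opNorm (fun i => star (m i))
    simp only [norm_star] at this
    calc ‖Q n m‖ = ‖p n (fun i => star (m i))‖ := norm_star _
      _ ≤ _ := this
  let q : FormalMultilinearSeries ℂ E ℂ := fun n => (Q n).mkContinuous ‖p n‖ (hQ n)
  have hq : ∀ n, ‖q n‖ ≤ ‖p n‖ := fun n =>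
    MultilinearMap.mkContinuous_norm_le _ (norm_nonneg _) _
  refine ⟨q, r, ?_, hp.r_pos, ?_⟩
  · exact hp.r_le.trans (FormalMultilinearSeries.radius_le_of_le hq)
  · intro y hy
    have hy' : star y ∈ Metric.eball (0:E) r := by
      simpa [Metric.mem_eball, edist_zero_right, enorm_eq_nnnorm] using hy
    have := (hp.hasSum hy').star
    simpa [_root_.cj, q, Q] using this

end Conj

section Sym
variable {n : ℕ}

/-- A holomorphic germ vanishing on the totally real subspace `w = conj z` vanishes. -/
theorem eq_zero_of_diag {φ : ((Fin n → ℂ) × (Fin n → ℂ)) → ℂ} (hφ : AnalyticAt ℂ φ 0)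
    (h : ∀ᶠ z in 𝓝 (0 : Fin n → ℂ), φ (z, star z) = 0) : ∀ᶠ p in 𝓝 0, φ p = 0 := by
  obtain ⟨r, hr, han⟩ := hφ.exists_ball_analyticOnNhd
  obtain ⟨s, hs, hz⟩ := Metric.eventually_nhds_iff.1 h
  have hsm : ∀ᶠ p : (Fin n → ℂ) × (Fin n → ℂ) in 𝓝 0, ‖p‖ < min r s / 4 := by
    have : ContinuousAt (fun p : (Fin n → ℂ) × (Fin n → ℂ) => ‖p‖) 0 := by fun_prop
    refine this.eventually (gt_mem_nhds ?_)
    simp only [norm_zero]; positivity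
  filter_upwards [hsm] with p hp
  have hpr : ‖p‖ < r / 4 := hp.trans_le (by gcongr; exact min_le_left _ _)
  have hps : ‖p‖ < s / 4 := hp.trans_le (by gcongr; exact min_le_right _ _)
  set q : (Fin n → ℂ) × (Fin n → ℂ) := (star p.2, star p.1) with hq
  have hqn : ‖q‖ = ‖p‖ := by
    rw [hq, Prod.norm_def, Prod.norm_def, norm_star, norm_star, max_comm]
  set A : (Fin n → ℂ) × (Fin n → ℂ) := (1/2 : ℂ) • (p + q) with hA
  set B : (Fin n → ℂ) × (Fin n → ℂ) := (-Complex.I/2 : ℂ) • (p - q) with hB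
  have hAn : ‖A‖ ≤ ‖p‖ := by
    have := norm_add_le p q
    rw [hA, norm_smul]; norm_num; linarith
  have hBn : ‖B‖ ≤ ‖p‖ := by
    have := norm_sub_le p q
    rw [hB, norm_smul]; simp; linarith
  have hbd : ∀ ξ ∈ Metric.ball (0:ℂ) 2, ‖A + ξ • B‖ ≤ 3 * ‖p‖ := by
    intro ξ hξ
    rw [mem_ball_zero_iff] at hξ
    have h1 := norm_add_le A (ξ • B)
    rw [norm_smul ξ B] at h1
    have h2 : ‖ξ‖ * ‖B‖ ≤ 2 * ‖p‖ := by gcongr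
    linarith
  have hg : AnalyticOnNhd ℂ (fun ξ : ℂ => φ (A + ξ • B)) (Metric.ball 0 2) := by
    intro ξ hξ
    refine AnalyticAt.line (han _ ?_)
    rw [mem_ball_zero_iff]
    have := hbd ξ hξ
    have := norm_nonneg p
    linarith
  have hreal : ∀ t : ℝ, (t:ℂ) ∈ Metric.ball (0:ℂ) 2 → φ (A + (t:ℂ) • B) = 0 := by
    intro t ht
    have h1 : A + (t:ℂ) • B = ((A + (t:ℂ) • B).1, star (A + (t:ℂ) • B).1) := by
      refine Prod.ext rfl ?_
      funext j
      simp only [hA, hB, hq, Prod.snd_add, Prod.fst_add, Prod.smul_fst, Prod.smul_snd, Prod.fst_sub,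
        Prod.snd_sub, Pi.add_apply, Pi.smul_apply, Pi.sub_apply, Pi.star_apply, smul_eq_mul,
        star_add, star_mul', star_sub, star_star, star_div₀, star_neg]
      simp only [Complex.star_def, Complex.conj_ofReal, Complex.conj_I, map_one, map_ofNat]
      ring
    rw [h1]
    refine hz ?_
    rw [dist_zero_right]
    have := hbd _ ht
    have h2 := norm_fst_le (A + (t:ℂ) • B)
    have := norm_nonneg p
    linarith
  have hfreq : ∃ᶠ ξ in 𝓝[≠] (0:ℂ), φ (A + ξ • B) = 0 := by
    have h1 : Tendsto (fun t : ℝ => (t:ℂ)) (𝓝[≠] 0) (𝓝[≠] 0) := by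
      refine tendsto_nhdsWithin_iff.2 ⟨?_, ?_⟩
      · exact (Complex.continuous_ofReal.tendsto' 0 0 (by simp)).mono_left nhdsWithin_le_nhds
      · filter_upwards [self_mem_nhdsWithin] with t ht
        simpa using ht
    refine h1.frequently (Eventually.frequently ?_)
    have h2 : ∀ᶠ ξ : ℂ in 𝓝 0, ξ ∈ Metric.ball (0:ℂ) 2 := Metric.ball_mem_nhds _ two_pos
    filter_upwards [(h1.mono_right nhdsWithin_le_nhds).eventually h2] with t ht using hreal t ht
  have hzero := hg.eqOn_zero_of_preconnected_of_frequently_eq_zero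
    (convex_ball 0 2).isPreconnected (Metric.mem_ball_self two_pos) hfreq
  have hI : Complex.I ∈ Metric.ball (0:ℂ) 2 := by simp
  have := hzero hI
  have h3 : A + Complex.I • B = p := by
    rw [hA, hB, smul_smul]
    have : Complex.I * (-Complex.I / 2) = 1/2 := by
      linear_combination (-1/2 : ℂ) * Complex.I_mul_I
    rw [this, ← smul_add]
    have : p + q + (p - q) = (2:ℂ) • p := by rw [two_smul]; abel
    rw [this, smul_smul]; norm_num
  simpa [h3] using this

/-- Hermitian symmetry of a complexification. -/
theorem complexification_symm {F : (Fin n → ℂ) → ℝ} {G : ((Fin n → ℂ) × (Fin n → ℂ)) → ℂ}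
    (hG : IsComplexification F G) : ∀ᶠ p in 𝓝 0, G p = star (G (star p.2, star p.1)) := by
  have hs : AnalyticAt ℂ (fun p : (Fin n → ℂ) × (Fin n → ℂ) => G (p.2, p.1)) 0 := by
    refine AnalyticAt.fun_comp (g := G) (f := fun p : (Fin n → ℂ) × (Fin n → ℂ) => (p.2, p.1)) hG.1 ?_
    exact analyticAt_snd.prod analyticAt_fst
  have h1 := hs.cj
  have h2 := eq_zero_of_diag (hG.1.fun_sub h1) ?_
  · filter_upwards [h2] with p hp
    rw [sub_eq_zero] at hp
    rw [hp]; rfl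
  · filter_upwards [hG.2] with z hz
    have : cj (fun p : (Fin n → ℂ) × (Fin n → ℂ) => G (p.2, p.1)) (z, star z) = star (G (z, star z)) := by
      simp [cj]
    rw [this, hz]; simp

end Sym

/-! ### A first integral symmetric under conjugation -/

section RealIntegral
variable {n : ℕ} {G : ((Fin n → ℂ) × (Fin n → ℂ)) → ℂ}

theorem tendsto_starSwap : Tendsto (fun p : (Fin n → ℂ) × (Fin n → ℂ) => (star p.2, star p.1))
    (𝓝 0) (𝓝 0) := by
  have : Continuous (fun p : (Fin n → ℂ) × (Fin n → ℂ) => (star p.2, star p.1)) := by fun_prop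
  exact this.tendsto' 0 0 (by simp)

theorem LDvd.starSwap (hs : ∀ᶠ p in 𝓝 0, G p = star (G (star p.2, star p.1)))
    {T : ((Fin n → ℂ) × (Fin n → ℂ)) → ℂ} (h : LDvd G T 0) :
    LDvd G (fun p => star (T (star p.2, star p.1))) 0 := by
  obtain ⟨v, hv, h⟩ := h
  have hs' : AnalyticAt ℂ (fun p : (Fin n → ℂ) × (Fin n → ℂ) => v (p.2, p.1)) 0 := by
    refine AnalyticAt.fun_comp (g := v) (f := fun p : (Fin n → ℂ) × (Fin n → ℂ) => (p.2, p.1)) hv ?_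
    exact analyticAt_snd.prod analyticAt_fst
  refine ⟨_, hs'.cj, ?_⟩
  filter_upwards [hs, tendsto_starSwap.eventually h] with p h1 h2
  rw [h2, h1, star_mul']; rfl

theorem AnalyticAt.fst_comp {f : (Fin n → ℂ) → ℂ} (hf : AnalyticAt ℂ f 0) :
    AnalyticAt ℂ (fun p : (Fin n → ℂ) × (Fin n → ℂ) => f p.1) 0 :=
  AnalyticAt.fun_comp (g := f) (f := fun p : (Fin n → ℂ) × (Fin n → ℂ) => p.1) hf analyticAt_fst

theorem AnalyticAt.snd_comp {f : (Fin n → ℂ) → ℂ} (hf : AnalyticAt ℂ f 0) :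
    AnalyticAt ℂ (fun p : (Fin n → ℂ) × (Fin n → ℂ) => f p.2) 0 :=
  AnalyticAt.fun_comp (g := f) (f := fun p : (Fin n → ℂ) × (Fin n → ℂ) => p.2) hf analyticAt_snd

theorem AnalyticAt.slice_fst (hG : AnalyticAt ℂ G 0) :
    AnalyticAt ℂ (fun z : Fin n → ℂ => G (z, 0)) 0 :=
  AnalyticAt.fun_comp (g := G) (f := fun z : Fin n → ℂ => (z, 0)) hG
    (AnalyticAt.prod analyticAt_id analyticAt_const)

theorem AnalyticAt.slice_snd (hG : AnalyticAt ℂ G 0) :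
    AnalyticAt ℂ (fun w : Fin n → ℂ => G (0, w)) 0 :=
  AnalyticAt.fun_comp (g := G) (f := fun w : Fin n → ℂ => (0, w)) hG
    (AnalyticAt.prod analyticAt_const analyticAt_id)

/-- The first integral may be taken of the form `A(z)`, with `A(z) = conj (A (conj w))` on
`{G = 0}`. -/
theorem exists_real_integral (hn : 2 ≤ n) (hG : AnalyticAt ℂ G 0) (hG0 : G 0 = 0)
    (hGne : ¬ ∀ᶠ p in 𝓝 0, G p = 0)
    (hs : ∀ᶠ p in 𝓝 0, G p = star (G (star p.2, star p.1)))
    {U : Set ((Fin n → ℂ) × (Fin n → ℂ))} (hU : U ∈ 𝓝 0)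
    (hdim : dimH (badSet G ∩ U) < ((4 * n - 4 : ℕ) : ℝ≥0∞))
    {h : ((Fin n → ℂ) × (Fin n → ℂ)) → ℂ} (hh : AnalyticAt ℂ h 0) (hmw : Minors dirW G h)
    (hmz : Minors dirZ G h) (hnc : ¬ ∃ c : ℂ, ∀ᶠ p in 𝓝 0, G p = 0 → h p = c) :
    ∃ e₁ e₂ : Fin n → ℂ, (¬ ∀ᶠ τ in 𝓝 (0:ℂ), G (τ • e₁, 0) = 0) ∧
      (¬ ∀ᶠ τ in 𝓝 (0:ℂ), G (0, τ • e₂) = 0) ∧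
      ∃ A : (Fin n → ℂ) → ℂ, AnalyticAt ℂ A 0 ∧ A 0 = 0 ∧ (¬ ∀ᶠ z in 𝓝 0, A z = 0) ∧
        LDvd G (fun p => A p.1 - cj A p.2) 0 := by
  have hst : Tendsto (fun z : Fin n → ℂ => star z) (𝓝 0) (𝓝 0) := by
    have : Continuous (fun z : Fin n → ℂ => star z) := by fun_prop
    exact this.tendsto' 0 0 (by simp)
  have ht1 : Tendsto (fun z : Fin n → ℂ => (z, (0 : Fin n → ℂ))) (𝓝 0) (𝓝 0) :=
    Continuous.tendsto' (by fun_prop) 0 0 rfl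
  have ht2 : Tendsto (fun z : Fin n → ℂ => ((0 : Fin n → ℂ), z)) (𝓝 0) (𝓝 0) :=
    Continuous.tendsto' (by fun_prop) 0 0 rfl
  have hwz : (∀ᶠ w in 𝓝 (0 : Fin n → ℂ), G (0, w) = 0) →
      ∀ᶠ z in 𝓝 (0 : Fin n → ℂ), G (z, 0) = 0 := by
    intro hc
    filter_upwards [hst.eventually hc, ht1.eventually hs] with z h1 h2
    rw [h2]; simp [h1]
  have hzw : (∀ᶠ z in 𝓝 (0 : Fin n → ℂ), G (z, 0) = 0) →
      ∀ᶠ z in 𝓝 (0 : Fin n → ℂ), G (0, z) = 0 := by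
    intro hc
    filter_upwards [hst.eventually hc, ht2.eventually hs] with z h1 h2
    rw [h2]; simp [h1]
  have hz : ¬ ∀ᶠ z in 𝓝 (0 : Fin n → ℂ), G (z, 0) = 0 := fun hc =>
    hnc ⟨h 0, const_of_deg hn hG hG0 hGne hh hU hdim hmw hmz hc (hzw hc)⟩
  have hw : ¬ ∀ᶠ z in 𝓝 (0 : Fin n → ℂ), G (0, z) = 0 := fun hc => hz (hwz hc)
  obtain ⟨e₁, he₁⟩ := exists_line_ne_zero hG.slice_fst hz
  obtain ⟨e₂, he₂⟩ := exists_line_ne_zero hG.slice_snd hw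
  simp only [zero_add] at he₁ he₂
  refine ⟨e₁, e₂, he₁, he₂, ?_⟩
  obtain ⟨f, hf, hfd⟩ := split_z hn hG hG0 hh hU hdim hmw he₂
  obtain ⟨g, hg, hgd⟩ := split_w hn hG hG0 hh hU hdim hmz he₁
  have d1 : LDvd G (fun p => f p.1 - g p.2) 0 :=
    (hgd.sub hfd).congr (Eventually.of_forall fun p => by ring)
  have d2 : LDvd G (fun p => cj f p.2 - cj g p.1) 0 :=
    (d1.starSwap hs).congr (Eventually.of_forall fun p => by simp [cj])
  suffices hA : ∃ A : (Fin n → ℂ) → ℂ, AnalyticAt ℂ A 0 ∧ (¬ ∀ᶠ z in 𝓝 0, A z = A 0) ∧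
        LDvd G (fun p => A p.1 - cj A p.2) 0 by
    obtain ⟨A, hA, hAn, hAd⟩ := hA
    refine ⟨fun z => A z - A 0, hA.fun_sub analyticAt_const, sub_self _, ?_, ?_⟩
    · simpa only [sub_eq_zero] using hAn
    · have h0 : A 0 = star (A 0) := by
        obtain ⟨v, -, hv⟩ := hAd
        have := hv.self_of_nhds
        rw [hG0, zero_mul, sub_eq_zero] at this
        simpa [cj] using this
      refine hAd.congr (Eventually.of_forall fun p => ?_)
      simp only [cj, star_sub]
      rw [← h0]; ring
  by_contra hcon
  push Not at hcon
  -- if both symmetric combinations of `f` and `cj g` were constant, so would be `f`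
  have k1 := hcon (fun z => f z + cj g z) (hf.fun_add hg.cj)
  have k2 := hcon (fun z => Complex.I * (f z - cj g z)) (analyticAt_const.fun_mul (hf.fun_sub hg.cj))
  have c1 : ∀ᶠ z in 𝓝 0, f z + cj g z = f 0 + cj g 0 := by
    by_contra hc
    refine k1 (not_eventually.1 hc) ((d1.sub d2).congr (Eventually.of_forall fun p => ?_))
    simp [cj]; ring
  have c2 : ∀ᶠ z in 𝓝 0, Complex.I * (f z - cj g z) = Complex.I * (f 0 - cj g 0) := by
    by_contra hc
    refine k2 (not_eventually.1 hc) (((d1.add d2).mul_left (S := fun _ => Complex.I) analyticAt_const).congr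
      (Eventually.of_forall fun p => ?_))
    simp [cj]; ring
  refine hnc ⟨f 0, ?_⟩
  obtain ⟨v, -, hv⟩ := hfd
  have c3 : ∀ᶠ z in 𝓝 0, f z = f 0 := by
    filter_upwards [c1, c2] with z h1 h2
    have h3 := mul_left_cancel₀ Complex.I_ne_zero h2
    linear_combination (h1 + h3) / 2
  filter_upwards [hv, (continuous_fst.tendsto' (0 : (Fin n → ℂ) × (Fin n → ℂ)) 0 rfl).eventually c3]
    with p h1 h2 h0
  rw [h0, zero_mul, sub_eq_zero] at h1
  rw [h1, h2]

end RealIntegral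

/-! ### First integrals which are not proper powers -/

section Root
variable {E : Type*} [NormedAddCommGroup E] [NormedSpace ℂ E]

/-- The germ `a` is not a proper power. Taking `K = 0`, this also excludes the constant `1`. -/
def NotPower (a : E → ℂ) : Prop :=
  ∀ (K : ℕ) (b : E → ℂ), AnalyticAt ℂ b 0 → (∀ᶠ z in 𝓝 0, a z = b z ^ K) → K = 1

theorem tendsto_line (e : E) : Tendsto (fun τ : ℂ => τ • e) (𝓝 0) (𝓝 0) :=
  Continuous.tendsto' (by fun_prop) 0 0 (by simp)

theorem AnalyticAt.line_zero {a : E → ℂ} (ha : AnalyticAt ℂ a 0) (e : E) :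
    AnalyticAt ℂ (fun τ : ℂ => a (τ • e)) 0 := by
  have := AnalyticAt.line (f := a) (p := 0) (b := e) (ξ := 0) (by simpa using ha)
  simpa using this

/-- A maximal root exists since exponents are bounded by the order of vanishing along a line. -/
theorem exists_maximal_root {A : E → ℂ} (hA : AnalyticAt ℂ A 0) (hA0 : A 0 = 0)
    (hne : ¬ ∀ᶠ z in 𝓝 0, A z = 0) :
    ∃ (m : ℕ) (a : E → ℂ), 1 ≤ m ∧ AnalyticAt ℂ a 0 ∧ (∀ᶠ z in 𝓝 0, A z = a z ^ m) ∧ a 0 = 0 ∧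
      NotPower a := by
  classical
  obtain ⟨e, he⟩ := exists_line_ne_zero hA hne
  simp only [zero_add] at he
  have hfin : analyticOrderAt (fun τ : ℂ => A (τ • e)) 0 ≠ ⊤ := by
    rwa [Ne, analyticOrderAt_eq_top]
  obtain ⟨N, hN⟩ := ENat.ne_top_iff_exists.1 hfin
  let P : ℕ → Prop := fun m => 1 ≤ m ∧ ∃ a : E → ℂ, AnalyticAt ℂ a 0 ∧ ∀ᶠ z in 𝓝 0, A z = a z ^ m
  have hzero : ∀ {m : ℕ} {a : E → ℂ}, 1 ≤ m → (∀ᶠ z in 𝓝 0, A z = a z ^ m) → a 0 = 0 := by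
    intro m a hm h
    have := h.self_of_nhds
    rw [hA0] at this
    exact eq_zero_of_pow_eq_zero this.symm
  have hbd : ∀ m, P m → m ≤ N := by
    rintro m ⟨hm, a, ha, h⟩
    have h1 : analyticOrderAt (fun τ : ℂ => A (τ • e)) 0 =
        m • analyticOrderAt (fun τ : ℂ => a (τ • e)) 0 := by
      rw [← analyticOrderAt_pow (ha.line_zero e)]
      exact analyticOrderAt_congr ((tendsto_line e).eventually h)
    have h2 : analyticOrderAt (fun τ : ℂ => a (τ • e)) 0 ≠ 0 := by
      rw [(ha.line_zero e).analyticOrderAt_ne_zero]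
      simpa using hzero hm h
    rw [← hN, nsmul_eq_mul] at h1
    have h3 : (m:ℕ∞) * 1 ≤ m * analyticOrderAt (fun τ : ℂ => a (τ • e)) 0 := by
      gcongr
      exact Order.one_le_iff_ne_zero.2 h2
    rw [← h1, mul_one] at h3
    exact_mod_cast h3
  have hP1 : P 1 := ⟨le_rfl, A, hA, by simp⟩
  obtain ⟨hm, a, ha, h⟩ := Nat.findGreatest_spec (P := P) (hbd 1 hP1) hP1
  set m := Nat.findGreatest P N with hmdef
  refine ⟨m, a, hm, ha, h, hzero hm h, ?_⟩
  intro K b hb hab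
  have hK : K ≠ 0 := by
    rintro rfl
    have := hab.self_of_nhds
    rw [hzero hm h] at this; simp at this
  have hPK : P (K * m) := by
    refine ⟨Nat.mul_pos (Nat.pos_of_ne_zero hK) hm, b, hb, ?_⟩
    filter_upwards [h, hab] with z h1 h2
    rw [h1, h2, pow_mul]
  have h4 : K * m ≤ m := Nat.le_findGreatest (hbd _ hPK) hPK
  have : K ≤ 1 := by
    by_contra hc
    push Not at hc
    nlinarith
  omega

theorem germ_prod_eq_zero {ι : Type*} (s : Finset ι) {f : ι → E → ℂ} {q : E}
    (hf : ∀ i, AnalyticAt ℂ (f i) q) (h : ∀ᶠ p in 𝓝 q, ∏ i ∈ s, f i p = 0) :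
    ∃ i ∈ s, ∀ᶠ p in 𝓝 q, f i p = 0 := by
  classical
  induction s using Finset.induction_on with
  | empty => exact absurd h.self_of_nhds (by simp)
  | insert i s hi ih =>
    by_cases h0 : ∀ᶠ p in 𝓝 q, f i p = 0
    · exact ⟨i, Finset.mem_insert_self _ _, h0⟩
    by_cases h1 : ∀ᶠ p in 𝓝 q, ∏ i ∈ s, f i p = 0
    · obtain ⟨j, hj, hj'⟩ := ih h1
      exact ⟨j, Finset.mem_insert_of_mem hj, hj'⟩
    · exfalso
      refine germ_mul_ne (hf i) h0 (Finset.analyticAt_fun_prod s fun j _ => hf j) h1 ?_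
      filter_upwards [h] with p hp
      rwa [Finset.prod_insert hi] at hp

/-- Two germs with equal `m`-th powers differ by an `m`-th root of unity. -/
theorem exists_root_of_pow_eq {b c : E → ℂ} {q : E} (hb : AnalyticAt ℂ b q) (hc : AnalyticAt ℂ c q)
    {m : ℕ} (hm : 1 ≤ m) (h : ∀ᶠ p in 𝓝 q, b p ^ m = c p ^ m) :
    ∃ ζ : ℂ, ζ ^ m = 1 ∧ ∀ᶠ p in 𝓝 q, b p = ζ * c p := by
  have hprim := Complex.isPrimitiveRoot_exp m (by omega)
  obtain ⟨ζ, hζ, h1⟩ := germ_prod_eq_zero (Polynomial.nthRootsFinset m (1:ℂ))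
    (f := fun ζ p => b p - ζ * c p) (q := q)
    (fun ζ => hb.fun_sub (analyticAt_const.fun_mul hc)) (by
      filter_upwards [h] with p hp
      rw [← hprim.pow_sub_pow_eq_prod_sub_mul _ _ (by omega), hp, sub_self])
  refine ⟨ζ, (Polynomial.mem_nthRootsFinset (by omega) 1).1 hζ, ?_⟩
  filter_upwards [h1] with p hp
  exact sub_eq_zero.1 hp

theorem NotPower.const_mul {a : E → ℂ} (h : NotPower a) {μ : ℂ} (hμ : μ ≠ 0) (h0 : a 0 = 0) :
    NotPower (fun z => μ * a z) := by
  intro K b hb hab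
  have hK : K ≠ 0 := by
    rintro rfl
    have := hab.self_of_nhds
    simp [h0] at this
  obtain ⟨ν, hν⟩ := IsAlgClosed.exists_pow_nat_eq μ⁻¹ (Nat.pos_of_ne_zero hK)
  refine h K (fun z => ν * b z) (analyticAt_const.fun_mul hb) ?_
  filter_upwards [hab] with z hz
  rw [mul_pow, hν, ← hz]; field_simp

end Root

section Prim
variable {n : ℕ} {G : ((Fin n → ℂ) × (Fin n → ℂ)) → ℂ}

/-- A multiple of `G` has proportional differential along `{G = 0}`. -/
theorem LDvd.minors {v : Fin n → (Fin n → ℂ) × (Fin n → ℂ)} {T : ((Fin n → ℂ) × (Fin n → ℂ)) → ℂ}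
    (hG : AnalyticAt ℂ G 0) (hT : LDvd G T 0) : Minors v G T := by
  obtain ⟨Q, hQ, h⟩ := hT
  intro i j
  refine ⟨fun p => fderiv ℂ Q p (v i) * fderiv ℂ G p (v j) - fderiv ℂ Q p (v j) * fderiv ℂ G p (v i),
    ((hQ.dirDeriv _).fun_mul (hG.dirDeriv _)).fun_sub ((hQ.dirDeriv _).fun_mul (hG.dirDeriv _)), ?_⟩
  filter_upwards [h.eventually_nhds, hG.eventually_analyticAt, hQ.eventually_analyticAt] with p h1 h2 h3
  have h4 : fderiv ℂ T p = G p • fderiv ℂ Q p + Q p • fderiv ℂ G p := by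
    rw [EventuallyEq.fderiv_eq (f := fun p => G p * Q p) h1]
    exact fderiv_fun_mul h2.differentiableAt h3.differentiableAt
  simp only [h4, add_apply, smul_apply, smul_eq_mul]
  ring

theorem fderiv_fst_comp {f : (Fin n → ℂ) → ℂ} {p : (Fin n → ℂ) × (Fin n → ℂ)}
    (hf : DifferentiableAt ℂ f p.1) (u : (Fin n → ℂ) × (Fin n → ℂ)) :
    fderiv ℂ (fun p : (Fin n → ℂ) × (Fin n → ℂ) => f p.1) p u = fderiv ℂ f p.1 u.1 := by
  have := (hf.hasFDerivAt.comp p (hasFDerivAt_fst (𝕜 := ℂ) (p := p))).fderiv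
  have h2 : (f ∘ Prod.fst : (Fin n → ℂ) × (Fin n → ℂ) → ℂ) = fun p => f p.1 := rfl
  rw [h2] at this
  rw [this]; rfl

theorem fderiv_snd_comp {f : (Fin n → ℂ) → ℂ} {p : (Fin n → ℂ) × (Fin n → ℂ)}
    (hf : DifferentiableAt ℂ f p.2) (u : (Fin n → ℂ) × (Fin n → ℂ)) :
    fderiv ℂ (fun p : (Fin n → ℂ) × (Fin n → ℂ) => f p.2) p u = fderiv ℂ f p.2 u.2 := by
  have := (hf.hasFDerivAt.comp p (hasFDerivAt_snd (𝕜 := ℂ) (p := p))).fderiv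
  have h2 : (f ∘ Prod.snd : (Fin n → ℂ) × (Fin n → ℂ) → ℂ) = fun p => f p.2 := rfl
  rw [h2] at this
  rw [this]; rfl

set_option maxHeartbeats 800000 in
/-- The function `A` with `A(z) = conj (A (conj w))` on `{G = 0}` may be replaced by one which is
not a proper power. -/
theorem exists_primitive_integral (hn : 2 ≤ n) (hG : AnalyticAt ℂ G 0) (hG0 : G 0 = 0)
    {U : Set ((Fin n → ℂ) × (Fin n → ℂ))} (hU : U ∈ 𝓝 0)
    (hdim : dimH (badSet G ∩ U) < ((4 * n - 4 : ℕ) : ℝ≥0∞))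
    {e₁ e₂ : Fin n → ℂ} (he₁ : ¬ ∀ᶠ τ in 𝓝 (0:ℂ), G (τ • e₁, 0) = 0)
    (he₂ : ¬ ∀ᶠ τ in 𝓝 (0:ℂ), G (0, τ • e₂) = 0) {A : (Fin n → ℂ) → ℂ} (hA : AnalyticAt ℂ A 0)
    (hA0 : A 0 = 0) (hAne : ¬ ∀ᶠ z in 𝓝 0, A z = 0) (hAd : LDvd G (fun p => A p.1 - cj A p.2) 0) :
    ∃ a : (Fin n → ℂ) → ℂ, AnalyticAt ℂ a 0 ∧ a 0 = 0 ∧ (¬ ∀ᶠ z in 𝓝 0, a z = 0) ∧ NotPower a ∧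
      LDvd G (fun p => a p.1 - cj a p.2) 0 := by
  obtain ⟨m, a, hm, ha, hAa, ha0, hnp⟩ := exists_maximal_root hA hA0 hAne
  have hane : ¬ ∀ᶠ z in 𝓝 0, a z = 0 := by
    intro hc
    refine hAne ?_
    filter_upwards [hc, hAa] with z h1 h2
    rw [h2, h1, zero_pow (by omega)]
  have tfst : Tendsto (fun p : (Fin n → ℂ) × (Fin n → ℂ) => p.1) (𝓝 0) (𝓝 0) :=
    continuous_fst.tendsto' 0 0 rfl
  have tsnd : Tendsto (fun p : (Fin n → ℂ) × (Fin n → ℂ) => p.2) (𝓝 0) (𝓝 0) :=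
    continuous_snd.tendsto' 0 0 rfl
  have hmin : Minors dirZ G (fun p => a p.1) := by
    intro i j
    have h1 := LDvd.minors (v := dirZ) hG hAd i j
    have hN : AnalyticAt ℂ (fun p : (Fin n → ℂ) × (Fin n → ℂ) => (m:ℂ) * a p.1 ^ (m - 1)) 0 :=
      analyticAt_const.fun_mul (ha.fst_comp.fun_pow _)
    refine LDvd.cancel_invariant (e := (0, e₂)) hN ?_ (fun p τ => by simp) ?_ hG (by simpa using he₂)
      (h1.congr ?_)
    · intro hc
      refine germ_pow_ne (N := a) hane (m - 1) ?_
      have ht1 : Tendsto (fun z : Fin n → ℂ => (z, (0 : Fin n → ℂ))) (𝓝 0) (𝓝 0) :=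
        Continuous.tendsto' (by fun_prop) 0 0 rfl
      filter_upwards [ht1.eventually hc] with z hz
      have : (m:ℂ) ≠ 0 := by exact_mod_cast (by omega : m ≠ 0)
      simpa [this] using hz
    · exact ((ha.fst_comp.dirDeriv _).fun_mul (hG.dirDeriv _)).fun_sub
        ((ha.fst_comp.dirDeriv _).fun_mul (hG.dirDeriv _))
    · filter_upwards [tfst.eventually hAa.eventually_nhds, tfst.eventually ha.eventually_analyticAt,
        tfst.eventually hA.eventually_analyticAt, tsnd.eventually hA.cj.eventually_analyticAt]
        with p h2 h3 h4 h5
      have d1 : ∀ k, fderiv ℂ (fun p : (Fin n → ℂ) × (Fin n → ℂ) => A p.1 - cj A p.2) p (dirZ k) =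
          (m:ℂ) * a p.1 ^ (m - 1) * fderiv ℂ (fun p : (Fin n → ℂ) × (Fin n → ℂ) => a p.1) p (dirZ k) := by
        intro k
        have hd1 : DifferentiableAt ℂ (fun p : (Fin n → ℂ) × (Fin n → ℂ) => A p.1) p :=
          h4.differentiableAt.comp p differentiableAt_fst
        have hd2 : DifferentiableAt ℂ (fun p : (Fin n → ℂ) × (Fin n → ℂ) => cj A p.2) p :=
          h5.differentiableAt.comp p differentiableAt_snd
        rw [fderiv_fun_sub hd1 hd2, sub_apply, fderiv_fst_comp h4.differentiableAt,
          fderiv_snd_comp h5.differentiableAt, fderiv_fst_comp h3.differentiableAt]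
        rw [EventuallyEq.fderiv_eq (f := fun z => a z ^ m) h2,
          fderiv_fun_pow _ h3.differentiableAt]
        simp [dirZ]
      rw [d1, d1]; ring
  obtain ⟨b, hb, hbd⟩ := split_w hn hG hG0 ha.fst_comp hU hdim hmin he₁
  have hpow : LDvd G (fun p => b p.2 ^ m - cj a p.2 ^ m) 0 := by
    have h1 : LDvd G (fun p => a p.1 ^ m - b p.2 ^ m) 0 := by
      have h0 := hbd.mul_left
        (S := fun p => ∑ i ∈ Finset.range m, a p.1 ^ i * b p.2 ^ (m - 1 - i)) ?_
      · refine h0.congr (Eventually.of_forall fun p => ?_)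
        exact (geom_sum₂_mul (a p.1) (b p.2) m).symm
      exact Finset.analyticAt_fun_sum _ fun i _ => (ha.fst_comp.fun_pow _).fun_mul (hb.snd_comp.fun_pow _)
    have ht : Tendsto (fun p : (Fin n → ℂ) × (Fin n → ℂ) => star p.2) (𝓝 0) (𝓝 0) :=
      Continuous.tendsto' (by fun_prop) 0 0 (by simp)
    refine (hAd.sub h1).congr ?_
    filter_upwards [tfst.eventually hAa, ht.eventually hAa] with p h2 h3
    simp only [cj, h2, h3, star_pow]; ring
  have hz := LDvd.eq_zero_of_invariant (e := (e₁, 0)) hG hG0 (by simpa using he₁)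
    (fun p τ => by simp) hpow
  have ht2 : Tendsto (fun z : Fin n → ℂ => ((0 : Fin n → ℂ), z)) (𝓝 0) (𝓝 0) :=
    Continuous.tendsto' (by fun_prop) 0 0 rfl
  obtain ⟨ζ, hζ, hbζ⟩ := exists_root_of_pow_eq hb ha.cj hm
    (by filter_upwards [ht2.eventually hz] with w hw using sub_eq_zero.1 hw)
  have hζn : ‖ζ‖ = 1 := by
    have : ‖ζ‖ ^ m = 1 := by rw [← norm_pow, hζ, norm_one]
    exact (pow_eq_one_iff_of_nonneg (norm_nonneg _) (by omega)).1 this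
  -- `a(z) = ζ cj a(w)` on `{G = 0}`; with `η ^ 2 = ζ` the multiple `star η * a` is symmetric
  obtain ⟨η, hη⟩ := IsAlgClosed.exists_pow_nat_eq ζ two_pos
  have hηn : ‖η‖ = 1 := by
    have : ‖η‖ ^ 2 = 1 := by rw [← norm_pow, hη, hζn]
    exact (pow_eq_one_iff_of_nonneg (norm_nonneg _) two_ne_zero).1 this
  have hηη : star η * η = 1 := by
    rw [Complex.star_def, Complex.conj_mul', hηn]; simp
  have hμ : star η ≠ 0 := fun hc => by rw [hc, zero_mul] at hηη; exact zero_ne_one hηη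
  refine ⟨fun z => star η * a z, analyticAt_const.fun_mul ha, by simp [ha0], ?_,
    hnp.const_mul hμ ha0, ?_⟩
  · intro hc
    refine hane ?_
    filter_upwards [hc] with z hz
    exact (mul_eq_zero.1 hz).resolve_left hμ
  · refine (hbd.mul_left (S := fun _ => star η) analyticAt_const).congr ?_
    filter_upwards [tsnd.eventually hbζ] with p hp
    simp only [cj, star_mul', star_star] at hp ⊢
    rw [hp, ← hη]
    linear_combination (η * star (a (star p.2))) * hηη

end Prim

/-! ### Roots and powers of germs -/

section Powers
variable {E : Type*} [NormedAddCommGroup E] [NormedSpace ℂ E]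

theorem exists_unit_root {u : E → ℂ} {q : E} (hu : AnalyticAt ℂ u q) (h0 : u q ≠ 0) {K : ℕ}
    (hK : 1 ≤ K) : ∃ w : E → ℂ, AnalyticAt ℂ w q ∧ w q ≠ 0 ∧ ∀ᶠ p in 𝓝 q, u p = w p ^ K := by
  obtain ⟨ν, hν⟩ := IsAlgClosed.exists_pow_nat_eq (u q) (by omega : 0 < K)
  have hK' : (K:ℂ) ≠ 0 := by exact_mod_cast (by omega : K ≠ 0)
  have hν0 : ν ≠ 0 := by
    rintro rfl
    rw [zero_pow (by omega)] at hν
    exact h0 hν.symm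
  have h1 : AnalyticAt ℂ (fun p => u p / u q) q := hu.fun_div analyticAt_const h0
  have h2 : AnalyticAt ℂ (fun p => Complex.log (u p / u q)) q :=
    h1.clog (by rw [div_self h0]; exact Complex.one_mem_slitPlane)
  refine ⟨fun p => ν * Complex.exp (Complex.log (u p / u q) / K),
    analyticAt_const.fun_mul (h2.fun_div analyticAt_const hK').cexp',
    mul_ne_zero hν0 (Complex.exp_ne_zero _), ?_⟩
  filter_upwards [hu.continuousAt.eventually_ne h0] with p hp
  rw [mul_pow, hν, ← Complex.exp_nat_mul, mul_div_cancel₀ _ hK', Complex.exp_log (div_ne_zero hp h0)]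
  field_simp

/-- In a suitable coordinate a germ of one variable is a monomial. -/
theorem exists_monomial_param {φ : ℂ → ℂ} (hφ : AnalyticAt ℂ φ 0) (h0 : φ 0 = 0)
    (hne : ¬ ∀ᶠ t in 𝓝 0, φ t = 0) :
    ∃ (K : ℕ) (γ : ℂ → ℂ), 1 ≤ K ∧ AnalyticAt ℂ γ 0 ∧ γ 0 = 0 ∧ ∀ᶠ t in 𝓝 0, φ (γ t) = t ^ K := by
  obtain ⟨K, u, hu, hu0, h⟩ := hφ.exists_eventuallyEq_pow_smul_nonzero_iff.2 hne
  simp only [sub_zero, smul_eq_mul] at h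
  have hK : 1 ≤ K := by
    rcases Nat.eq_zero_or_pos K with rfl | hK
    · have := h.self_of_nhds
      simp [h0, hu0.symm] at this
    · exact hK
  obtain ⟨w, hw, hw0, huw⟩ := exists_unit_root hu hu0 hK
  have hψ : AnalyticAt ℂ (fun t => t * w t) 0 := analyticAt_id.fun_mul hw
  have hd : deriv (fun t => t * w t) 0 ≠ 0 := by
    rw [((hasDerivAt_id' (0:ℂ)).fun_mul hw.differentiableAt.hasDerivAt).deriv]
    simpa using hw0
  have hγ := hψ.analyticAt_localInverse hd
  have hr := hψ.hasStrictDerivAt.eventually_right_inverse (hf' := hd)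
  have hl := (hψ.hasStrictDerivAt.eventually_left_inverse (hf' := hd)).self_of_nhds
  set γ := HasStrictDerivAt.localInverse _ _ _ hψ.hasStrictDerivAt hd with hγd
  simp only [zero_mul] at hγ hr hl
  refine ⟨K, γ, hK, hγ, hl, ?_⟩
  have ht : Tendsto γ (𝓝 0) (𝓝 0) := by simpa [hl] using hγ.continuousAt.tendsto
  filter_upwards [hr, ht.eventually h, ht.eventually huw] with t h1 h2 h3
  rw [h2, h3, ← mul_pow, h1]

/-- The one-variable case of `LDvd.of_pow`, by comparing orders of vanishing. -/
theorem LDvd.of_pow_line {N T a : ℂ → ℂ} {ξ : ℂ} (hN : AnalyticAt ℂ N ξ) (hT : AnalyticAt ℂ T ξ)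
    (ha : AnalyticAt ℂ a ξ) {r : ℕ} (hr : 1 ≤ r) (h : ∀ᶠ z in 𝓝 ξ, T z ^ r = N z ^ r * a z) :
    LDvd N T ξ := by
  by_cases hz : ∀ᶠ z in 𝓝 ξ, N z = 0
  · refine ⟨fun _ => 0, analyticAt_const, ?_⟩
    filter_upwards [hz, h] with z h1 h2
    rw [h1, zero_pow (by omega), zero_mul] at h2
    rw [eq_zero_of_pow_eq_zero h2, mul_zero]
  obtain ⟨m, g, hg, hg0, hNg⟩ := hN.exists_eventuallyEq_pow_smul_nonzero_iff.2 hz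
  have hoN : analyticOrderAt N ξ = m := hN.analyticOrderAt_eq_natCast.2 ⟨g, hg, hg0, hNg⟩
  have hord : (m:ℕ∞) ≤ analyticOrderAt T ξ := by
    have h1 : r • analyticOrderAt T ξ = r • analyticOrderAt N ξ + analyticOrderAt a ξ := by
      rw [← analyticOrderAt_pow hT, ← analyticOrderAt_pow hN, ← analyticOrderAt_mul (hN.pow r) ha]
      exact analyticOrderAt_congr h
    by_contra hc
    push Not at hc
    obtain ⟨k, hk⟩ := ENat.ne_top_iff_exists.1 hc.ne_top
    rw [hoN, ← hk, nsmul_eq_mul, nsmul_eq_mul] at h1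
    have h2 : (r:ℕ∞) * m ≤ r * k := by rw [h1]; exact le_self_add
    rw [← hk] at hc
    have h3 : r * m ≤ r * k := by exact_mod_cast h2
    have h4 : k < m := by exact_mod_cast hc
    have := Nat.le_of_mul_le_mul_left h3 (by omega)
    omega
  obtain ⟨t, ht, hTt⟩ := (natCast_le_analyticOrderAt hT).1 hord
  refine ⟨fun z => t z / g z, ht.fun_div hg hg0, ?_⟩
  filter_upwards [hNg, hTt, hg.continuousAt.eventually_ne hg0] with z h1 h2 h3
  rw [h1, h2, smul_eq_mul, smul_eq_mul]; field_simp

/-- Rings of germs are integrally closed (for the equations `X ^ r = a`). -/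
theorem LDvd.of_pow {N T a : E → ℂ} {q : E} (hN : AnalyticAt ℂ N q) (hT : AnalyticAt ℂ T q)
    (ha : AnalyticAt ℂ a q) {r : ℕ} (hr : 1 ≤ r) (hne : ¬ ∀ᶠ p in 𝓝 q, N p = 0)
    (h : ∀ᶠ p in 𝓝 q, T p ^ r = N p ^ r * a p) : LDvd N T q := by
  obtain ⟨e, he⟩ := exists_line_ne_zero hN hne
  refine LDvd.of_dense hT hN he dense_univ
    (inter_mem hN.eventually_analyticAt (inter_mem hT.eventually_analyticAt
      (inter_mem ha.eventually_analyticAt h.eventually_nhds))) ?_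
  rintro p - - ξ ⟨h1, h2, h3, h4⟩
  refine LDvd.of_pow_line (AnalyticAt.line h1) (AnalyticAt.line h2) (AnalyticAt.line h3) hr ?_
  have : Tendsto (fun ζ : ℂ => p + ζ • e) (𝓝 ξ) (𝓝 (p + ξ • e)) :=
    Continuous.tendsto' (by fun_prop) _ _ rfl
  exact this.eventually h4

/-- If `a` is not a proper power, then up to units only the obvious powers of `a` are `K`-th powers. -/
theorem NotPower.dvd {a c u : E → ℂ} (hnp : NotPower a) (ha : AnalyticAt ℂ a 0)
    (hane : ¬ ∀ᶠ z in 𝓝 0, a z = 0) (hc : AnalyticAt ℂ c 0) (hu : AnalyticAt ℂ u 0) (hu0 : u 0 ≠ 0)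
    {K k : ℕ} (hK : 1 ≤ K) (h : ∀ᶠ z in 𝓝 0, c z ^ K = u z * a z ^ k) : K ∣ k := by
  obtain ⟨w, hw, hw0, huw⟩ := exists_unit_root hu hu0 hK
  obtain ⟨g, K', k', hg, hcop, rfl, rfl⟩ := Nat.exists_coprime' (m := K) (n := k) (by
    exact Nat.gcd_pos_of_pos_left _ hK)
  have hK'1 : 1 ≤ K' := Nat.pos_of_mul_pos_right hK
  have hcw : AnalyticAt ℂ (fun z => c z / w z) 0 := hc.fun_div hw hw0
  obtain ⟨ζ, hζ, h1⟩ := exists_root_of_pow_eq (b := fun z => (c z / w z) ^ K') (c := fun z => a z ^ k')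
    (hcw.fun_pow _) (ha.fun_pow _) hg (by
      filter_upwards [h, huw, hw.continuousAt.eventually_ne hw0] with z h2 h3 h4
      rw [← pow_mul, ← pow_mul, div_pow, h2, h3]
      field_simp)
  have hζ0 : ζ ≠ 0 := by
    rintro rfl
    rw [zero_pow (by omega)] at hζ
    exact zero_ne_one hζ
  obtain ⟨ν, hν⟩ := IsAlgClosed.exists_pow_nat_eq ζ⁻¹ (by omega : 0 < K')
  set d : E → ℂ := fun z => ν * (c z / w z) with hd
  have hda : AnalyticAt ℂ d 0 := analyticAt_const.fun_mul hcw
  have h2 : ∀ᶠ z in 𝓝 0, d z ^ K' = a z ^ k' := by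
    filter_upwards [h1] with z hz
    rw [hd]; simp only
    rw [mul_pow, hν, hz]; field_simp
  suffices K' = 1 by rw [this, one_mul]; exact Dvd.intro_left k' rfl
  by_contra hK1
  obtain ⟨x, -, hx⟩ := Nat.exists_mul_mod_eq_one_of_coprime hcop.symm (by omega : 1 < K')
  set y := k' * x / K' with hy
  have hxy : k' * x = y * K' + 1 := by
    have := Nat.div_add_mod (k' * x) K'
    rw [hx] at this
    rw [← this, mul_comm]
  have h3 : ∀ᶠ z in 𝓝 0, (d z ^ x) ^ K' = (a z ^ y) ^ K' * a z := by
    filter_upwards [h2] with z hz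
    rw [← pow_mul, mul_comm x K', pow_mul, hz, ← pow_mul, ← pow_mul, hxy, pow_succ]
  have hne := germ_pow_ne hane y
  obtain ⟨b, hb, hb'⟩ := LDvd.of_pow (N := fun z => a z ^ y) (T := fun z => d z ^ x) (ha.fun_pow _)
    (hda.fun_pow _) ha hK'1 hne h3
  refine hK1 (hnp K' b hb ?_)
  have hne' := germ_pow_ne hne K'
  refine germ_mul_cancel (((ha.fun_pow y).fun_pow K')) hne' ha (hb.fun_pow K') ?_
  filter_upwards [h3, hb'] with z h4 h5
  rw [← h4, h5, mul_pow]

end Powers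

/-! ### Irreducibility of a(z) - t ^ K -/

section ZeroPersistence
variable {E : Type*} [NormedAddCommGroup E] [NormedSpace ℂ E]

/-- Zeros of a germ persist on all nearby lines in a direction on which it does not vanish
identically. -/
theorem exists_zero_near {G : E → ℂ} {q e : E} (hG : AnalyticAt ℂ G q) (hG0 : G q = 0)
    (he : ¬ ∀ᶠ τ in 𝓝 (0:ℂ), G (q + τ • e) = 0) {W : E → Prop} (hW : ∀ᶠ x in 𝓝 q, W x) :
    ∀ᶠ p in 𝓝 q, ∃ τ : ℂ, W (p + τ • e) ∧ G (p + τ • e) = 0 := by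
  obtain ⟨r, hgood, -, hr⟩ := exists_goodDisc hG he hW.eventually_nhds
  have h1 : AnDisc e r q (fun _ => (1:ℂ)) := fun τ _ => analyticAt_const
  have h2 : ∀ᶠ p in 𝓝 q, remG G e r (fun _ => (1:ℂ)) p ≠ 0 := by
    refine (hgood.an_remG h1).continuousAt.eventually_ne ?_
    simp [remG, hG0]
  have h3 := eventually_forall_circle (isCompact_normLe r) (p := W) (q := q) (b := e)
    (fun ξ hξ => hr ξ hξ)
  filter_upwards [h2, h3, hgood.eventually] with p h4 h5 h6
  by_contra hcon
  push Not at hcon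
  refine h4 (h6.remG_eq_zero (T := fun _ => 1) fun τ hτ => ?_)
  exact LDvd.of_ne (h6.an τ hτ).line analyticAt_const (hcon τ (h5 τ hτ))

end ZeroPersistence

section Cyclic
variable {V : Type*} [NormedAddCommGroup V] [NormedSpace ℂ V]

/-- The germ `a(z) - t ^ K` on `V × ℂ`. -/
def cyc (a : V → ℂ) (K : ℕ) (p : V × ℂ) : ℂ := a p.1 - p.2 ^ K

theorem cyc_analytic {a : V → ℂ} (ha : AnalyticAt ℂ a 0) (K : ℕ) : AnalyticAt ℂ (cyc a K) 0 :=
  (AnalyticAt.fun_comp (f := fun p : V × ℂ => p.1) (g := a) ha analyticAt_fst).fun_sub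
    (analyticAt_snd.fun_pow K)

theorem cyc_ne_line {a : V → ℂ} (ha0 : a 0 = 0) (K : ℕ) :
    ¬ ∀ᶠ ξ in 𝓝 (0:ℂ), cyc a K ((0 : V × ℂ) + ξ • ((0, 1) : V × ℂ)) = 0 := by
  intro h
  simp only [cyc, zero_add, Prod.smul_fst, smul_zero, ha0, Prod.smul_snd, smul_eq_mul, mul_one,
    zero_sub, neg_eq_zero] at h
  have := (h.filter_mono nhdsWithin_le_nhds).and (self_mem_nhdsWithin (s := {(0:ℂ)}ᶜ))
  obtain ⟨x, hx, hx'⟩ := this.exists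
  exact hx' (eq_zero_of_pow_eq_zero hx)

theorem cyc_ne {a : V → ℂ} (ha0 : a 0 = 0) (K : ℕ) : ¬ ∀ᶠ p in 𝓝 0, cyc a K p = 0 := by
  intro h
  have ht : Tendsto (fun ξ : ℂ => (0 : V × ℂ) + ξ • ((0, 1) : V × ℂ)) (𝓝 0) (𝓝 0) :=
    Continuous.tendsto' (by fun_prop) 0 0 (by simp)
  exact cyc_ne_line ha0 K (ht.eventually h)

theorem tendsto_rot {V : Type*} [NormedAddCommGroup V] (ζ : ℂ) : Tendsto (fun p : V × ℂ => (p.1, ζ * p.2)) (𝓝 0) (𝓝 0) :=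
  Continuous.tendsto' (by fun_prop) 0 0 (by simp)

theorem AnalyticAt.rot {H : V × ℂ → ℂ} (hH : AnalyticAt ℂ H 0) (ζ : ℂ) :
    AnalyticAt ℂ (fun p : V × ℂ => H (p.1, ζ * p.2)) 0 :=
  AnalyticAt.fun_comp (f := fun p : V × ℂ => (p.1, ζ * p.2)) (g := H) (by convert hH using 1; exact Prod.ext rfl (mul_zero ζ))
    (analyticAt_fst.prod (analyticAt_const.fun_mul analyticAt_snd))

/-- A rotation invariant factor of a power of `a(z) - t ^ K` that is not a unit is divisible by
`a(z) - t ^ K`: the roots of `t ^ K = a(z)` form one orbit of the rotations. -/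
theorem cyc_dvd {a : V → ℂ} (ha : AnalyticAt ℂ a 0) (ha0 : a 0 = 0)
    (hane : ¬ ∀ᶠ z in 𝓝 0, a z = 0) {K : ℕ} (hK : 1 ≤ K) {s : ℕ} {H J : V × ℂ → ℂ}
    (hH : AnalyticAt ℂ H 0)
    (hHJ : ∀ᶠ p in 𝓝 0, H p * J p = cyc a K p ^ s)
    (hinv : ∀ ζ : ℂ, ζ ^ K = 1 → ∀ᶠ p : V × ℂ in 𝓝 0, H (p.1, ζ * p.2) = H p) (hH0 : H 0 = 0) :
    LDvd (cyc a K) H 0 := by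
  have hD := cyc_analytic ha K
  have hfst : AnalyticAt ℂ (fun p : V × ℂ => a p.1) 0 :=
    AnalyticAt.fun_comp (f := fun p : V × ℂ => p.1) (g := a) ha analyticAt_fst
  have hane' : ¬ ∀ᶠ p : V × ℂ in 𝓝 0, a p.1 = 0 := by
    intro h
    have ht : Tendsto (fun z : V => (z, (0:ℂ))) (𝓝 0) (𝓝 0) :=
      Continuous.tendsto' (by fun_prop) 0 0 (by simp)
    exact hane (ht.eventually h)
  obtain ⟨A, hA, hAne⟩ := exists_dense_ne_zero hfst hane'
  have hinv' : ∀ᶠ p : V × ℂ in 𝓝 0, ∀ ζ ∈ Polynomial.nthRootsFinset K (1:ℂ),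
      H (p.1, ζ * p.2) = H p := by
    rw [eventually_all_finset]
    intro ζ hζ
    exact hinv ζ ((Polynomial.mem_nthRootsFinset (by omega) 1).1 hζ)
  have hHe : ¬ ∀ᶠ τ in 𝓝 (0:ℂ), H ((0 : V × ℂ) + τ • ((0, 1) : V × ℂ)) = 0 := by
    intro h
    have ht : Tendsto (fun ξ : ℂ => (0 : V × ℂ) + ξ • ((0, 1) : V × ℂ)) (𝓝 0) (𝓝 0) :=
      Continuous.tendsto' (by fun_prop) 0 0 (by simp)
    refine cyc_ne_line (V := V) ha0 K ?_
    filter_upwards [h, ht.eventually hHJ] with ξ h1 h2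
    rw [h1, zero_mul] at h2
    exact eq_zero_of_pow_eq_zero h2.symm
  have hz := exists_zero_near hH hH0 hHe (hinv'.and hHJ)
  have hall := (hz.and (hAne.and (hH.eventually_analyticAt.and hD.eventually_analyticAt)))
  refine LDvd.of_dense hH hD (cyc_ne_line ha0 K) hA hall ?_
  intro p hpA hpU ξ hξU
  obtain ⟨⟨τ, ⟨hW1, hW2⟩, hHτ⟩, hap, -, -⟩ := hpU
  obtain ⟨-, -, hHξ, hDξ⟩ := hξU
  have hap := hap hpA
  by_cases h0 : cyc a K (p + ξ • ((0, 1) : V × ℂ)) = 0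
  · rw [hHτ, zero_mul] at hW2
    have hW2 := eq_zero_of_pow_eq_zero hW2.symm
    have e1 : (p.2 + τ) ^ K = a p.1 := by
      simpa [cyc, sub_eq_zero, eq_comm] using hW2
    have e2 : (p.2 + ξ) ^ K = a p.1 := by
      simpa [cyc, sub_eq_zero, eq_comm] using h0
    have n1 : p.2 + τ ≠ 0 := by
      intro h; rw [h, zero_pow (by omega)] at e1; exact hap e1.symm
    have n2 : p.2 + ξ ≠ 0 := by
      intro h; rw [h, zero_pow (by omega)] at e2; exact hap e2.symm
    have hζ : ((p.2 + ξ) / (p.2 + τ)) ^ K = 1 := by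
      rw [div_pow, e1, e2, div_self hap]
    have h3 := hW1 _ ((Polynomial.mem_nthRootsFinset (by omega) 1).2 hζ)
    refine LDvd.of_simple_zero hDξ.line hHξ.line ?_ h0 ?_
    · have : (fun ζ : ℂ => cyc a K (p + ζ • ((0, 1) : V × ℂ))) = fun ζ => a p.1 - (p.2 + ζ) ^ K := by
        funext ζ; simp [cyc]
      rw [this]
      have hd : HasDerivAt (fun ζ : ℂ => a p.1 - (p.2 + ζ) ^ K)
          (-(K * (p.2 + ξ) ^ (K - 1) * 1)) ξ :=
        (((hasDerivAt_id' ξ).const_add p.2).fun_pow K).const_sub (a p.1)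
      rw [hd.deriv]
      simp only [mul_one, neg_ne_zero]
      exact mul_ne_zero (by exact_mod_cast (by omega : K ≠ 0)) (pow_ne_zero _ n2)
    · rw [hHτ] at h3
      have e3 : p + ξ • ((0, 1) : V × ℂ) = ((p + τ • ((0, 1) : V × ℂ)).1,
          (p.2 + ξ) / (p.2 + τ) * (p + τ • ((0, 1) : V × ℂ)).2) := by
        ext <;> simp [div_mul_cancel₀ _ n1]
      rw [e3]; exact h3
  · exact (LDvd.of_ne hDξ hHξ h0).line

/-- Rotation invariant factors of powers of `a(z) - t ^ K` are powers of it, up to units. -/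
theorem cyc_factor {a : V → ℂ} (ha : AnalyticAt ℂ a 0) (ha0 : a 0 = 0)
    (hane : ¬ ∀ᶠ z in 𝓝 0, a z = 0) {K : ℕ} (hK : 1 ≤ K) (s : ℕ) : ∀ {H J : V × ℂ → ℂ},
    AnalyticAt ℂ H 0 → AnalyticAt ℂ J 0 → (∀ᶠ p in 𝓝 0, H p * J p = cyc a K p ^ s) →
    (∀ ζ : ℂ, ζ ^ K = 1 → ∀ᶠ p : V × ℂ in 𝓝 0, H (p.1, ζ * p.2) = H p) →
    ∃ (l : ℕ) (U : V × ℂ → ℂ), AnalyticAt ℂ U 0 ∧ U 0 ≠ 0 ∧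
      ∀ᶠ p in 𝓝 0, H p = U p * cyc a K p ^ l := by
  induction s with
  | zero =>
    intro H J hH hJ hHJ _
    refine ⟨0, H, hH, fun h => ?_, by simp⟩
    have := hHJ.self_of_nhds
    simp [h] at this
  | succ s ih =>
    intro H J hH hJ hHJ hinv
    by_cases hH0 : H 0 = 0
    · have hD := cyc_analytic ha K
      obtain ⟨H1, hH1, h1⟩ := cyc_dvd ha ha0 hane hK hH hHJ hinv hH0
      have h2 : ∀ᶠ p in 𝓝 0, H1 p * J p = cyc a K p ^ s := by
        refine germ_mul_cancel hD (cyc_ne ha0 K) (hH1.fun_mul hJ) (hD.fun_pow s) ?_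
        filter_upwards [h1, hHJ] with p e1 e2
        rw [← mul_assoc, ← e1, e2, pow_succ']
      have h3 : ∀ ζ : ℂ, ζ ^ K = 1 → ∀ᶠ p : V × ℂ in 𝓝 0, H1 (p.1, ζ * p.2) = H1 p := by
        intro ζ hζ
        refine germ_mul_cancel hD (cyc_ne ha0 K) (hH1.rot ζ) hH1 ?_
        filter_upwards [h1, (tendsto_rot ζ).eventually h1, hinv ζ hζ] with p e1 e2 e3
        rw [← e1, ← e3, e2]
        simp [cyc, mul_pow, hζ]
      obtain ⟨l, U, hU, hU0, h⟩ := ih hH1 hJ h2 h3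
      refine ⟨l + 1, U, hU, hU0, ?_⟩
      filter_upwards [h, h1] with p e1 e2
      rw [e2, e1]; ring
    · exact ⟨0, H, hH, hH0, by simp⟩

/-- If `a` is not a proper power then `a(z) - t ^ K` is an irreducible germ. -/
theorem cyc_irreducible {a : V → ℂ} (ha : AnalyticAt ℂ a 0) (ha0 : a 0 = 0)
    (hane : ¬ ∀ᶠ z in 𝓝 0, a z = 0) (hnp : NotPower a) {K : ℕ} (hK : 1 ≤ K) {g q : V × ℂ → ℂ}
    (hg : AnalyticAt ℂ g 0) (hq : AnalyticAt ℂ q 0) (hgq : ∀ᶠ p in 𝓝 0, g p * q p = cyc a K p)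
    (hg0 : g 0 = 0) : q 0 ≠ 0 := by
  set R := Polynomial.nthRootsFinset K (1:ℂ) with hR
  have hcard : R.card = K := (Complex.isPrimitiveRoot_exp K (by omega)).card_nthRootsFinset
  have hmem : ∀ ζ, ζ ∈ R ↔ ζ ^ K = 1 := fun ζ => Polynomial.mem_nthRootsFinset (by omega) 1
  have hHan : AnalyticAt ℂ (fun p : V × ℂ => ∏ ζ ∈ R, g (p.1, ζ * p.2)) 0 :=
    Finset.analyticAt_fun_prod _ fun ζ _ => hg.rot ζ
  have hJan : AnalyticAt ℂ (fun p : V × ℂ => ∏ ζ ∈ R, q (p.1, ζ * p.2)) 0 :=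
    Finset.analyticAt_fun_prod _ fun ζ _ => hq.rot ζ
  have hHJ : ∀ᶠ p : V × ℂ in 𝓝 0,
      (∏ ζ ∈ R, g (p.1, ζ * p.2)) * (∏ ζ ∈ R, q (p.1, ζ * p.2)) = cyc a K p ^ K := by
    have : ∀ᶠ p : V × ℂ in 𝓝 0, ∀ ζ ∈ R,
        g (p.1, ζ * p.2) * q (p.1, ζ * p.2) = cyc a K (p.1, ζ * p.2) := by
      rw [eventually_all_finset]
      exact fun ζ _ => (tendsto_rot ζ).eventually hgq
    filter_upwards [this] with p hp
    rw [← Finset.prod_mul_distrib, Finset.prod_congr rfl hp,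
      Finset.prod_congr rfl (g := fun _ => cyc a K p), Finset.prod_const, hcard]
    intro ζ hζ
    simp [cyc, mul_pow, (hmem ζ).1 hζ]
  obtain ⟨l, U, hU, hU0, hHU⟩ := cyc_factor ha ha0 hane hK K hHan hJan hHJ (by
    intro ω hω
    refine Eventually.of_forall fun p => ?_
    have hω0 : ω ≠ 0 := by rintro rfl; rw [zero_pow (by omega)] at hω; exact zero_ne_one hω
    refine Finset.prod_nbij' (fun ζ => ζ * ω) (fun ζ => ζ / ω) ?_ ?_ ?_ ?_ ?_
    · intro ζ hζ; rw [hmem] at hζ ⊢; rw [mul_pow, hζ, hω, one_mul]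
    · intro ζ hζ; rw [hmem] at hζ ⊢; rw [div_pow, hζ, hω, div_one]
    · intro ζ _; field_simp
    · intro ζ _; field_simp
    · intro ζ _; simp [mul_assoc])
  -- restriction to the `t`-axis
  have hline : Tendsto (fun t : ℂ => ((0 : V), t)) (𝓝 0) (𝓝 0) :=
    Continuous.tendsto' (by fun_prop) 0 0 (by simp)
  have hlan : ∀ {f : V × ℂ → ℂ}, AnalyticAt ℂ f 0 → AnalyticAt ℂ (fun t : ℂ => f (0, t)) 0 := by
    intro f hf
    exact AnalyticAt.fun_comp (f := fun t : ℂ => ((0 : V), t)) (g := f) hf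
      (analyticAt_const.prod analyticAt_id)
  have hgqt : ∀ᶠ t in 𝓝 (0:ℂ), g (0, t) * q (0, t) = - t ^ K := by
    filter_upwards [hline.eventually hgq] with t ht
    simpa [cyc, ha0] using ht
  have hoK : analyticOrderAt (fun t : ℂ => - t ^ K) 0 = K := by
    rw [((analyticAt_id.fun_pow K).fun_neg).analyticOrderAt_eq_natCast]
    exact ⟨fun _ => -1, analyticAt_const, by simp, by simp⟩
  have hsum : analyticOrderAt (fun t : ℂ => g (0, t)) 0 + analyticOrderAt (fun t : ℂ => q (0, t)) 0
      = K := by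
    rw [← analyticOrderAt_mul (hlan hg) (hlan hq), ← hoK]
    exact analyticOrderAt_congr hgqt
  obtain ⟨k, hk⟩ : ∃ k : ℕ, analyticOrderAt (fun t : ℂ => g (0, t)) 0 = k := by
    refine (ENat.ne_top_iff_exists.1 ?_).imp fun _ h => h.symm
    intro h; rw [h, top_add] at hsum; exact ENat.top_ne_natCast _ hsum
  obtain ⟨m, hm⟩ : ∃ k : ℕ, analyticOrderAt (fun t : ℂ => q (0, t)) 0 = k := by
    refine (ENat.ne_top_iff_exists.1 ?_).imp fun _ h => h.symm
    intro h; rw [h, add_top] at hsum; exact ENat.top_ne_natCast _ hsum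
  have hkm : k + m = K := by rw [hk, hm] at hsum; exact_mod_cast hsum
  have hk1 : k ≠ 0 := by
    intro h
    have := (hlan hg).analyticOrderAt_ne_zero.2 hg0
    rw [hk, h] at this; exact this rfl
  -- the exponent `l` is the order of `g` on the `t`-axis
  have hlk : l = k := by
    obtain ⟨γ, hγ, hγ0, hgγ⟩ := (hlan hg).analyticOrderAt_eq_natCast.1 hk
    simp only [sub_zero, smul_eq_mul] at hgγ
    have h1 : analyticOrderAt (fun t : ℂ => ∏ ζ ∈ R, g (0, ζ * t)) 0 = (k * K : ℕ) := by
      rw [(Finset.analyticAt_fun_prod _ fun ζ _ => hlan (hg.rot ζ)).analyticOrderAt_eq_natCast]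
      refine ⟨fun t => ∏ ζ ∈ R, (ζ ^ k * γ (ζ * t)), ?_, ?_, ?_⟩
      · refine Finset.analyticAt_fun_prod _ fun ζ _ => analyticAt_const.fun_mul ?_
        exact AnalyticAt.fun_comp (f := fun t : ℂ => ζ * t) (g := γ) (by simpa using hγ)
          (analyticAt_const.fun_mul analyticAt_id)
      · rw [Finset.prod_ne_zero_iff]
        intro ζ hζ
        have : ζ ≠ 0 := by
          rintro rfl
          have := (hmem 0).1 hζ
          rw [zero_pow (by omega)] at this; exact zero_ne_one this
        exact mul_ne_zero (pow_ne_zero _ this) (by simpa using hγ0)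
      · have : ∀ᶠ t in 𝓝 (0:ℂ), ∀ ζ ∈ R, g (0, ζ * t) = (ζ * t) ^ k * γ (ζ * t) := by
          rw [eventually_all_finset]
          intro ζ _
          have : Tendsto (fun t : ℂ => ζ * t) (𝓝 0) (𝓝 0) :=
            Continuous.tendsto' (by fun_prop) 0 0 (by simp)
          exact this.eventually hgγ
        filter_upwards [this] with t ht
        rw [Finset.prod_congr rfl ht, sub_zero, smul_eq_mul, pow_mul, ← hcard,
          ← Finset.prod_const, ← Finset.prod_mul_distrib]
        refine Finset.prod_congr rfl fun ζ _ => by ring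
    have h2 : analyticOrderAt (fun t : ℂ => ∏ ζ ∈ R, g (0, ζ * t)) 0 = (l * K : ℕ) := by
      rw [(Finset.analyticAt_fun_prod _ fun ζ _ => hlan (hg.rot ζ)).analyticOrderAt_eq_natCast]
      refine ⟨fun t => U (0, t) * (-1) ^ l, (hlan hU).fun_mul analyticAt_const,
        mul_ne_zero hU0 (by simp), ?_⟩
      filter_upwards [hline.eventually hHU] with t ht
      rw [ht]
      simp only [cyc, ha0, sub_zero, smul_eq_mul, zero_sub]
      rw [neg_pow, ← pow_mul, mul_comm l K]; ring
    have h3 : k * K = l * K := by rw [h1] at h2; exact_mod_cast h2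
    exact (Nat.eq_of_mul_eq_mul_right (by omega) h3).symm
  have hzan : ∀ {f : V × ℂ → ℂ}, AnalyticAt ℂ f 0 → AnalyticAt ℂ (fun z : V => f (z, 0)) 0 := by
    intro f hf
    exact AnalyticAt.fun_comp (f := fun z : V => (z, (0:ℂ))) (g := f) hf
      (analyticAt_id.prod analyticAt_const)
  have hdiv : K ∣ k := by
    have ht : Tendsto (fun z : V => (z, (0:ℂ))) (𝓝 0) (𝓝 0) :=
      Continuous.tendsto' (by fun_prop) 0 0 (by simp)
    refine hnp.dvd ha hane (hzan hg) (hzan hU) hU0 hK ?_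
    filter_upwards [ht.eventually hHU] with z hz
    simpa [cyc, hcard, hlk, zero_pow (by omega : K ≠ 0)] using hz
  have hkK : k = K := le_antisymm (by omega) (Nat.le_of_dvd (by omega) hdiv)
  have hm0 : m = 0 := by omega
  rw [hm0] at hm
  intro h
  exact (hlan hq).analyticOrderAt_ne_zero.2 h hm

end Cyclic

/-! ### The quotient is a unit, and the conclusion -/

/-- The quotient of `a(z) - cj a(w)` by a non-unit is a unit when `a` is not a proper power. -/
theorem unit_of_primitive {n : ℕ} {G Q : (Fin n → ℂ) × (Fin n → ℂ) → ℂ} {a : (Fin n → ℂ) → ℂ}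
    (hG : AnalyticAt ℂ G 0) (hQ : AnalyticAt ℂ Q 0) (hG0 : G 0 = 0) (ha : AnalyticAt ℂ a 0)
    (ha0 : a 0 = 0) (hane : ¬ ∀ᶠ z in 𝓝 0, a z = 0) (hnp : NotPower a)
    (h : ∀ᶠ p in 𝓝 0, a p.1 - cj a p.2 = G p * Q p) : Q 0 ≠ 0 := by
  have hc : AnalyticAt ℂ (cj a) 0 := AnalyticAt.cj (by simpa using ha)
  have hc0 : cj a 0 = 0 := by simp [cj, ha0]
  have hcne : ¬ ∀ᶠ w in 𝓝 0, cj a w = 0 := by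
    intro h
    have ht : Tendsto (fun w : Fin n → ℂ => star w) (𝓝 0) (𝓝 0) :=
      Continuous.tendsto' continuous_star 0 0 (by simp)
    refine hane ?_
    filter_upwards [ht.eventually h] with w hw
    simpa [cj] using hw
  obtain ⟨e, he⟩ := exists_line_ne_zero hc hcne
  simp only [zero_add] at he
  obtain ⟨K, γ, hK, hγ, hγ0, hφ⟩ := exists_monomial_param (hc.line_zero e) (by simpa using hc0) he
  have hm : AnalyticAt ℂ (fun p : (Fin n → ℂ) × ℂ => (p.1, γ p.2 • e)) 0 :=
    analyticAt_fst.prod ((AnalyticAt.fun_comp (f := fun p : (Fin n → ℂ) × ℂ => p.2) (g := γ) hγ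
      analyticAt_snd).smul analyticAt_const)
  have hm0 : ((0 : (Fin n → ℂ) × ℂ).1, γ (0 : (Fin n → ℂ) × ℂ).2 • e) = 0 :=
    Prod.ext rfl (by simp [hγ0])
  have hmt : Tendsto (fun p : (Fin n → ℂ) × ℂ => (p.1, γ p.2 • e)) (𝓝 0) (𝓝 0) := by
    have := hm.continuousAt.tendsto
    rwa [hm0] at this
  have hst : Tendsto (fun p : (Fin n → ℂ) × ℂ => p.2) (𝓝 0) (𝓝 0) :=
    Continuous.tendsto' (by fun_prop) 0 0 (by simp)
  have key := cyc_irreducible ha ha0 hane hnp hK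
    (g := fun p => G (p.1, γ p.2 • e)) (q := fun p => Q (p.1, γ p.2 • e))
    (AnalyticAt.fun_comp (g := G) (by rw [hm0]; exact hG) hm)
    (AnalyticAt.fun_comp (g := Q) (by rw [hm0]; exact hQ) hm)
    (by
      filter_upwards [hmt.eventually h, hst.eventually hφ] with p h1 h2
      rw [← h1, cyc, ← h2])
    (by rw [← hG0]; exact congrArg G hm0)
  intro hQ0
  exact key (by rw [← hQ0]; exact congrArg Q hm0)

/-- **Theorem (Cerveau–Lins Neto, part (b)).** If `M` is an irreducible Levi-flat germ
whose singular set has algebraic dimension at most `2n − 4` (complex dimension, i.e.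
Hausdorff dimension at most `2(2n−4)`), `Sing(L_ℂ)` has complex codimension at least `2`
in the `(2n−1)`-dimensional manifold `M*_ℂ` (Hausdorff dimension at most `2(2n−3)`),
and `L_ℂ` has a non-constant holomorphic first integral, then `M = {Re(f) = 0}` for a
non-constant holomorphic germ `f`. -/
theorem stmt_13 (n : ℕ) (hn : 2 ≤ n) (F : (Fin n → ℂ) → ℝ)
    (hF : AnalyticAt ℝ F 0) (hF0 : F 0 = 0)
    (hirr : IrreducibleRGerm F)
    (hLF : LeviFlatGerm F)
    (FC : ((Fin n → ℂ) × (Fin n → ℂ)) → ℂ) (hFC : IsComplexification F FC)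
    -- the algebraic dimension of `Sing(M)` is at most `2n − 4`
    (hdim : ∃ U ∈ 𝓝 (0 : (Fin n → ℂ) × (Fin n → ℂ)),
      dimH (singMC FC ∩ U) ≤ ((4 * n - 8 : ℕ) : ℝ≥0∞))
    -- `Sing(L_ℂ)` has complex codimension at least `2` in `M*_ℂ`
    (hcodim : ∃ U ∈ 𝓝 (0 : (Fin n → ℂ) × (Fin n → ℂ)),
      dimH (singLC FC ∩ U) ≤ ((4 * n - 6 : ℕ) : ℝ≥0∞))
    -- `L_ℂ` has a non-constant holomorphic first integral
    (hfi : ∃ h : ((Fin n → ℂ) × (Fin n → ℂ)) → ℂ, AnalyticAt ℂ h 0 ∧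
      (¬ ∃ c : ℂ, ∀ᶠ p in 𝓝 (0 : (Fin n → ℂ) × (Fin n → ℂ)), FC p = 0 → h p = c) ∧
      (∀ᶠ p in 𝓝 (0 : (Fin n → ℂ) × (Fin n → ℂ)), FC p = 0 → fderiv ℂ FC p ≠ 0 →
        ∀ u v : (Fin n → ℂ) × (Fin n → ℂ),
          fderiv ℂ FC p u = 0 → fderiv ℂ FC p v = 0 →
          fderiv ℂ h p u * fderiv ℂ FC p (v.1, 0) -
            fderiv ℂ h p v * fderiv ℂ FC p (u.1, 0) = 0)) :
    ∃ f : (Fin n → ℂ) → ℂ, AnalyticAt ℂ f 0 ∧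
      -- `f` is non-constant
      (¬ ∀ᶠ z in 𝓝 (0 : Fin n → ℂ), f z = f 0) ∧
      -- `M = {Re(f) = 0}` as germs of sets at `0`
      (∀ᶠ z in 𝓝 (0 : Fin n → ℂ), (F z = 0 ↔ (f z).re = 0)) := by
  obtain ⟨hGan, hGF⟩ := hFC
  have hG0 : FC 0 = 0 := by
    have := hGF.self_of_nhds
    rw [star_zero, hF0, Complex.ofReal_zero] at this
    exact this
  have htd : Tendsto (fun z : Fin n → ℂ => (z, star z)) (𝓝 0) (𝓝 0) :=
    Continuous.tendsto' (continuous_id.prodMk continuous_star) 0 0 (by simp)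
  -- irreducible germs are nonzero, since `0 = 0 * 0` is a factorization into non-units
  have hGne : ¬ ∀ᶠ p in 𝓝 0, FC p = 0 := by
    intro h0
    have := hirr (fun _ => 0) (fun _ => 0) analyticAt_const analyticAt_const (by
      filter_upwards [hGF, htd.eventually h0] with z h1 h2
      rw [h2] at h1
      rw [mul_zero]; exact_mod_cast h1.symm)
    simp at this
  obtain ⟨h, hh, hnc, hfi⟩ := hfi
  obtain ⟨U, hU, hbad⟩ := badSet_dim hn hdim hcodim
  obtain ⟨hmw, hmz⟩ := base_minors hn hGan hGne hh hU hbad hfi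
  obtain ⟨e₁, e₂, he₁, he₂, A, hA, hA0, hAne, hAd⟩ := exists_real_integral hn hGan hG0 hGne
    (complexification_symm ⟨hGan, hGF⟩) hU hbad hh hmw hmz hnc
  obtain ⟨a, ha, ha0, hane, hnp, Q, hQ, hQd⟩ :=
    exists_primitive_integral hn hGan hG0 hU hbad he₁ he₂ hA hA0 hAne hAd
  have hQ0 : Q 0 ≠ 0 := unit_of_primitive hGan hQ hG0 ha ha0 hane hnp hQd
  refine ⟨fun z => Complex.I * a z, analyticAt_const.fun_mul ha, ?_, ?_⟩
  · intro hc
    refine hane ?_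
    filter_upwards [hc] with z hz
    simpa [ha0] using hz
  -- on the diagonal `w = star z` the relation reads `2 i Im a = F * Q` with `Q ≠ 0`
  · filter_upwards [hGF, htd.eventually hQd,
      htd.eventually (hQ.continuousAt.eventually_ne hQ0)] with z h1 h2 h3
    simp only [cj, star_star, h1] at h2
    have h4 : a z - star (a z) = (2 * (a z).im : ℝ) * Complex.I := Complex.sub_conj (a z)
    rw [h4] at h2
    have h5 : (Complex.I * a z).re = -(a z).im := by simp
    rw [h5, neg_eq_zero]
    constructor
    · intro hz
      rw [hz] at h2
      simpa using h2
    · intro hz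
      rw [hz] at h2
      simpa [h3] using h2
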